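/- arXiv:2406.15184 — 2 statements merged into one kernel-verified Lean document; each statement's English description precedes it below -/
import Mathlib

section
/- Rosenberg's Completeness Theorem. Let A be a finite set with |A| ≥ 3. The maximal clones on A are exactly the clones Pol(ρ) where ρ is one of the following relations on A: (1) a partial order on A with a least and a greatest element; (2) the graph {(a, π(a)) : a ∈ A} of a fixed-point-free permutation π of A all of whose cycles have the same prime length; (3) the 4-ary affine relation α₊ = {(a₁,a₂,a₃,a₄) ∈ A⁴ : a₁ − a₂ + a₃ = a₄} for some elementary abelian p-group (A;+); (4) a nontrivial equivalence relation on A (one different from the equality relation and from A × A); (5) a central relation, i.e. an m-ary relation ρ with 1 ≤ m < |A| that is totally reflexive, totally symmetric, satisfies ρ ≠ Aᵐ, and has an element c ∈ A with {c} × A^{m−1} ⊆ ρ; (6) an m-regular relation λ_T, where 3 ≤ m ≤ |A|, T = {θ₁,…,θ_r} (r ≥ 1) is a set of equivalence relations on A each having exactly m blocks and such that any choice of one block from each θᵢ has nonempty intersection, and λ_T consists of all tuples (a₁,…,a_m) ∈ Aᵐ such that for every i there are two entries among a₁,…,a_m lying in the same block of θᵢ. Consequently, a set F of operations on A is complete if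 and only if F ⊄ Pol(ρ) for every relation ρ of the types (1)–(6). -/
universe u

/-- The type of finitary operations (of positive arity `n + 1`) on `A`. -/
abbrev Ops (A : Type u) : Type u := Σ n : ℕ, (Fin (n + 1) → A) → A

/-- A set of finitary operations on `A` is a clone if it contains all projection
operations and is closed under composition. -/
def IsClone {A : Type u} (C : Set (Ops A)) : Prop :=
  (∀ (n : ℕ) (i : Fin (n + 1)), (⟨n, fun x => x i⟩ : Ops A) ∈ C) ∧
  ∀ (n m : ℕ) (f : (Fin (n + 1) → A) → A) (g : Fin (n + 1) → (Fin (m + 1) → A) → A),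
    (⟨n, f⟩ : Ops A) ∈ C → (∀ i, (⟨m, g i⟩ : Ops A) ∈ C) →
    (⟨m, fun x => f fun i => g i x⟩ : Ops A) ∈ C

/-- The clone generated by a set `F` of operations: the least clone containing `F`. -/
def cloneGen {A : Type u} (F : Set (Ops A)) : Set (Ops A) :=
  ⋂₀ {C : Set (Ops A) | IsClone C ∧ F ⊆ C}

/-- The clone of all projection operations on `A`. -/
def projClone (A : Type u) : Set (Ops A) :=
  {f : Ops A | ∃ i : Fin (f.1 + 1), f.2 = fun x => x i}

/-- A clone `M` is maximal if it is a proper subclone of the clone of all operations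
and the clone of all operations is the only clone properly containing it. -/
def IsMaximalClone {A : Type u} (M : Set (Ops A)) : Prop :=
  IsClone M ∧ M ≠ Set.univ ∧
    ∀ D : Set (Ops A), IsClone D → M ⊆ D → D = M ∨ D = Set.univ

/-- A clone `C` is minimal if the clone of projections is its unique proper subclone. -/
def IsMinimalClone {A : Type u} (C : Set (Ops A)) : Prop :=
  IsClone C ∧ C ≠ projClone A ∧
    ∀ D : Set (Ops A), IsClone D → D ⊆ C → D = projClone A ∨ D = C

/-- An `n`-ary operation `f` preserves a `k`-ary relation `ρ` if applying `f`
coordinatewise to tuples from `ρ` always yields a tuple in `ρ`. -/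
def Preserves {A : Type u} {n k : ℕ} (f : (Fin n → A) → A) (ρ : Set (Fin k → A)) : Prop :=
  ∀ t : Fin n → Fin k → A, (∀ i, t i ∈ ρ) → (fun j => f fun i => t i j) ∈ ρ

/-- `Pol ρ` is the clone of all operations preserving the relation `ρ`. -/
def Pol {A : Type u} {k : ℕ} (ρ : Set (Fin k → A)) : Set (Ops A) :=
  {f : Ops A | Preserves f.2 ρ}

/-- A `k`-ary relation is totally reflexive if it contains every tuple whose entries
are not pairwise distinct. -/
def TotallyReflexiveRel {A : Type u} {k : ℕ} (ρ : Set (Fin k → A)) : Prop :=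
  ∀ x : Fin k → A, (∃ i j, i ≠ j ∧ x i = x j) → x ∈ ρ

/-- A `k`-ary relation is totally symmetric if it is invariant under all permutations
of its coordinates. -/
def TotallySymmetricRel {A : Type u} {k : ℕ} (ρ : Set (Fin k → A)) : Prop :=
  ∀ σ : Equiv.Perm (Fin k), ∀ x ∈ ρ, (x ∘ σ) ∈ ρ

/-- The six kinds of relations in Rosenberg's Completeness Theorem.  A relation on `A`
of arity `ρ.1 + 1` is a Rosenberg relation if it is of one of the following types:
(1) a partial order with a least and a greatest element;
(2) the graph of a fixed-point-free permutation all of whose cycles have the same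
    prime length `p` (equivalently, `π` is fixed-point-free and `π ^ p = 1`);
(3) the 4-ary affine relation of an elementary abelian `p`-group structure on `A`;
(4) a nontrivial equivalence relation;
(5) a central relation: totally reflexive, totally symmetric, proper, of arity `< |A|`,
    with a central element `c` such that every tuple starting with `c` belongs to it;
(6) an `m`-regular relation `λ_T` (`3 ≤ m ≤ |A|`) determined by equivalence relations
    `θ₁, …, θ_r`, each with exactly `m` blocks, such that any choice of one block from
    each `θᵢ` has nonempty intersection. -/
def IsRosenbergRel {A : Type u} [Fintype A] (ρ : Σ k : ℕ, Set (Fin (k + 1) → A)) : Prop :=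
  -- (1) bounded partial order
  (∃ le : A → A → Prop, IsPartialOrder A le ∧ (∃ b, ∀ a, le b a) ∧ (∃ t, ∀ a, le a t) ∧
      ρ = ⟨1, {x : Fin 2 → A | le (x 0) (x 1)}⟩) ∨
  -- (2) graph of a fixed-point-free permutation with all cycles of the same prime length
  (∃ π : Equiv.Perm A, (∀ a, π a ≠ a) ∧ (∃ p : ℕ, p.Prime ∧ ∀ a, (π ^ p) a = a) ∧
      ρ = ⟨1, {x : Fin 2 → A | x 1 = π (x 0)}⟩) ∨
  -- (3) the affine relation of an elementary abelian p-group structure on A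
  (∃ p : ℕ, p.Prime ∧ ∃ _ : AddCommGroup A, (∀ a : A, p • a = 0) ∧
      ρ = ⟨3, {x : Fin 4 → A | x 0 - x 1 + x 2 = x 3}⟩) ∨
  -- (4) nontrivial equivalence relation
  (∃ r : A → A → Prop, Equivalence r ∧ r ≠ Eq ∧ (∃ a b, ¬ r a b) ∧
      ρ = ⟨1, {x : Fin 2 → A | r (x 0) (x 1)}⟩) ∨
  -- (5) central relation
  (ρ.1 + 1 < Fintype.card A ∧ TotallyReflexiveRel ρ.2 ∧ TotallySymmetricRel ρ.2 ∧
      ρ.2 ≠ Set.univ ∧ ∃ c : A, ∀ x : Fin (ρ.1 + 1) → A, x 0 = c → x ∈ ρ.2) ∨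
  -- (6) m-regular relation
  (∃ r : ℕ, ∃ θ : Fin (r + 1) → A → A → Prop,
      3 ≤ ρ.1 + 1 ∧ ρ.1 + 1 ≤ Fintype.card A ∧
      (∀ i, Equivalence (θ i)) ∧
      (∀ i, Set.ncard {B : Set A | ∃ a, B = {b | θ i a b}} = ρ.1 + 1) ∧
      (∀ a : Fin (r + 1) → A, (⋂ i, {b | θ i (a i) b}).Nonempty) ∧
      ρ.2 = {x : Fin (ρ.1 + 1) → A | ∀ i, ∃ j k : Fin (ρ.1 + 1), j ≠ k ∧ θ i (x j) (x k)})

namespace Rosenberg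

section Basics

variable {A : Type u} {M : Set (Ops A)} {ι κ : Type*}

/-- An operation with arguments indexed by an arbitrary type belongs to `M` if every
operation obtained by renaming its variables does. -/
def Mem (M : Set (Ops A)) (f : (ι → A) → A) : Prop :=
  ∀ (m : ℕ) (e : ι → Fin (m + 1)), (⟨m, fun x => f fun i => x (e i)⟩ : Ops A) ∈ M

theorem mem_iff (hM : IsClone M) {n : ℕ} {f : (Fin (n + 1) → A) → A} :
    Mem M f ↔ (⟨n, f⟩ : Ops A) ∈ M :=
  ⟨fun h => h n id, fun h m e => hM.2 n m f (fun i x => x (e i)) h fun i => hM.1 m (e i)⟩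

theorem Mem.proj (hM : IsClone M) (i : ι) : Mem M fun x : ι → A => x i :=
  fun m e => hM.1 m (e i)

theorem Mem.comp (hM : IsClone M) [Finite ι] [Nonempty ι] {f : (ι → A) → A} (hf : Mem M f)
    {g : ι → (κ → A) → A} (hg : ∀ i, Mem M (g i)) : Mem M fun x => f fun i => g i x := by
  intro m e
  obtain ⟨n, ⟨eq⟩⟩ := Finite.exists_equiv_fin ι
  obtain _ | n := n
  · exact (eq (Classical.arbitrary ι)).elim0
  have := hM.2 n m _ (fun j x => g (eq.symm j) fun i => x (e i)) (hf n eq)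
    fun j => hg (eq.symm j) m e
  simpa using this

/-- The unary operation `f` belongs to `M`. -/
def Mem₁ (M : Set (Ops A)) (f : A → A) : Prop := Mem M fun x : Unit → A => f (x ())

/-- The binary operation `f` belongs to `M`. -/
def Mem₂ (M : Set (Ops A)) (f : A → A → A) : Prop :=
  Mem M fun x : Fin 2 → A => f (x 0) (x 1)

/-- The ternary operation `f` belongs to `M`. -/
def Mem₃ (M : Set (Ops A)) (f : A → A → A → A) : Prop :=
  Mem M fun x : Fin 3 → A => f (x 0) (x 1) (x 2)

theorem Mem₁.comp (hM : IsClone M) {f : A → A} (hf : Mem₁ M f) {g : (κ → A) → A}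
    (hg : Mem M g) : Mem M fun x => f (g x) :=
  Mem.comp hM hf (g := fun _ => g) fun _ => hg

theorem Mem₂.comp (hM : IsClone M) {f : A → A → A} (hf : Mem₂ M f) {g h : (κ → A) → A}
    (hg : Mem M g) (hh : Mem M h) : Mem M fun x => f (g x) (h x) := by
  have := Mem.comp hM hf (g := ![g, h]) (by intro i; fin_cases i <;> assumption)
  exact this

theorem Mem₃.comp (hM : IsClone M) {f : A → A → A → A} (hf : Mem₃ M f) {g h k : (κ → A) → A}
    (hg : Mem M g) (hh : Mem M h) (hk : Mem M k) : Mem M fun x => f (g x) (h x) (k x) := by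
  have := Mem.comp hM hf (g := ![g, h, k]) (by intro i; fin_cases i <;> assumption)
  exact this

theorem Mem₁.id (hM : IsClone M) : Mem₁ M id := Mem.proj hM ()

theorem Mem₁.comp₁ (hM : IsClone M) {f g : A → A} (hf : Mem₁ M f) (hg : Mem₁ M g) :
    Mem₁ M (f ∘ g) :=
  Mem₁.comp hM hf hg

theorem Mem₁.iterate (hM : IsClone M) {f : A → A} (hf : Mem₁ M f) (n : ℕ) :
    Mem₁ M f^[n] := by
  induction n with
  | zero => exact Mem₁.id hM
  | succ n ih => exact Mem₁.comp₁ hM ih hf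

/-- The relation `ρ`, with coordinates in an arbitrary type, is preserved by all members
of `M`. -/
def Inv (M : Set (Ops A)) (ρ : Set (κ → A)) : Prop :=
  ∀ f ∈ M, ∀ t : Fin (f.1 + 1) → κ → A, (∀ i, t i ∈ ρ) → (fun j => f.2 fun i => t i j) ∈ ρ

theorem Inv.mono {N : Set (Ops A)} {ρ : Set (κ → A)} (h : Inv N ρ) (hMN : M ⊆ N) : Inv M ρ :=
  fun f hf => h f (hMN hf)

theorem Inv.apply {ρ : Set (κ → A)} (hρ : Inv M ρ) [Finite ι] [Nonempty ι] {f : (ι → A) → A}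
    (hf : Mem M f) {t : ι → κ → A} (ht : ∀ i, t i ∈ ρ) : (fun j => f fun i => t i j) ∈ ρ := by
  obtain ⟨n, ⟨eq⟩⟩ := Finite.exists_equiv_fin ι
  obtain _ | n := n
  · exact (eq (Classical.arbitrary ι)).elim0
  simpa using hρ _ (hf n eq) (fun j => t (eq.symm j)) fun j => ht _

/-- The binary relation `r` is preserved by all members of `M`. -/
def Inv₂ (M : Set (Ops A)) (r : A → A → Prop) : Prop :=
  ∀ f ∈ M, ∀ x y : Fin (f.1 + 1) → A, (∀ i, r (x i) (y i)) → r (f.2 x) (f.2 y)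

theorem Inv₂.subset_pol {r : A → A → Prop} (h : Inv₂ M r) :
    M ⊆ Pol {x : Fin 2 → A | r (x 0) (x 1)} :=
  fun f hf t ht => h f hf (fun i => t i 0) (fun i => t i 1) ht

theorem Inv₂.flip {r : A → A → Prop} (h : Inv₂ M r) : Inv₂ M fun x y => r y x :=
  fun f hf x y hxy => h f hf y x hxy

theorem Inv₂.and {r s : A → A → Prop} (hr : Inv₂ M r) (hs : Inv₂ M s) :
    Inv₂ M fun x y => r x y ∧ s x y :=
  fun f hf x y h => ⟨hr f hf x y fun i => (h i).1, hs f hf x y fun i => (h i).2⟩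

theorem Inv₂.comp {r s : A → A → Prop} (hr : Inv₂ M r) (hs : Inv₂ M s) :
    Inv₂ M fun x y => ∃ u, r x u ∧ s u y := by
  intro f hf x y h
  choose u hu using h
  exact ⟨f.2 u, hr f hf x u fun i => (hu i).1, hs f hf u y fun i => (hu i).2⟩

/-- The values of members of `M` on a family of tuples form an invariant relation. -/
theorem inv_generated (hM : IsClone M) (t : ι → κ → A) :
    Inv M {y : κ → A | ∃ f : (ι → A) → A, Mem M f ∧ y = fun j => f fun i => t i j} := by
  intro g hg y hy
  choose f hf hfy using hy
  refine ⟨fun x => g.2 fun i => f i x, Mem.comp hM ((mem_iff hM).2 hg) hf, ?_⟩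
  funext j
  simp [hfy]

theorem isClone_pol {k : ℕ} (ρ : Set (Fin k → A)) : IsClone (Pol ρ) :=
  ⟨fun _ i _ ht => ht i, fun _ _ _ _ hf hg t ht => hf _ fun i => hg i t ht⟩

/-- The operation `f`, with arguments indexed by an arbitrary type, preserves `ρ`. -/
def Pres {k : ℕ} (ρ : Set (Fin k → A)) (f : (ι → A) → A) : Prop :=
  ∀ t : ι → Fin k → A, (∀ i, t i ∈ ρ) → (fun j => f fun i => t i j) ∈ ρ

theorem mem_pol_of_pres {k : ℕ} {ρ : Set (Fin k → A)} {f : (ι → A) → A} (hf : Pres ρ f) :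
    Mem (Pol ρ) f :=
  fun _ e t ht => hf (fun i => t (e i)) fun i => ht (e i)

theorem pres_of_mem_pol {k : ℕ} {ρ : Set (Fin k → A)} [Finite ι] [Nonempty ι]
    {f : (ι → A) → A} (hf : Mem (Pol ρ) f) : Pres ρ f :=
  fun _ ht => Inv.apply (M := Pol ρ) (fun _ hg => hg) hf ht

theorem isClone_cloneGen (F : Set (Ops A)) : IsClone (cloneGen F) :=
  ⟨fun n i _ hD => hD.1.1 n i,
    fun n m f g hf hg D hD => hD.1.2 n m f g (hf D hD) fun i => hg i D hD⟩

theorem subset_cloneGen (F : Set (Ops A)) : F ⊆ cloneGen F :=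
  fun _ hf _ hD => hD.2 hf

theorem cloneGen_subset {F C : Set (Ops A)} (hC : IsClone C) (h : F ⊆ C) : cloneGen F ⊆ C :=
  fun _ hf => hf C ⟨hC, h⟩

end Basics

section Reflexive

variable {A : Type u} {M : Set (Ops A)}

theorem injective_of_notMem {k : ℕ} {ρ : Set (Fin k → A)} (hρ : TotallyReflexiveRel ρ)
    {x : Fin k → A} (hx : x ∉ ρ) : Function.Injective x := by
  intro i j hij
  by_contra hne
  exact hx (hρ x ⟨i, j, hne, hij⟩)

theorem mem_of_not_injective {k : ℕ} {ρ : Set (Fin k → A)} (hρ : TotallyReflexiveRel ρ)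
    {x : Fin k → A} (hx : ¬ Function.Injective x) : x ∈ ρ := by
  by_contra h
  exact hx (injective_of_notMem hρ h)

/-- Every totally reflexive and totally symmetric invariant relation of `M` of arity
greater than `n` is full. -/
def ReflexiveFull (M : Set (Ops A)) (n : ℕ) : Prop :=
  ∀ k, n < k → ∀ σ : Set (Fin k → A), Inv M σ → TotallyReflexiveRel σ →
    TotallySymmetricRel σ → σ = Set.univ

theorem ReflexiveFull.eq_univ {n k : ℕ} (h : ReflexiveFull M n) (hk : n < k)
    {σ : Set (Fin k → A)} (hσ : Inv M σ) (hr : TotallyReflexiveRel σ) : σ = Set.univ := by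
  have := h k hk {x | ∀ τ : Equiv.Perm (Fin k), x ∘ τ ∈ σ}
    (fun f hf t ht τ => hσ f hf (fun i => t i ∘ τ) fun i => ht i τ)
    (fun x ⟨i, j, hij, hx⟩ τ => hr _ ⟨τ.symm i, τ.symm j, by simpa using hij, by simpa using hx⟩)
    (fun τ x hx τ' => hx (τ * τ'))
  rw [Set.eq_univ_iff_forall] at this ⊢
  exact fun x => this x 1

/-- If the property `Q` of the range of a tuple is an invariant one and holds for all tuples
of length at most `n`, then it holds for the whole of `A`. -/
theorem ReflexiveFull.range_induction [Finite A] {n : ℕ} (h : ReflexiveFull M n)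
    (Q : Set A → Prop) (hinv : ∀ k, Inv M {x : Fin k → A | Q (Set.range x)})
    (hn : ∀ k ≤ n, ∀ x : Fin k → A, Q (Set.range x)) : Q Set.univ := by
  have key : ∀ k, ∀ x : Fin k → A, Q (Set.range x) := by
    intro k
    induction k with
    | zero => exact hn 0 (Nat.zero_le n)
    | succ k ih =>
      by_cases hk : k + 1 ≤ n
      · exact hn _ hk
      have := h.eq_univ (not_le.1 hk) (hinv (k + 1)) (by
        rintro x ⟨i, j, hij, hx⟩
        have hr : Set.range x = Set.range fun l => x (j.succAbove l) := by
          ext a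
          constructor
          · rintro ⟨l, rfl⟩
            by_cases hl : l = j
            · obtain ⟨l', hl'⟩ := Fin.exists_succAbove_eq hij
              exact ⟨l', by simp [hl', hl, hx]⟩
            · obtain ⟨l', hl'⟩ := Fin.exists_succAbove_eq hl
              exact ⟨l', by simp [hl']⟩
          · rintro ⟨l, rfl⟩
            exact ⟨_, rfl⟩
        rw [Set.mem_ofPred_eq, hr]
        exact ih _)
      exact fun x => (this ▸ Set.mem_univ x : x ∈ {x : Fin (k + 1) → A | Q (Set.range x)})
  obtain ⟨k, ⟨e⟩⟩ := Finite.exists_equiv_fin A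
  simpa using key k e.symm

/-- An invariant set of functions is full as soon as it contains all functions that factor
through a set of size `n`. -/
theorem ReflexiveFull.mem_of_factor [Finite A] [Nonempty A] {n : ℕ} (h : ReflexiveFull M n)
    {X : Type*} {Y : Set (X → A)} (hY : Inv M Y)
    (hn : ∀ (c : Fin n → A) (χ : X → Fin n), c ∘ χ ∈ Y) (F : X → A) : F ∈ Y := by
  have key : ∀ k, ∀ (c : Fin k → A) (χ : X → Fin k), c ∘ χ ∈ Y := by
    intro k
    by_cases hk : k ≤ n
    · intro c χ
      have := hn (fun i => if hi : i.1 < k then c ⟨i, hi⟩ else Classical.arbitrary A)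
        fun x => ⟨χ x, (χ x).2.trans_le hk⟩
      convert this using 1
      funext x
      simp
    induction k with
    | zero => exact absurd (Nat.zero_le n) hk
    | succ k ih =>
      have hk' : ∀ (c : Fin k → A) (χ : X → Fin k), c ∘ χ ∈ Y := by
        by_cases hkn : k ≤ n
        · obtain rfl : k = n := by omega
          exact hn
        · exact ih hkn
      have := h.eq_univ (σ := {c : Fin (k + 1) → A | ∀ χ : X → Fin (k + 1), c ∘ χ ∈ Y})
        (not_le.1 hk) (fun f hf t ht χ => hY f hf (fun i => t i ∘ χ) fun i => ht i χ) (by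
        rintro c ⟨i, j, hij, hx⟩ χ
        have : ∀ l, ∃ l', c (j.succAbove l') = c l := by
          intro l
          by_cases hl : l = j
          · obtain ⟨l', hl'⟩ := Fin.exists_succAbove_eq hij
            exact ⟨l', by simp [hl', hl, hx]⟩
          · obtain ⟨l', hl'⟩ := Fin.exists_succAbove_eq hl
            exact ⟨l', by simp [hl']⟩
        choose r hr using this
        convert hk' (fun l => c (j.succAbove l)) (r ∘ χ) using 1
        funext x
        simp [hr])
      intro c
      exact (this ▸ Set.mem_univ c : c ∈ {c : Fin (k + 1) → A | ∀ χ : X → Fin (k + 1), c ∘ χ ∈ Y})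
  obtain ⟨k, ⟨e⟩⟩ := Finite.exists_equiv_fin A
  convert key k e.symm (e ∘ F) using 1
  funext x
  simp

end Reflexive

section Binary

variable {A : Type u} [Fintype A] {M : Set (Ops A)}

/-- The set `M` of operations is contained in no clone `Pol ρ` with `ρ` a Rosenberg
relation. -/
def AvoidsRosenberg (M : Set (Ops A)) : Prop :=
  ∀ ρ : Σ k : ℕ, Set (Fin (k + 1) → A), IsRosenbergRel ρ → ¬ M ⊆ Pol ρ.2

theorem AvoidsRosenberg.subuniverse (h : AvoidsRosenberg M) (hA : 3 ≤ Fintype.card A)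
    {S : Set A} (hS : ∀ f ∈ M, ∀ x : Fin (f.1 + 1) → A, (∀ i, x i ∈ S) → f.2 x ∈ S)
    (hne : S.Nonempty) (a : A) : a ∈ S := by
  by_contra ha
  obtain ⟨c, hc⟩ := hne
  refine h ⟨0, {x | x 0 ∈ S}⟩ (Or.inr <| Or.inr <| Or.inr <| Or.inr <| Or.inl
    ⟨by simp; omega, ?_, ?_, ?_, c, fun x hx => ?_⟩) fun f hf t ht => hS f hf _ ht
  · rintro x ⟨i, j, hij, -⟩
    exact absurd (Subsingleton.elim (α := Fin 1) i j) hij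
  · intro σ x hx
    have : σ 0 = 0 := Subsingleton.elim (α := Fin 1) _ _
    simpa [this] using hx
  · intro hu
    exact ha ((Set.ext_iff.1 hu fun _ => a).2 trivial)
  · simpa [hx] using hc

theorem AvoidsRosenberg.equivalence (h : AvoidsRosenberg M) {r : A → A → Prop}
    (hr : Inv₂ M r) (heq : Equivalence r) : r = Eq ∨ ∀ x y, r x y := by
  by_contra! hcon
  exact h ⟨1, {x | r (x 0) (x 1)}⟩ (Or.inr <| Or.inr <| Or.inr <| Or.inl
    ⟨r, heq, hcon.1, hcon.2, rfl⟩) hr.subset_pol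

theorem AvoidsRosenberg.central (h : AvoidsRosenberg M) (hA : 3 ≤ Fintype.card A)
    {r : A → A → Prop} (hr : Inv₂ M r) (hrefl : ∀ x, r x x) (hsymm : ∀ x y, r x y → r y x)
    {c : A} (hc : ∀ x, r c x) (x y : A) : r x y := by
  by_contra hxy
  refine h ⟨1, {x | r (x 0) (x 1)}⟩ (Or.inr <| Or.inr <| Or.inr <| Or.inr <| Or.inl
    ⟨by simp; omega, ?_, ?_, ?_, c, fun x hx => ?_⟩) hr.subset_pol
  · rintro x ⟨i, j, hij, hx⟩
    have : x 0 = x 1 := by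
      fin_cases i <;> fin_cases j <;> simp_all
    simp [this, hrefl]
  · intro σ x hx
    have hσ : σ 0 ≠ σ 1 := by simp
    simp only [Set.mem_ofPred_eq, Function.comp_apply] at hx ⊢
    rcases Fin.exists_fin_two.1 ⟨σ 0, rfl⟩ with h0 | h0 <;>
      rcases Fin.exists_fin_two.1 ⟨σ 1, rfl⟩ with h1 | h1 <;>
      simp_all
  · intro hu
    exact hxy ((Set.ext_iff.1 hu ![x, y]).2 trivial)
  · simp only [Set.mem_ofPred_eq, hx, hc]

theorem ReflexiveFull.exists_common [Nonempty A] (h : ReflexiveFull M 2) {r : A → A → Prop}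
    (hr : Inv₂ M r) (h2 : ∀ x y, ∃ u, r u x ∧ r u y) : ∃ u, ∀ x, r u x := by
  have := h.range_induction (fun S => ∃ u, ∀ x ∈ S, r u x) (fun k f hf t ht => by
    choose u hu using ht
    refine ⟨f.2 u, ?_⟩
    rintro _ ⟨j, rfl⟩
    exact hr f hf _ _ fun i => hu i _ ⟨j, rfl⟩) (fun k hk x => by
    interval_cases k
    · exact ⟨Classical.arbitrary A, by simp⟩
    · obtain ⟨u, hu, -⟩ := h2 (x 0) (x 0)
      exact ⟨u, by simp [hu]⟩
    · obtain ⟨u, hu, hu'⟩ := h2 (x 0) (x 1)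
      exact ⟨u, by
        rintro _ ⟨i, rfl⟩
        fin_cases i
        · exact hu
        · exact hu'⟩)
  simpa using this

theorem AvoidsRosenberg.symmetric (h : AvoidsRosenberg M) (hA : 3 ≤ Fintype.card A)
    (hT : ReflexiveFull M 2) {r : A → A → Prop} (hr : Inv₂ M r) (hrefl : ∀ x, r x x)
    (hsymm : ∀ x y, r x y → r y x) : (∀ x y, r x y → x = y) ∨ ∀ x y, r x y := by
  have : Nonempty A := Fintype.card_pos_iff.1 (by omega)
  by_contra! hcon
  obtain ⟨⟨a, b, hab, hne⟩, hnf⟩ := hcon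
  obtain ⟨s, hrs, ⟨hs, hsr, hss, hsn⟩, hmax⟩ :=
    (Set.toFinite {s : A → A → Prop | Inv₂ M s ∧ (∀ x, s x x) ∧ (∀ x y, s x y → s y x) ∧
      ∃ x y, ¬ s x y}).exists_le_maximal (a := r) ⟨hr, hrefl, hsymm, hnf⟩
  by_cases hfull : ∀ x y, ∃ u, s x u ∧ s u y
  · obtain ⟨u, hu⟩ := hT.exists_common hs fun x y => by
      obtain ⟨u, hu, hu'⟩ := hfull x y
      exact ⟨u, hss _ _ hu, hu'⟩
    obtain ⟨x, y, hxy⟩ := hsn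
    exact hxy (h.central hA hs hsr hss hu x y)
  · push Not at hfull
    have hle := hmax (y := fun x y => ∃ u, s x u ∧ s u y) ⟨hs.comp hs,
      fun x => ⟨x, hsr x, hsr x⟩,
      fun x y ⟨u, hu, hu'⟩ => ⟨u, hss _ _ hu', hss _ _ hu⟩, by simpa using hfull⟩
      (fun x y hxy => ⟨x, hsr x, hxy⟩)
    rcases h.equivalence hs ⟨hsr, fun {x y} hxy => hss x y hxy,
      fun {x y z} hxy hyz => hle x z ⟨y, hxy, hyz⟩⟩ with h1 | h1
    · exact hne (h1 ▸ hrs a b hab)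
    · obtain ⟨x, y, hxy⟩ := hsn
      exact hxy (h1 x y)

theorem AvoidsRosenberg.reflexive (h : AvoidsRosenberg M) (hA : 3 ≤ Fintype.card A)
    (hT : ReflexiveFull M 2) {r : A → A → Prop} (hr : Inv₂ M r) (hrefl : ∀ x, r x x) :
    (∀ x y, r x y → x = y) ∨ ∀ x y, r x y := by
  have : Nonempty A := Fintype.card_pos_iff.1 (by omega)
  by_contra! hcon
  obtain ⟨⟨a, b, hab, hne⟩, hnf⟩ := hcon
  obtain ⟨s, hrs, ⟨hs, hsr, hsn⟩, hmax⟩ :=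
    (Set.toFinite {s : A → A → Prop | Inv₂ M s ∧ (∀ x, s x x) ∧
      ∃ x y, ¬ s x y}).exists_le_maximal (a := r) ⟨hr, hrefl, hnf⟩
  have hsab := hrs a b hab
  have hanti : ∀ x y, s x y → s y x → x = y := by
    rcases h.symmetric hA hT (hs.and hs.flip) (fun x => ⟨hsr x, hsr x⟩)
      (fun x y hxy => hxy.symm) with h1 | h1
    · exact fun x y hxy hyx => h1 x y ⟨hxy, hyx⟩
    · obtain ⟨x, y, hxy⟩ := hsn
      exact absurd (h1 x y).1 hxy
  obtain ⟨u, hu⟩ : ∃ u, ∀ x, s u x := by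
    rcases h.symmetric hA hT (hs.flip.comp hs) (fun x => ⟨x, hsr x, hsr x⟩)
      (fun x y ⟨u, hu, hu'⟩ => ⟨u, hu', hu⟩) with h1 | h1
    · exact absurd (h1 a b ⟨a, hsr a, hsab⟩) hne
    · exact hT.exists_common hs h1
  obtain ⟨v, hv⟩ : ∃ v, ∀ x, s x v := by
    rcases h.symmetric hA hT (hs.comp hs.flip) (fun x => ⟨x, hsr x, hsr x⟩)
      (fun x y ⟨u, hu, hu'⟩ => ⟨u, hu', hu⟩) with h1 | h1
    · exact absurd (h1 a b ⟨b, hsab, hsr b⟩) hne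
    · exact hT.exists_common hs.flip h1
  by_cases hfull : ∀ x y, ∃ u, s x u ∧ s u y
  · obtain ⟨w, hw, hw'⟩ := hfull v u
    have hvu : v = u := (hanti _ _ hw (hv w)).trans (hanti _ _ hw' (hu w))
    subst hvu
    exact hne ((hanti _ _ (hv a) (hu a)).trans (hanti _ _ (hv b) (hu b)).symm)
  · push Not at hfull
    have hle := hmax (y := fun x y => ∃ u, s x u ∧ s u y) ⟨hs.comp hs,
      fun x => ⟨x, hsr x, hsr x⟩, by simpa using hfull⟩
      (fun x y hxy => ⟨x, hsr x, hxy⟩)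
    exact h ⟨1, {x | s (x 0) (x 1)}⟩ (Or.inl ⟨s,
      { refl := hsr, trans := fun x y z hxy hyz => hle x z ⟨y, hxy, hyz⟩, antisymm := hanti },
      ⟨u, hu⟩, ⟨v, hv⟩, rfl⟩) hs.subset_pol

theorem AvoidsRosenberg.perm (h : AvoidsRosenberg M) (hA : 3 ≤ Fintype.card A)
    {π : Equiv.Perm A} (hπ : Inv₂ M fun x y => y = π x) : π = 1 := by
  by_contra hne
  have hpow : ∀ n, Inv₂ M fun x y => y = (π ^ n) x := by
    intro n
    induction n with
    | zero =>
      intro f hf x y hxy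
      have : y = x := funext fun i => by simpa using hxy i
      simp [this]
    | succ n ih =>
      intro f hf x y hxy
      have := (hπ.comp ih) f hf x y fun i => ⟨π (x i), rfl, by simpa [pow_succ] using hxy i⟩
      simpa [pow_succ] using this
  have hN : orderOf π ≠ 1 := by simpa using hne
  obtain ⟨p, hp, k, hk⟩ := Nat.exists_prime_and_dvd hN
  have hk0 : 0 < k := by
    rcases Nat.eq_zero_or_pos k with rfl | hk0
    · simp [(orderOf_pos π).ne'] at hk
    · exact hk0
  have hσ : π ^ k ≠ 1 := fun h1 => by
    have := Nat.le_of_dvd hk0 (orderOf_dvd_of_pow_eq_one h1)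
    have := Nat.mul_le_mul_right k hp.two_le
    omega
  refine h ⟨1, {x | x 1 = (π ^ k) (x 0)}⟩ (Or.inr <| Or.inl ⟨π ^ k, fun a ha => hσ ?_, ⟨p, hp,
    fun a => ?_⟩, rfl⟩) (hpow k).subset_pol
  · ext x
    simpa using h.subuniverse hA (S := {x | (π ^ k) x = x}) (fun f hf x hx =>
      (hpow k f hf x x fun i => (hx i).symm).symm) ⟨a, ha⟩ x
  · rw [← pow_mul, mul_comm, ← hk, pow_orderOf_eq_one, Equiv.Perm.one_apply]

/-- A set of operations that is contained in no `Pol ρ` and for which all totally reflexive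
and totally symmetric invariant relations of arity at least three are trivial only has
trivial binary invariant relations. -/
theorem AvoidsRosenberg.binary (h : AvoidsRosenberg M) (hA : 3 ≤ Fintype.card A)
    (hT : ReflexiveFull M 2) {r : A → A → Prop} (hr : Inv₂ M r) {a b : A} (hne : a ≠ b)
    (hab : r a b) (x y : A) : r x y := by
  have : Nonempty A := ⟨a⟩
  by_cases hrefl : ∃ x, r x x
  · have := h.subuniverse hA (S := {x | r x x}) (fun f hf x hx => hr f hf x x hx) hrefl
    rcases h.reflexive hA hT hr this with h1 | h1
    · exact absurd (h1 a b hab) hne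
    · exact h1 x y
  exfalso
  have hdom := h.subuniverse hA (S := {x | ∃ y, r x y}) (fun f hf x hx => by
    choose y hy using hx
    exact ⟨f.2 y, hr f hf x y hy⟩) ⟨a, b, hab⟩
  have hran := h.subuniverse hA (S := {y | ∃ x, r x y}) (fun f hf x hx => by
    choose y hy using hx
    exact ⟨f.2 y, hr f hf y x hy⟩) ⟨b, a, hab⟩
  have hfun : ∀ u x y, r u x → r u y → x = y := by
    rcases h.symmetric hA hT (hr.flip.comp hr) (fun x => (hran x).imp fun u hu => ⟨hu, hu⟩)
      (fun x y ⟨u, hu, hu'⟩ => ⟨u, hu', hu⟩) with h1 | h1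
    · exact fun u x y hx hy => h1 x y ⟨u, hx, hy⟩
    · obtain ⟨u, hu⟩ := hT.exists_common hr h1
      exact absurd ⟨u, hu u⟩ hrefl
  have hinj : ∀ u x y, r x u → r y u → x = y := by
    rcases h.symmetric hA hT (hr.comp hr.flip) (fun x => (hdom x).imp fun u hu => ⟨hu, hu⟩)
      (fun x y ⟨u, hu, hu'⟩ => ⟨u, hu', hu⟩) with h1 | h1
    · exact fun u x y hx hy => h1 x y ⟨u, hx, hy⟩
    · obtain ⟨u, hu⟩ := hT.exists_common hr.flip h1
      exact absurd ⟨u, hu u⟩ hrefl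
  choose π hπ using hdom
  have hπi : Function.Injective π := fun x y hxy => hinj (π x) x y (hπ x) (hxy ▸ hπ y)
  have h1 := h.perm hA (π := Equiv.ofBijective π (Finite.injective_iff_bijective.1 hπi))
    (fun f hf x y hxy => by
      have := hr f hf x y fun i => by simpa [hxy i] using hπ (x i)
      exact hfun _ _ _ this (hπ _))
  have := DFunLike.congr_fun h1 a
  simp only [Equiv.ofBijective_apply, Equiv.Perm.one_apply] at this
  exact hrefl ⟨a, by simpa [this] using hπ a⟩

end Binary

open Function

section Homogeneous

variable {D : Type*} {ι : Type*} {n : ℕ} {ρ : Set (Fin n → D)}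

theorem exists_two_ne (hn : 3 ≤ n) (i : Fin n) : ∃ j k : Fin n, j ≠ i ∧ k ≠ i ∧ j ≠ k := by
  obtain ⟨j, hj, k, hk, hjk⟩ := Finset.one_lt_card.1
    (show 1 < (Finset.univ.erase i).card by simp; omega)
  exact ⟨j, k, by simpa using hj, by simpa using hk, hjk⟩

theorem not_injective_const (hn : 3 ≤ n) (c : D) : ¬ Injective fun _ : Fin n => c := by
  intro h
  obtain ⟨j, k, -, -, hjk⟩ := exists_two_ne hn ⟨0, by omega⟩
  exact hjk (h rfl)

theorem const_mem (hn : 3 ≤ n) (hρ : TotallyReflexiveRel ρ) (c : D) :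
    (fun _ => c) ∈ ρ :=
  mem_of_not_injective hρ (not_injective_const hn c)

theorem not_injective_ite (hn : 3 ≤ n) (i : Fin n) (c d : D) :
    ¬ Injective fun j : Fin n => if j = i then c else d := by
  intro h
  obtain ⟨j, k, hj, hk, hjk⟩ := exists_two_ne hn i
  exact hjk (h (by simp [hj, hk]))

theorem Pres.slice (hn : 3 ≤ n) (hρ : TotallyReflexiveRel ρ) [DecidableEq ι] {G : (ι → D) → D}
    (hG : Pres ρ G) (c : ι → D) (i : ι) {s : Fin n → D} (hs : s ∈ ρ) :
    (fun j => G (update c i (s j))) ∈ ρ := by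
  refine hG (fun i' j => update c i (s j) i') fun i' => ?_
  by_cases h : i' = i
  · subst h
    simpa using hs
  · simpa [h] using const_mem hn hρ (c i')

/-- Any element can be substituted for some entry of a tuple outside `ρ`. -/
def Homogeneous (ρ : Set (Fin n → D)) : Prop :=
  ∀ a ∉ ρ, ∀ u, ∃ i, update a i u ∉ ρ

theorem Homogeneous.collapse_right (hh : Homogeneous ρ) {g : Fin n → Fin n → D}
    (hg : ∀ κ χ : Fin n → Fin n, ¬ Injective κ → ¬ Injective χ → (fun j => g (κ j) (χ j)) ∈ ρ)
    {χ : Fin n → Fin n} (hχ : ¬ Injective χ) (h : (fun j => g j (χ j)) ∉ ρ) :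
    ∃ k, (fun j => g j k) ∉ ρ := by
  obtain ⟨m, hm⟩ : ∃ m, ∀ j, χ j ≠ m := by
    by_contra! hcon
    exact hχ (Finite.injective_iff_surjective.2 hcon)
  obtain ⟨i₁, i₂, -, hi⟩ := not_injective_iff.1 hχ
  obtain ⟨k, hk⟩ : ∃ k, k ≠ m := by
    by_cases h1 : i₁ = m
    · exact ⟨i₂, fun h2 => hi (h1.trans h2.symm)⟩
    · exact ⟨i₁, h1⟩
  have key : ∀ S : Finset (Fin n), (fun j => g j (if j ∈ S then k else χ j)) ∉ ρ := by
    intro S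
    induction S using Finset.induction_on with
    | empty => simpa using h
    | insert l S _ ih =>
      obtain ⟨i, hi⟩ := hh _ ih (g l k)
      have hil : i = l := by
        by_contra hil
        refine hi ?_
        convert hg (update id i l) (update (fun j => if j ∈ S then k else χ j) i k) ?_ ?_ using 1
        · funext j
          by_cases hj : j = i
          · subst hj; simp
          · simp [hj]
        · exact fun hinj => hil (hinj (by simp [Ne.symm hil]))
        · intro hinj
          obtain ⟨j, hj⟩ := Finite.injective_iff_surjective.1 hinj m
          by_cases hji : j = i
          · subst hji; simp at hj; exact hk hj
          · simp only [update_of_ne hji] at hj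
            split_ifs at hj
            · exact hk hj
            · exact hm _ hj
      subst hil
      convert hi using 2
      funext j
      by_cases hj : j = i
      · subst hj; simp
      · simp [hj]
  exact ⟨k, by simpa using key Finset.univ⟩

theorem Homogeneous.collapse (hn : 3 ≤ n) (hh : Homogeneous ρ) {g : Fin n → Fin n → D}
    (hg : ∀ κ χ : Fin n → Fin n, ¬ Injective κ → ¬ Injective χ → (fun j => g (κ j) (χ j)) ∈ ρ)
    (h : (fun j => g j j) ∉ ρ) : ∃ k, (fun j => g j k) ∉ ρ ∨ (fun j => g k j) ∉ ρ := by
  have hnot : ∀ {i l : Fin n}, i ≠ l → ¬ Injective (update id i l) :=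
    fun hil hinj => hil (hinj (by simp [Ne.symm hil]))
  obtain ⟨x, y, -, -, hxy⟩ := exists_two_ne hn ⟨0, by omega⟩
  obtain ⟨i, hi⟩ := hh _ h (g x y)
  by_cases hx : i = x
  · subst hx
    obtain ⟨k, hk⟩ := hh.collapse_right hg (hnot hxy) (by
      convert hi using 2
      funext j
      by_cases hj : j = i
      · subst hj; simp
      · simp [hj])
    exact ⟨k, Or.inl hk⟩
  by_cases hy : i = y
  · subst hy
    obtain ⟨k, hk⟩ := hh.collapse_right (g := fun j k => g k j)
      (fun κ χ hκ hχ => hg χ κ hχ hκ) (hnot hxy.symm) (by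
      convert hi using 2
      funext j
      by_cases hj : j = i
      · subst hj; simp
      · simp [hj])
    exact ⟨k, Or.inr hk⟩
  · refine absurd ?_ hi
    convert hg _ _ (hnot hx) (hnot hy) using 1
    funext j
    by_cases hj : j = i
    · subst hj; simp
    · simp [hj]

/-- An operation preserving `ρ` with some value outside `ρ` has such values already
when only one of its arguments varies. -/
theorem Homogeneous.exists_slice (hn : 3 ≤ n) (hρ : TotallyReflexiveRel ρ)
    (hh : Homogeneous ρ) [Fintype ι] [DecidableEq ι] {G : (ι → D) → D} (hG : Pres ρ G)
    {t : ι → Fin n → D} (ht : (fun j => G fun i => t i j) ∉ ρ) :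
    ∃ (i : ι) (c : ι → D) (p : Fin n → D), (fun j => G (update c i (p j))) ∉ ρ := by
  have key : ∀ (S : Finset ι) (t : ι → Fin n → D), (∀ i ∉ S, ∃ c, t i = fun _ => c) →
      (fun j => G fun i => t i j) ∉ ρ →
      ∃ (i : ι) (c : ι → D) (p : Fin n → D), (fun j => G (update c i (p j))) ∉ ρ := by
    intro S
    induction S using Finset.induction_on with
    | empty =>
      intro t hc ht
      choose c hc using fun i => hc i (Finset.notMem_empty i)
      simp only [hc] at ht
      exact absurd (const_mem hn hρ _) ht
    | insert i S _ ih =>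
      intro t hc ht
      obtain ⟨k, hk | hk⟩ := hh.collapse hn
        (g := fun j k => G (update (fun i' => t i' k) i (t i j)))
        (fun κ χ hκ hχ => hG (fun i' j => update (fun i' => t i' (χ j)) i (t i (κ j)) i')
          fun i' => by
          by_cases h : i' = i
          · subst h
            exact mem_of_not_injective hρ fun hinj =>
              hκ (Injective.of_comp (f := t i') (by simpa [comp_def] using hinj))
          · exact mem_of_not_injective hρ fun hinj => hχ (Injective.of_comp (f := t i')
              (by simpa [comp_def, h] using hinj)))
        (by simpa using ht)
      · exact ⟨i, _, _, hk⟩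
      · refine ih (fun i' j => update (fun i' => t i' j) i (t i k) i') (fun i' hi' => ?_) hk
        by_cases h : i' = i
        · subst h
          exact ⟨t i' k, by simp⟩
        · simpa [h] using hc i' (by simp [h, hi'])
  exact key Finset.univ t (by simp) ht

/-- A homogeneous relation whose endomorphisms are either bijective or have all their values
in it. -/
structure IsRigid (ρ : Set (Fin n → D)) : Prop where
  three_le : 3 ≤ n
  refl : TotallyReflexiveRel ρ
  ne_univ : ρ ≠ Set.univ
  homogeneous : Homogeneous ρ
  bijective : ∀ h : D → D, (∀ s ∈ ρ, h ∘ s ∈ ρ) → (∃ s, h ∘ s ∉ ρ) → Bijective h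

theorem IsRigid.eq_of_dominated (hρ : IsRigid ρ) {u v : D}
    (h : ∀ s ∈ ρ, ∀ i, s i = u → update s i v ∈ ρ) : u = v := by
  classical
  by_contra huv
  have hupd : ∀ s : Fin n → D, Injective s → ∀ i, s i = u → update id u v ∘ s = update s i v := by
    intro s hs i hi
    funext j
    by_cases hj : j = i
    · subst hj; simp [hi]
    · have : s j ≠ u := fun h => hj (hs (h.trans hi.symm))
      simp [hj, this]
  have hend : ∀ s ∈ ρ, update id u v ∘ s ∈ ρ := by
    intro s hs
    by_cases hinj : Injective s
    · by_cases hu : ∃ i, s i = u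
      · obtain ⟨i, hi⟩ := hu
        rw [hupd s hinj i hi]
        exact h s hs i hi
      · push Not at hu
        convert hs using 1
        funext j
        simp [hu j]
    · exact mem_of_not_injective hρ.refl fun h => hinj (Injective.of_comp h)
  have hsmall : ∀ s, update id u v ∘ s ∈ ρ := by
    by_contra! hcon
    exact huv ((hρ.bijective _ hend hcon).1 (by simp [Ne.symm huv]))
  obtain ⟨a, ha⟩ := (Set.ne_univ_iff_exists_notMem _).1 hρ.ne_univ
  obtain ⟨i, hi⟩ := hρ.homogeneous a ha v
  by_cases hu : ∃ j, update a i v j = u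
  · obtain ⟨j, hj⟩ := hu
    have hji : j ≠ i := by
      rintro rfl
      simp at hj
      exact huv hj.symm
    refine hi ?_
    have := h (update a i u) (hρ.refl _ ⟨i, j, hji.symm, by simpa [hji] using hj.symm⟩) i (by simp)
    simpa using this
  · push Not at hu
    refine hi ?_
    convert hsmall (update a i v) using 1
    funext j
    simp [update_of_ne (hu j)]

theorem comp_symm_mem [Finite D] {π : Equiv.Perm D} (hπ : ∀ s ∈ ρ, π ∘ s ∈ ρ) {s : Fin n → D}
    (hs : s ∈ ρ) : π.symm ∘ s ∈ ρ := by
  have hinj : Injective fun t : ρ => (⟨π ∘ t.1, hπ _ t.2⟩ : ρ) := by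
    intro t t' h
    have : π ∘ t.1 = π ∘ t'.1 := congrArg Subtype.val h
    exact Subtype.ext (π.injective.comp_left this)
  obtain ⟨t, ht⟩ := Finite.injective_iff_surjective.1 hinj ⟨s, hs⟩
  have : π ∘ t.1 = s := congrArg Subtype.val ht
  rw [← this, ← comp_assoc, Equiv.symm_comp_self, id_comp]
  exact t.2

/-- All operations preserving a rigid relation with some value outside it are
essentially unary. -/
theorem IsRigid.essentially_unary [Finite D] (hρ : IsRigid ρ) [Fintype ι] [DecidableEq ι]
    {G : (ι → D) → D} (hG : Pres ρ G) {t : ι → Fin n → D}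
    (ht : (fun j => G fun i => t i j) ∉ ρ) :
    ∃ (i : ι) (π : Equiv.Perm D), ∀ x, G x = π (x i) := by
  classical
  have hn := hρ.three_le
  obtain ⟨i₀, c, p, hp⟩ := hρ.homogeneous.exists_slice hn hρ.refl hG ht
  have hb := hρ.bijective (fun x => G (update c i₀ x))
    (fun s hs => hG.slice hn hρ.refl c i₀ hs) ⟨p, hp⟩
  obtain ⟨π, hπ⟩ : ∃ π : Equiv.Perm D, ∀ x, π x = G (update c i₀ x) :=
    ⟨Equiv.ofBijective _ hb, fun x => rfl⟩
  have hπρ : ∀ s ∈ ρ, π ∘ s ∈ ρ := fun s hs => by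
    simpa [comp_def, hπ] using hG.slice hn hρ.refl c i₀ hs
  refine ⟨i₀, π, fun x => ?_⟩
  have key : ∀ S : Finset ι, ∀ y, G (update (S.piecewise x c) i₀ y) = π y := by
    intro S
    induction S using Finset.induction_on with
    | empty => simp [hπ]
    | insert i S _ ih =>
      intro y
      rw [Finset.piecewise_insert]
      by_cases hi : i = i₀
      · subst hi
        simpa using ih y
      set z := S.piecewise x c
      have : y = π.symm (G (update (update z i (x i)) i₀ y)) := by
        refine hρ.eq_of_dominated fun s hs j hj => ?_
        have hmem : (fun k => G (update (if k = j then update z i (x i) else z) i₀ (s k))) ∈ ρ := by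
          refine hG (fun i' k => update (if k = j then update z i (x i) else z) i₀ (s k) i')
            fun i' => ?_
          by_cases h : i' = i₀
          · subst h
            simpa using hs
          · convert mem_of_not_injective hρ.refl
              (not_injective_ite hn j (update z i (x i) i') (z i')) using 1
            funext k
            split_ifs <;> simp [h]
        convert comp_symm_mem hπρ hmem using 1
        funext k
        by_cases hk : k = j
        · subst hk; simp [hj]
        · simp [hk, ih]
      exact (π.symm_apply_eq.1 this.symm)
  simpa using key Finset.univ (x i₀)

end Homogeneous

section Extremal

variable {A : Type u} {n : ℕ} {ρ : Set (Fin n → A)} {M : Set (Ops A)}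

/-- A totally reflexive and totally symmetric relation of arity at least three that cannot be
enlarged, neither in arity nor as a set, within the invariant relations of its
polymorphisms. -/
structure IsExtremal (ρ : Set (Fin n → A)) : Prop where
  three_le : 3 ≤ n
  refl : TotallyReflexiveRel ρ
  symm : TotallySymmetricRel ρ
  ne_univ : ρ ≠ Set.univ
  full : ReflexiveFull (Pol ρ) n
  eq_or_eq_univ : ∀ σ, ρ ⊆ σ → Inv (Pol ρ) σ → TotallySymmetricRel σ → σ = ρ ∨ σ = Set.univ

theorem exists_isExtremal [Fintype A] (h : ¬ ReflexiveFull M 2) :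
    ∃ (n : ℕ) (ρ : Set (Fin n → A)), IsExtremal ρ ∧ M ⊆ Pol ρ := by
  classical
  set P : ℕ → Prop := fun k => 2 < k ∧ ∃ σ : Set (Fin k → A), Inv M σ ∧ TotallyReflexiveRel σ ∧
    TotallySymmetricRel σ ∧ σ ≠ Set.univ with hP
  have hbound : ∀ k, P k → k ≤ Fintype.card A := by
    rintro k ⟨-, σ, -, hr, -, hne⟩
    obtain ⟨a, ha⟩ := (Set.ne_univ_iff_exists_notMem _).1 hne
    simpa using Fintype.card_le_of_injective a (injective_of_notMem hr ha)
  obtain ⟨k, hk⟩ : ∃ k, P k := by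
    simp only [ReflexiveFull, not_forall] at h
    obtain ⟨k, hk, σ, h1, h2, h3, h4⟩ := h
    exact ⟨k, hk, σ, h1, h2, h3, h4⟩
  have hn := Nat.findGreatest_spec (hbound k hk) hk
  set n := Nat.findGreatest P (Fintype.card A)
  obtain ⟨hn2, σ, hσ⟩ := hn
  obtain ⟨ρ, -, ⟨hρ, hr, hs, hne⟩, hmax⟩ :=
    (Set.toFinite {σ : Set (Fin n → A) | Inv M σ ∧ TotallyReflexiveRel σ ∧
    TotallySymmetricRel σ ∧ σ ≠ Set.univ}).exists_le_maximal (a := σ) hσ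
  refine ⟨n, ρ, ⟨hn2, hr, hs, hne, fun l hl τ h1 h2 h3 => ?_, fun τ hτ h1 h2 => ?_⟩, hρ⟩
  · by_contra h4
    have hPl : P l := ⟨by omega, τ, h1.mono hρ, h2, h3, h4⟩
    exact absurd (Nat.le_findGreatest (hbound l hPl) hPl) (not_le.2 hl)
  · by_contra! hcon
    exact hcon.1 (Set.Subset.antisymm
      (hmax (y := τ) ⟨h1.mono hρ, fun x hx => hτ (hr x hx), h2, hcon.2⟩ hτ) hτ)

theorem comp_mem_of_mem (hr : TotallyReflexiveRel ρ) (hs : TotallySymmetricRel ρ) {x : Fin n → A}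
    (hx : x ∈ ρ) (φ : Fin n → Fin n) : x ∘ φ ∈ ρ := by
  by_cases hφ : Injective φ
  · exact hs (Equiv.ofBijective φ (Finite.injective_iff_bijective.1 hφ)) x hx
  · exact mem_of_not_injective hr fun h => hφ (Injective.of_comp h)

theorem IsExtremal.central_or_homogeneous [Finite A] [Nonempty A] (hρ : IsExtremal ρ) :
    (∃ u, ∀ s : Fin n → A, (∃ i, s i = u) → s ∈ ρ) ∨ Homogeneous ρ := by
  set Q : Set A → Prop := fun S => ∃ u, ∀ s : Fin n → A, (∀ i, s i = u ∨ s i ∈ S) →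
    (∃ i, s i = u) → s ∈ ρ with hQ
  have hn := hρ.three_le
  have hinv : ∀ k, Inv (Pol ρ) {x : Fin k → A | Q (Set.range x)} := by
    classical
    intro k f hf t ht
    choose u hu using ht
    refine ⟨f.2 u, fun s hs ⟨i, hi⟩ => ?_⟩
    have : ∀ j, s j ≠ f.2 u → ∃ m, s j = f.2 fun i => t i m := fun j hj => by
      obtain ⟨m, hm⟩ := (hs j).resolve_left hj
      exact ⟨m, hm.symm⟩
    choose m hm using this
    have := hf (fun i j => if h : s j = f.2 u then u i else t i (m j h)) fun i' => hu i' _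
      (fun j => by by_cases h : s j = f.2 u <;> simp [h]) ⟨i, by simp [hi]⟩
    convert this using 1
    funext j
    by_cases h : s j = f.2 u
    · simp [h]
    · simp only [h, dite_false]
      exact hm j h
  have hlt : ∀ k < n, ∀ x : Fin k → A, Q (Set.range x) := by
    intro k hk x
    obtain _ | k := k
    · refine ⟨Classical.arbitrary A, fun s hs _ => ?_⟩
      have : s = fun _ => Classical.arbitrary A := funext fun i => by simpa using hs i
      exact this ▸ const_mem hn hρ.refl _
    · refine ⟨x 0, fun s hs _ => mem_of_not_injective hρ.refl fun hinj => ?_⟩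
      have : ∀ i, ∃ j, x j = s i := fun i => (hs i).elim (fun h => ⟨0, h.symm⟩) id
      choose φ hφ using this
      have : Injective φ := fun i j hij => hinj (by rw [← hφ, ← hφ, hij])
      have := Fintype.card_le_of_injective φ this
      simp at this
      omega
  have hself : ρ ⊆ {x : Fin n → A | Q (Set.range x)} := by
    intro x hx
    refine ⟨x ⟨0, by omega⟩, fun s hs _ => ?_⟩
    have : ∀ i, ∃ j, x j = s i := fun i => (hs i).elim (fun h => ⟨_, h.symm⟩) id
    choose φ hφ using this
    have : s = x ∘ φ := funext fun i => (hφ i).symm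
    exact this ▸ comp_mem_of_mem hρ.refl hρ.symm hx φ
  rcases hρ.eq_or_eq_univ _ hself (hinv n) (fun σ x hx => by
    have : Set.range (x ∘ σ) = Set.range x := σ.surjective.range_comp x
    simpa only [Set.mem_ofPred_eq, this] using hx) with h | h
  · right
    intro a ha u
    rw [← h] at ha
    simp only [hQ, Set.mem_ofPred_eq, not_exists, not_forall] at ha
    obtain ⟨s, hs, ⟨i₀, hi₀⟩, hsρ⟩ := ha u
    have hinj := injective_of_notMem hρ.refl hsρ
    have : ∀ i, ∃ j, i ≠ i₀ → a j = s i := by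
      intro i
      by_cases hi : i = i₀
      · exact ⟨i, fun h => absurd hi h⟩
      · obtain ⟨j, hj⟩ := (hs i).resolve_left fun h => hi (hinj (h.trans hi₀.symm))
        exact ⟨j, fun _ => hj⟩
    choose φ hφ using this
    obtain ⟨m, hm⟩ : ∃ m, ∀ i ≠ i₀, φ i ≠ m := by
      have : ((Finset.univ.erase i₀).image φ).card < (Finset.univ : Finset (Fin n)).card :=
        Finset.card_image_le.trans_lt (Finset.card_erase_lt_of_mem (Finset.mem_univ i₀))
      obtain ⟨m, -, hm⟩ := Finset.exists_mem_notMem_of_card_lt_card this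
      exact ⟨m, fun i hi h => hm (Finset.mem_image.2 ⟨i, by simpa using hi, h⟩)⟩
    refine ⟨m, fun hmem => hsρ ?_⟩
    convert comp_mem_of_mem hρ.refl hρ.symm hmem (update φ i₀ m) using 1
    funext i
    by_cases hi : i = i₀
    · subst hi; simp [hi₀]
    · simp [hi, hm i hi, hφ i hi]
  · left
    have := hρ.full.range_induction Q hinv fun k hk x => by
      rcases hk.lt_or_eq with hk | rfl
      · exact hlt k hk x
      · exact (h ▸ Set.mem_univ x : x ∈ {x : Fin k → A | Q (Set.range x)})
    simpa [hQ] using this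

theorem IsExtremal.exists_pres [Finite A] (hρ : IsExtremal ρ) {b : Fin n → A} (hb : b ∉ ρ)
    (y : Fin n → A) : ∃ G : (Equiv.Perm (Fin n) → A) → A, Pres ρ G ∧
      y = fun j => G fun σ => b (σ j) := by
  classical
  have hn := hρ.three_le
  have hinj := injective_of_notMem hρ.refl hb
  set R : Set (Fin n → A) := {y | ∃ G : (Equiv.Perm (Fin n) → A) → A, Pres ρ G ∧
      y = fun j => G fun σ => b (σ j)} with hR
  have hρR : ρ ⊆ R := by
    intro x hx
    set h : A → Fin n := fun z => if hz : ∃ j, b j = z then hz.choose else ⟨0, by omega⟩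
    have hh : ∀ j, h (b j) = j := by
      intro j
      have hz : ∃ j', b j' = b j := ⟨j, rfl⟩
      simp only [h, hz, dite_true]
      exact hinj hz.choose_spec
    refine ⟨fun v => x (h (v 1)), fun t _ => ?_, ?_⟩
    · exact comp_mem_of_mem hρ.refl hρ.symm hx fun j => h (t 1 j)
    · simp [hh]
  have hinv : Inv (Pol ρ) R := by
    intro f hf t ht
    choose G hG hGt using ht
    refine ⟨fun v => f.2 fun i => G i v, fun s hs => hf _ fun i => hG i s hs, ?_⟩
    funext j
    simp [hGt]
  have hsymm : TotallySymmetricRel R := by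
    rintro τ _ ⟨G, hG, rfl⟩
    exact ⟨fun v => G fun σ => v (σ * τ), fun t ht => hG (fun σ => t (σ * τ)) fun σ => ht _,
      rfl⟩
  rcases hρ.eq_or_eq_univ R hρR hinv hsymm with h | h
  · exact absurd (h ▸ ⟨fun v => v 1, fun t ht => ht 1, rfl⟩ : b ∈ ρ) hb
  · exact (h ▸ Set.mem_univ y : y ∈ R)

theorem IsExtremal.exists_pres_fun [Finite A] (hρ : IsExtremal ρ) {b : Fin n → A} (hb : b ∉ ρ)
    {X : Type*} (F : X → A) : ∃ G : ((X → Fin n) → A) → A, Pres ρ G ∧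
      F = fun x => G fun ψ => b (ψ x) := by
  have : Nonempty A := ⟨b ⟨0, by have := hρ.three_le; omega⟩⟩
  refine hρ.full.mem_of_factor (Y := {F : X → A | ∃ G : ((X → Fin n) → A) → A, Pres ρ G ∧
      F = fun x => G fun ψ => b (ψ x)}) ?_ ?_ F
  · intro f hf t ht
    choose G hG hGt using ht
    refine ⟨fun v => f.2 fun i => G i v, fun s hs => hf _ fun i => hG i s hs, ?_⟩
    funext j
    simp [hGt]
  · intro c χ
    obtain ⟨G, hG, hGc⟩ := hρ.exists_pres hb c
    refine ⟨fun v => G fun σ => v (σ ∘ χ), fun t ht => hG (fun σ => t (σ ∘ χ)) fun σ => ht _, ?_⟩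
    funext x
    simp [hGc]

end Extremal

section Colorings

variable {A : Type u} {n : ℕ} {ρ : Set (Fin n → A)} {M : Set (Ops A)}

theorem exists_iterate_idempotent [Finite A] {k : A → A} (hk : ∀ y ∈ Set.range k,
    ∃ x ∈ Set.range k, k x = y) : ∃ m, (∀ x ∈ Set.range k, k^[m] x = x) ∧
    ∀ x, k^[m] x ∈ Set.range k := by
  set k' : Set.range k → Set.range k := fun x => ⟨k x, ⟨x, rfl⟩⟩ with hk'
  have hsurj : Surjective k' := by
    rintro ⟨y, hy⟩
    obtain ⟨x, hx, hxy⟩ := hk y hy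
    exact ⟨⟨x, hx⟩, Subtype.ext hxy⟩
  set π : Equiv.Perm (Set.range k) := Equiv.ofBijective k' (Finite.surjective_iff_bijective.1 hsurj)
  have hpow : ∀ m x, ((π ^ m) x : A) = k^[m] x := by
    intro m
    induction m with
    | zero => simp
    | succ m ih =>
      intro x
      rw [pow_succ, iterate_succ_apply, Equiv.Perm.mul_apply, ih]
      rfl
  have hpos := orderOf_pos π
  refine ⟨orderOf π, fun x hx => ?_, fun x => ?_⟩
  · rw [← hpow _ ⟨x, hx⟩, pow_orderOf_eq_one]
    rfl
  · obtain ⟨m, hm⟩ := Nat.exists_eq_succ_of_ne_zero hpos.ne'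
    rw [hm, iterate_succ_apply']
    exact ⟨_, rfl⟩

/-- There is an idempotent endomorphism of minimal range among those with some value
outside `ρ`. -/
theorem IsExtremal.exists_idempotent [Finite A] (hρ : IsExtremal ρ) (hh : Homogeneous ρ) :
    ∃ e : A → A, (∀ s ∈ ρ, e ∘ s ∈ ρ) ∧ (∀ x, e (e x) = e x) ∧ (∃ b, b ∉ ρ ∧ e ∘ b = b) ∧
      ∀ h : A → A, (∀ s ∈ ρ, h ∘ s ∈ ρ) → (∃ s, h ∘ s ∉ ρ) →
        (Set.range e).ncard ≤ (Set.range h).ncard := by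
  classical
  obtain ⟨a₀, ha₀⟩ := (Set.ne_univ_iff_exists_notMem _).1 hρ.ne_univ
  obtain ⟨f, ⟨hf, a, ha⟩, hmin⟩ := exists_minimalFor_of_wellFoundedLT
    (fun h : A → A => (∀ s ∈ ρ, h ∘ s ∈ ρ) ∧ ∃ s, h ∘ s ∉ ρ)
    (fun h => (Set.range h).ncard) ⟨id, fun s hs => hs, a₀, ha₀⟩
  have hmin' : ∀ h : A → A, (∀ s ∈ ρ, h ∘ s ∈ ρ) → (∃ s, h ∘ s ∉ ρ) →
      (Set.range f).ncard ≤ (Set.range h).ncard := fun h h1 h2 =>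
    (le_total _ _).elim id fun hle => hmin ⟨h1, h2⟩ hle
  obtain ⟨G, hG, hGa⟩ := hρ.exists_pres ha a
  have hF : Pres ρ fun v : Equiv.Perm (Fin n) → A => f (G fun σ => f (v σ)) := fun t ht =>
    hf _ (hG (fun σ => f ∘ t σ) fun σ => hf _ (ht σ))
  obtain ⟨i, c, p, hp⟩ := hh.exists_slice hρ.three_le hρ.refl hF (t := fun σ => a ∘ σ) (by
    have : (fun j => f (G fun σ => f (a (σ j)))) = f ∘ a := by
      conv_rhs => rw [hGa]
      rfl
    simpa only [comp_apply, this] using ha)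
  set h : A → A := fun z => G (update (f ∘ c) i z) with hh'
  have hslice : ∀ z, f (G fun σ => f (update c i z σ)) = f (h (f z)) := fun z => by
    have : (fun σ => f (update c i z σ)) = update (f ∘ c) i (f z) := by
      rw [← comp_update]; rfl
    rw [this]
  have hhρ : ∀ s ∈ ρ, h ∘ s ∈ ρ := fun s hs => hG.slice hρ.three_le hρ.refl _ i hs
  set k : A → A := f ∘ h with hk
  have hkρ : ∀ s ∈ ρ, k ∘ s ∈ ρ := fun s hs => hf _ (hhρ s hs)
  have hkf : (Set.range f).ncard ≤ (Set.range (k ∘ f)).ncard :=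
    hmin' (k ∘ f) (fun s hs => hkρ _ (hf s hs)) ⟨p, by simp only [hslice] at hp; exact hp⟩
  have hrange : Set.range (k ∘ f) = Set.range f := by
    refine Set.eq_of_subset_of_ncard_le ?_ hkf (Set.toFinite _)
    rintro _ ⟨x, rfl⟩
    exact ⟨_, rfl⟩
  have hrk : Set.range k = Set.range f := by
    refine Set.Subset.antisymm ?_ (hrange ▸ Set.range_comp_subset_range f k)
    rintro _ ⟨x, rfl⟩
    exact ⟨_, rfl⟩
  obtain ⟨m, hm, hm'⟩ := exists_iterate_idempotent (k := k) (by
    rw [hrk]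
    intro y hy
    obtain ⟨x, hx⟩ := hrange.symm ▸ hy
    exact ⟨f x, ⟨x, rfl⟩, hx⟩)
  have hmρ : ∀ s ∈ ρ, k^[m] ∘ s ∈ ρ := by
    clear hm hm'
    induction m with
    | zero => exact fun s hs => hs
    | succ m ih => exact fun s hs => ih _ (hkρ s hs)
  refine ⟨k^[m], hmρ, fun x => hm _ (hm' x), ⟨f ∘ a, ha, ?_⟩, fun g h1 h2 => ?_⟩
  · funext j
    exact hm _ (hrk.symm ▸ ⟨a j, rfl⟩)
  · refine le_trans (Set.ncard_le_ncard ?_ (Set.toFinite _)) (hmin' g h1 h2)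
    rintro _ ⟨x, rfl⟩
    exact hrk ▸ hm' x

/-- A coloring of the complement of `ρ`: a map onto an `n`-element set that identifies some
entries of each tuple of `ρ`. -/
def IsColoring (ρ : Set (Fin n → A)) (κ : A → Fin n) : Prop :=
  Surjective κ ∧ ∀ s ∈ ρ, ¬ Injective (κ ∘ s)

theorem IsExtremal.exists_isColoring [Finite A] (hρ : IsExtremal ρ) (hh : Homogeneous ρ) :
    ∃ κ, IsColoring ρ κ := by
  classical
  obtain ⟨e, heρ, hee, ⟨b, hb, heb⟩, hmin⟩ := hρ.exists_idempotent hh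
  have heb' : ∀ j, e (b j) = b j := congrFun heb
  let D := {x : A // e x = x}
  let τ : Set (Fin n → D) := {s | Subtype.val ∘ s ∈ ρ}
  let e' : A → D := fun x => ⟨e x, hee x⟩
  let b' : Fin n → D := fun j => ⟨b j, heb' j⟩
  have hbτ : b' ∉ τ := hb
  have hrig : IsRigid τ := by
    refine ⟨hρ.three_le, fun x ⟨i, j, hij, hx⟩ => hρ.refl _ ⟨i, j, hij, by simp [hx]⟩,
      fun h => hbτ (h ▸ Set.mem_univ b'), fun a ha u => ?_, fun h h1 ⟨s, hs⟩ => ?_⟩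
    · obtain ⟨i, hi⟩ := hh _ ha u
      rw [← comp_update] at hi
      exact ⟨i, hi⟩
    · have h2 := hmin (Subtype.val ∘ h ∘ e') (fun s hs => h1 (e' ∘ s) (heρ s hs))
        ⟨Subtype.val ∘ s, by
          convert hs using 1
          have : e' ∘ Subtype.val ∘ s = s := funext fun j => Subtype.ext (s j).2
          rw [comp_assoc, comp_assoc, this]
          rfl⟩
      refine Finite.surjective_iff_bijective.1 fun y => ?_
      have h3 : Set.range (Subtype.val ∘ h ∘ e') = Set.range e := by
        refine Set.eq_of_subset_of_ncard_le ?_ h2 (Set.toFinite _)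
        rintro _ ⟨x, rfl⟩
        exact ⟨_, (h (e' x)).2⟩
      obtain ⟨x, hx⟩ := (h3.symm ▸ ⟨y.1, y.2⟩ : y.1 ∈ Set.range (Subtype.val ∘ h ∘ e'))
      exact ⟨e' x, Subtype.ext hx⟩
  obtain ⟨G, hG, hGid⟩ := hρ.exists_pres_fun hb (Subtype.val : D → A)
  have hGid' : ∀ x : D, e' (G fun ψ => b (ψ x)) = x := fun x =>
    Subtype.ext (by rw [← congrFun hGid x]; exact x.2)
  have := Fintype.ofFinite D
  obtain ⟨ψ, π, hπ⟩ := hrig.essentially_unary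
    (G := fun v : (D → Fin n) → D => e' (G fun ψ => v ψ))
    (fun t ht => heρ _ (hG (fun ψ => Subtype.val ∘ t ψ) ht))
    (t := fun ψ j => b' (ψ (b' j))) (by
      convert hbτ using 2
      funext j
      exact hGid' (b' j))
  have hψ : Injective ψ := fun x y hxy => by
    have key : ∀ x : D, x = π (b' (ψ x)) := fun x => (hGid' x).symm.trans (hπ fun ψ => b' (ψ x))
    rw [key x, key y, hxy]
  have hbi : Injective b' := injective_of_notMem hrig.refl hbτ
  have hψb : Bijective (ψ ∘ b') := Finite.injective_iff_bijective.1 (hψ.comp hbi)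
  refine ⟨ψ ∘ e', fun i => ?_, fun s hs hinj => ?_⟩
  · obtain ⟨j, hj⟩ := hψb.2 i
    exact ⟨b j, by rw [← hj]; exact congrArg ψ (Subtype.ext (heb' j))⟩
  · have hs' : Bijective (ψ ∘ e' ∘ s) := Finite.injective_iff_bijective.1 hinj
    obtain ⟨φ, hφ⟩ : ∃ φ : Fin n → Fin n, ∀ j, ψ (e' (s (φ j))) = ψ (b' j) :=
      ⟨fun j => (hs'.2 (ψ (b' j))).choose, fun j => (hs'.2 (ψ (b' j))).choose_spec⟩
    refine hb ?_
    convert comp_mem_of_mem hρ.refl hρ.symm (heρ s hs) φ using 1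
    funext j
    exact (congrArg Subtype.val (hψ (hφ j))).symm

/-- Operations on a finite set of at least three elements that preserve non-injectivity of
tuples and are onto on some tuple are essentially unary. -/
theorem isRigid_not_injective (hn : 3 ≤ n) :
    IsRigid {x : Fin n → Fin n | ¬ Injective x} := by
  refine ⟨hn, fun x ⟨i, j, hij, hx⟩ h => hij (h hx), fun h => ?_, fun a ha u => ?_,
    fun h _ ⟨s, hs⟩ => ?_⟩
  · exact (h ▸ Set.mem_univ id : id ∈ {x : Fin n → Fin n | ¬ Injective x}) injective_id
  · simp only [Set.mem_ofPred_eq, not_not] at ha ⊢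
    obtain ⟨i, rfl⟩ := Finite.injective_iff_surjective.1 ha u
    exact ⟨i, by simpa using ha⟩
  · simp only [Set.mem_ofPred_eq, not_not] at hs
    exact Finite.surjective_iff_bijective.1 (Finite.injective_iff_surjective.1 hs).of_comp

theorem IsExtremal.mem_iff_coloring [Finite A] (hρ : IsExtremal ρ) (hh : Homogeneous ρ)
    {x : Fin n → A} : x ∈ ρ ↔ ∀ κ, IsColoring ρ κ → ¬ Injective (κ ∘ x) := by
  classical
  have hn := hρ.three_le
  refine ⟨fun hx κ hκ => hκ.2 x hx, fun hx => ?_⟩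
  have hsub : ρ ⊆ {x | ∀ κ, IsColoring ρ κ → ¬ Injective (κ ∘ x)} :=
    fun x hx κ hκ => hκ.2 x hx
  have hinv : Inv (Pol ρ) {x : Fin n → A | ∀ κ, IsColoring ρ κ → ¬ Injective (κ ∘ x)} := by
    intro f hf t ht κ hκ hinj
    obtain ⟨i, π, hπ⟩ := (isRigid_not_injective hn).essentially_unary
      (G := fun v : Fin (f.1 + 1) → Fin n => κ (f.2 fun i => t i (v i)))
      (fun s hs => hκ.2 _ (hf (fun i => t i ∘ s i) fun i =>
        mem_of_not_injective hρ.refl fun h => hs i (Injective.of_comp h)))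
      (t := fun _ => id) (fun h => h hinj)
    set c : Fin (f.1 + 1) → A := fun i => t i ⟨0, by omega⟩
    have hval : ∀ j, κ (f.2 (update c i (t i j))) = π j := fun j => by
      have := hπ (update (fun _ => ⟨0, by omega⟩) i j)
      rw [update_self] at this
      rw [← this]
      congr 1
      refine congrArg f.2 (funext fun i' => ?_)
      by_cases h : i' = i
      · subst h; simp
      · simp [h, c]
    have hcol : IsColoring ρ fun z => κ (f.2 (update c i z)) := by
      refine ⟨fun y => ⟨t i (π.symm y), by simp [hval]⟩, fun s hs => hκ.2 _ ?_⟩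
      exact Pres.slice (G := f.2) hn hρ.refl hf c i hs
    refine ht i _ hcol ?_
    convert π.injective using 1
    funext j
    exact hval j
  have hsymm : TotallySymmetricRel {x : Fin n → A | ∀ κ, IsColoring ρ κ → ¬ Injective (κ ∘ x)} := by
    intro σ x hx κ hκ hinj
    exact hx κ hκ ((σ.injective_comp _).1 (by simpa [comp_assoc] using hinj))
  rcases hρ.eq_or_eq_univ _ hsub hinv hsymm with h | h
  · exact h ▸ hx
  · obtain ⟨κ, hκ⟩ := hρ.exists_isColoring hh
    have := (h ▸ Set.mem_univ (surjInv hκ.1) :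
      surjInv hκ.1 ∈ {x : Fin n → A | ∀ κ, IsColoring ρ κ → ¬ Injective (κ ∘ x)}) κ hκ
    rw [(rightInverse_surjInv hκ.1).comp_eq_id] at this
    exact absurd injective_id this

/-- Classes of colorings with different kernels can be prescribed independently. -/
theorem IsExtremal.exists_common_class [Finite A] (hρ : IsExtremal ρ) {ι : Type*}
    (κ : ι → A → Fin n) (hκ : ∀ i, IsColoring ρ (κ i))
    (hne : ∀ i j, i ≠ j → ∃ x y, ¬ (κ i x = κ i y ↔ κ j x = κ j y)) (a : ι → A) :
    ∃ u, ∀ i, κ i (a i) = κ i u := by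
  classical
  have hn := hρ.three_le
  obtain ⟨b, hb⟩ := (Set.ne_univ_iff_exists_notMem _).1 hρ.ne_univ
  obtain ⟨G, hG, hGid⟩ := hρ.exists_pres_fun hb (id : A → A)
  have := Fintype.ofFinite A
  have key : ∀ i, ∃ (ψ : A → Fin n) (π : Equiv.Perm (Fin n)), ∀ v : (A → Fin n) → Fin n,
      κ i (G fun χ => b (v χ)) = π (v ψ) := by
    intro i
    refine (isRigid_not_injective hn).essentially_unary
      (G := fun v : (A → Fin n) → Fin n => κ i (G fun χ => b (v χ)))
      (fun s hs => (hκ i).2 _ (hG (fun ψ => b ∘ s ψ) fun ψ =>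
        mem_of_not_injective hρ.refl fun h => hs ψ (Injective.of_comp h)))
      (t := fun ψ j => ψ (surjInv (hκ i).1 j)) fun h => h ?_
    convert injective_id (α := Fin n) using 1
    funext j
    rw [← congrFun hGid (surjInv (hκ i).1 j)]
    exact surjInv_eq _ _
  choose ψ π hπ using key
  have hκψ : ∀ i x, κ i x = π i (ψ i x) := fun i x => by
    conv_lhs => rw [show x = id x from rfl, hGid]
    exact hπ i fun χ => χ x
  have hψ : Injective ψ := by
    intro i j hij
    by_contra h
    obtain ⟨x, y, hxy⟩ := hne i j h
    simp only [hκψ, EmbeddingLike.apply_eq_iff_eq, hij, not_true_eq_false] at hxy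
  refine ⟨G fun χ => b (extend ψ (fun i => ψ i (a i)) (fun _ => ⟨0, by omega⟩) χ), fun i => ?_⟩
  rw [hπ, hψ.extend_apply, hκψ]

theorem IsExtremal.exists_isRosenbergRel [Fintype A] [Nonempty A] (hρ : IsExtremal ρ) :
    ∃ σ : Σ k : ℕ, Set (Fin (k + 1) → A), IsRosenbergRel σ ∧ Pol ρ ⊆ Pol σ.2 := by
  have hn := hρ.three_le
  obtain ⟨k, rfl⟩ : ∃ k, n = k + 1 := ⟨n - 1, by omega⟩
  obtain ⟨a₀, ha₀⟩ := (Set.ne_univ_iff_exists_notMem _).1 hρ.ne_univ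
  have ha₀i := injective_of_notMem hρ.refl ha₀
  have hcard : k + 1 ≤ Fintype.card A := by simpa using Fintype.card_le_of_injective a₀ ha₀i
  refine ⟨⟨k, ρ⟩, ?_, subset_rfl⟩
  rcases hρ.central_or_homogeneous with ⟨c, hc⟩ | hh
  · refine Or.inr <| Or.inr <| Or.inr <| Or.inr <| Or.inl ⟨lt_of_le_of_ne hcard fun h => ?_,
      hρ.refl, hρ.symm, hρ.ne_univ, c, fun x hx => hc x ⟨0, hx⟩⟩
    have hb : Bijective a₀ :=
      (Fintype.bijective_iff_injective_and_card a₀).2 ⟨ha₀i, by simpa using h⟩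
    exact ha₀ (hc a₀ (hb.2 c))
  · refine Or.inr <| Or.inr <| Or.inr <| Or.inr <| Or.inr ?_
    set E : Set (A → A → Prop) := {r | ∃ κ, IsColoring ρ κ ∧ r = fun x y => κ x = κ y} with hE
    obtain ⟨κ₀, hκ₀⟩ := hρ.exists_isColoring hh
    have hEne : Nonempty E := ⟨⟨_, κ₀, hκ₀, rfl⟩⟩
    obtain ⟨m, ⟨eq⟩⟩ := Finite.exists_equiv_fin E
    obtain _ | r := m
    · exact (eq hEne.some).elim0
    have hex : ∀ i, ∃ κ, IsColoring ρ κ ∧ (eq.symm i).1 = fun x y => κ x = κ y :=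
      fun i => (eq.symm i).2
    choose κ hκ hκE using hex
    refine ⟨r, fun i x y => κ i x = κ i y, hn, hcard, fun i => ⟨fun _ => rfl, Eq.symm, Eq.trans⟩,
      fun i => ?_, fun a => ?_, ?_⟩
    · have : {B : Set A | ∃ a, B = {b | κ i a = κ i b}} =
          Set.range fun j : Fin (k + 1) => {b | j = κ i b} := by
        ext B
        constructor
        · rintro ⟨a, rfl⟩
          exact ⟨κ i a, rfl⟩
        · rintro ⟨j, rfl⟩
          obtain ⟨a, rfl⟩ := (hκ i).1 j
          exact ⟨a, rfl⟩
      rw [this, ← Set.image_univ, Set.ncard_image_of_injective]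
      · simp [Set.ncard_univ]
      · intro j j' h
        obtain ⟨a, rfl⟩ := (hκ i).1 j
        exact ((Set.ext_iff.1 h a).1 rfl).symm
    · obtain ⟨u, hu⟩ := hρ.exists_common_class κ hκ (fun i j hij => by
        by_contra! hcon
        refine hij (eq.symm.injective (Subtype.ext ?_))
        rw [hκE, hκE]
        funext x y
        exact propext (hcon x y)) a
      exact ⟨u, Set.mem_iInter.2 hu⟩
    · ext x
      refine (hρ.mem_iff_coloring hh).trans ⟨fun h i => ?_, fun h κ' hκ' hinj => ?_⟩
      · obtain ⟨j, l, hjl, hne⟩ := not_injective_iff.1 (h (κ i) (hκ i))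
        exact ⟨j, l, hne, hjl⟩
      · obtain ⟨j, l, hne, hjl⟩ := h (eq ⟨_, κ', hκ', rfl⟩)
        refine hne (hinj ?_)
        have := congrFun (congrFun (hκE (eq ⟨_, κ', hκ', rfl⟩)) (x j)) (x l)
        simp only [Equiv.symm_apply_apply] at this
        exact this.mpr hjl

theorem AvoidsRosenberg.reflexiveFull [Fintype A] [Nonempty A] (h : AvoidsRosenberg M) :
    ReflexiveFull M 2 := by
  by_contra hcon
  obtain ⟨n, ρ, hρ, hM⟩ := exists_isExtremal hcon
  obtain ⟨σ, hσ, hσM⟩ := hρ.exists_isRosenbergRel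
  exact h σ hσ (hM.trans hσM)

end Colorings

section Slices

variable {A : Type u} {M : Set (Ops A)} {e : A → A}

/-- The only binary relations invariant under `M` are the trivial ones. -/
def BinaryTrivial (M : Set (Ops A)) : Prop :=
  ∀ r : A → A → Prop, Inv₂ M r → ∀ a b, a ≠ b → r a b → ∀ x y, r x y

theorem BinaryTrivial.exists_unary (h : BinaryTrivial M) (hM : IsClone M) {a b : A} (hab : a ≠ b)
    (c d : A) : ∃ f, Mem₁ M f ∧ f a = c ∧ f b = d := by
  refine h (fun c d => ∃ f, Mem₁ M f ∧ f a = c ∧ f b = d) ?_ a b hab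
    ⟨id, Mem₁.id hM, rfl, rfl⟩ c d
  intro f hf x y hxy
  choose g hg hgx hgy using hxy
  exact ⟨fun z => f.2 fun i => g i z, Mem.comp hM ((mem_iff hM).2 hf) hg, by simp [hgx],
    by simp [hgy]⟩

theorem BinaryTrivial.const [Finite A] [Nontrivial A] (h : BinaryTrivial M) (hM : IsClone M)
    {κ : Type*} (c : A) : Mem M fun _ : κ → A => c := by
  classical
  have := Fintype.ofFinite A
  have key : ∀ S : Finset A, ∃ f, Mem₁ M f ∧ ∀ x ∈ S, f x = c := by
    intro S
    induction S using Finset.induction_on with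
    | empty => exact ⟨id, Mem₁.id hM, by simp⟩
    | insert a S _ ih =>
      obtain ⟨f, hf, hfS⟩ := ih
      by_cases ha : f a = c
      · exact ⟨f, hf, by simpa [ha] using hfS⟩
      · obtain ⟨g, hg, hga, hgc⟩ := h.exists_unary hM ha c c
        exact ⟨g ∘ f, hg.comp₁ hM hf, by simpa [hga] using fun x hx => by rw [hfS x hx, hgc]⟩
  obtain ⟨f, hf, hfc⟩ := key Finset.univ
  intro m _
  simpa [hfc] using hf m fun _ => 0

/-- The idempotent `e` has minimal range among the non-constant unary members of `M`. -/
structure IsMinimalIdempotent (M : Set (Ops A)) (e : A → A) : Prop where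
  mem : Mem₁ M e
  idem : ∀ x, e (e x) = e x
  nonconst : ∃ x y, e x ≠ e y
  le : ∀ h, Mem₁ M h → (∃ x y, h x ≠ h y) → (Set.range e).ncard ≤ (Set.range h).ncard

theorem BinaryTrivial.exists_isMinimalIdempotent [Finite A] [Nontrivial A] (h : BinaryTrivial M)
    (hM : IsClone M) : ∃ e, IsMinimalIdempotent M e := by
  obtain ⟨a, b, hab⟩ := exists_pair_ne A
  obtain ⟨f, ⟨hf, x, y, hxy⟩, hmin⟩ := exists_minimalFor_of_wellFoundedLT
    (fun h : A → A => Mem₁ M h ∧ ∃ x y, h x ≠ h y)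
    (fun h => (Set.range h).ncard) ⟨id, Mem₁.id hM, a, b, hab⟩
  have hmin' : ∀ h : A → A, Mem₁ M h → (∃ x y, h x ≠ h y) →
      (Set.range f).ncard ≤ (Set.range h).ncard := fun h h1 h2 =>
    (le_total _ _).elim id fun hle => hmin ⟨h1, h2⟩ hle
  obtain ⟨g, hg, hgx, hgy⟩ := h.exists_unary hM hxy x y
  set k := f ∘ g with hk
  have hkM : Mem₁ M k := hf.comp₁ hM hg
  have hkx : k (f x) = f x := congrArg f hgx
  have hky : k (f y) = f y := congrArg f hgy
  have hrange : Set.range (k ∘ f) = Set.range f := by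
    refine Set.eq_of_subset_of_ncard_le ?_ (hmin' _ (hkM.comp₁ hM hf)
      ⟨x, y, by simpa only [comp_apply, hkx, hky] using hxy⟩) (Set.toFinite _)
    rintro _ ⟨x, rfl⟩
    exact ⟨_, rfl⟩
  have hrk : Set.range k = Set.range f := by
    refine Set.Subset.antisymm ?_ (hrange ▸ Set.range_comp_subset_range f k)
    rintro _ ⟨x, rfl⟩
    exact ⟨_, rfl⟩
  obtain ⟨m, hm, hm'⟩ := exists_iterate_idempotent (k := k) (by
    rw [hrk]
    intro z hz
    obtain ⟨w, hw⟩ := hrange.symm ▸ hz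
    exact ⟨f w, ⟨w, rfl⟩, hw⟩)
  refine ⟨k^[m], hkM.iterate hM m, fun x => hm _ (hm' x), ⟨f x, f y, ?_⟩, fun h h1 h2 => ?_⟩
  · rwa [hm _ (hrk ▸ ⟨x, rfl⟩), hm _ (hrk ▸ ⟨y, rfl⟩)]
  · refine le_trans (Set.ncard_le_ncard ?_ (Set.toFinite _)) (hmin' h h1 h2)
    rintro _ ⟨z, rfl⟩
    exact hrk ▸ hm' z

theorem IsMinimalIdempotent.surjective [Finite A] (he : IsMinimalIdempotent M e) {h : A → A}
    (hh : Mem₁ M h) (heh : ∀ x, e (h x) = h x) (hne : ∃ x y, h x ≠ h y) {y : A} (hy : e y = y) :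
    ∃ x, h x = y := by
  have : Set.range h = Set.range e := by
    refine Set.eq_of_subset_of_ncard_le ?_ (he.le h hh hne) (Set.toFinite _)
    rintro _ ⟨x, rfl⟩
    exact ⟨_, heh x⟩
  exact (this ▸ ⟨y, hy⟩ : y ∈ Set.range h)

theorem IsMinimalIdempotent.exists_perm [Finite A] (hM : IsClone M) (he : IsMinimalIdempotent M e)
    {h : A → A} (hh : Mem₁ M h) (heh : ∀ x, e (h x) = h x) (hne : ∃ x y, h (e x) ≠ h (e y)) :
    ∃ π : Equiv.Perm {x // e x = x}, ∀ x, h x.1 = π x := by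
  let h' : {x // e x = x} → {x // e x = x} := fun x => ⟨h x.1, heh x⟩
  have hs : Surjective h' := by
    rintro ⟨y, hy⟩
    obtain ⟨x, hx⟩ := he.surjective (Mem₁.comp₁ hM hh he.mem) (fun x => heh _) hne hy
    exact ⟨⟨e x, he.idem x⟩, Subtype.ext hx⟩
  exact ⟨Equiv.ofBijective h' (Finite.surjective_iff_bijective.1 hs), fun x => rfl⟩

theorem IsMinimalIdempotent.separates (he : IsMinimalIdempotent M e) (h : BinaryTrivial M)
    (hM : IsClone M) {x y : A} (hxy : ∀ f, Mem₁ M f → e (f x) = e (f y)) : x = y := by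
  by_contra hne
  obtain ⟨a, b, hab⟩ := he.nonconst
  obtain ⟨f, hf, hfx, hfy⟩ := h.exists_unary hM hne a b
  exact hab (by rw [← hfx, ← hfy, hxy f hf])

theorem Mem₂.iterate (hM : IsClone M) {g : A → A → A} (hg : Mem₂ M g) (m : ℕ) :
    Mem₂ M fun x y => (fun z => g z y)^[m] x := by
  induction m with
  | zero => exact Mem.proj hM 0
  | succ m ih =>
    simp only [iterate_succ_apply']
    exact Mem₂.comp hM hg ih (Mem.proj hM 1)

/-- If all functions from `ι → A` to a two-element set are obtained from an algebra of sets that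
separates points, they all belong to `M`. -/
theorem mem_of_boolean [Finite A] {ι : Type*} [Finite ι] (P : Set (ι → A) → Prop)
    (hcompl : ∀ S, P S → P Sᶜ) (hinter : ∀ S T, P S → P T → P (S ∩ T))
    (huniv : P Set.univ) (hsep : ∀ x y : ι → A, x ≠ y → ∃ S, P S ∧ x ∈ S ∧ y ∉ S)
    (S : Set (ι → A)) : P S := by
  classical
  have hbig : ∀ (T : Finset (ι → A)) (f : (ι → A) → Set (ι → A)), (∀ x, P (f x)) →
      P (⋂ x ∈ T, f x) := by
    intro T f hf
    induction T using Finset.induction_on with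
    | empty => simpa using huniv
    | insert x T _ ih =>
      rw [Finset.set_biInter_insert]
      exact hinter _ _ (hf x) ih
  have := Fintype.ofFinite (ι → A)
  have hsing : ∀ x, P {x} := by
    intro x
    have : ∀ y, ∃ S, P S ∧ x ∈ S ∧ (y ≠ x → y ∉ S) := by
      intro y
      by_cases h : x = y
      · exact ⟨Set.univ, huniv, trivial, fun h' => absurd h.symm h'⟩
      · obtain ⟨S, h1, h2, h3⟩ := hsep x y h
        exact ⟨S, h1, h2, fun _ => h3⟩
    choose f hf hfx hfy using this
    convert hbig Finset.univ f hf using 1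
    ext y
    simp only [Set.mem_singleton_iff, Finset.mem_univ, Set.iInter_true, Set.mem_iInter]
    refine ⟨fun h z => h ▸ hfx z, fun h => ?_⟩
    by_contra hne
    exact hfy y hne (h y)
  have : S = (⋂ x ∈ S.toFinset, {x}ᶜ)ᶜ := by
    ext y
    simp
  rw [this]
  exact hcompl _ (hbig _ _ fun x => hcompl _ (hsing x))

end Slices

section SliceProperty

variable {A : Type u} {M : Set (Ops A)} {e : A → A}

/-- A clone containing a binary operation that is conjunction-with-negation on the two-element
range of a unary member contains all operations. -/
theorem eq_univ_of_boolean [Finite A] [Nontrivial A] (hM : IsClone M) (hb : BinaryTrivial M)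
    (hT : ReflexiveFull M 2) {P : A → A → A} (hP : Mem₂ M P) {k l : A} (hkl : k ≠ l)
    (hkk : P k k = k) (hlk : P l k = l) (hPl : ∀ x, P x l = k) (he : Mem₁ M e)
    (hek : e k = k) (hel : e l = l) (hN : ∀ x, e x = k ∨ e x = l) : M = Set.univ := by
  classical
  have hind : ∀ (n : ℕ) (S : Set (Fin (n + 1) → A)), Mem M fun x => if x ∈ S then l else k := by
    intro n
    have hcompl : ∀ S : Set (Fin (n + 1) → A), Mem M (fun x => if x ∈ S then l else k) →
        Mem M fun x => if x ∈ Sᶜ then l else k := by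
      intro S hS
      convert Mem₂.comp hM hP (hb.const hM l) hS using 1
      funext x
      by_cases hx : x ∈ S <;> simp [hx, hlk, hPl]
    refine mem_of_boolean (fun S => Mem M fun x => if x ∈ S then l else k)
      (fun S hS => by convert hcompl S hS) ?_ ?_ ?_
    · intro S T hS hT
      convert Mem₂.comp hM hP hS (hcompl T hT) using 1
      funext x
      by_cases hx : x ∈ S <;> by_cases hy : x ∈ T <;> simp [hx, hy, hlk, hPl, hkk]
    · simpa using hb.const hM l
    · intro x y hxy
      obtain ⟨i, hi⟩ := Function.ne_iff.1 hxy
      obtain ⟨f, hf, hfx, hfy⟩ := hb.exists_unary hM hi l k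
      refine ⟨{z | e (f (z i)) = l}, ?_, by simp [hfx, hel], by simp [hfy, hek, hkl]⟩
      convert Mem₁.comp hM he (Mem₁.comp hM hf (Mem.proj hM i)) using 1
      funext z
      rcases hN (f (z i)) with h | h <;> simp [h, hkl]
  rw [Set.eq_univ_iff_forall]
  rintro ⟨n, F⟩
  rw [← mem_iff hM]
  refine hT.mem_of_factor (Y := {F : (Fin (n + 1) → A) → A | Mem M F}) ?_ ?_ F
  · intro f hf t ht
    exact Mem.comp hM ((mem_iff hM).2 hf) ht
  · intro c χ
    obtain ⟨f, hf, hfk, hfl⟩ := hb.exists_unary hM hkl (c 0) (c 1)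
    have := Mem₁.comp hM hf (hind n {x | χ x = 1})
    have hcχ : c ∘ χ = fun x => f (if x ∈ {x | χ x = 1} then l else k) := by
      funext x
      rcases Fin.exists_fin_two.1 ⟨χ x, rfl⟩ with h | h <;> simp [h, hfk, hfl]
    rw [hcχ, Set.mem_ofPred_eq]
    convert this

theorem IsMinimalIdempotent.eq_univ_of_slice [Finite A] [Nontrivial A]
    (he : IsMinimalIdempotent M e)
    (hM : IsClone M) (hb : BinaryTrivial M) (hT : ReflexiveFull M 2) {g : A → A → A}
    (hg : Mem₂ M g) (heg : ∀ x y, e (g x y) = g x y) {c d : A} (hc : ∀ x x', g x c = g x' c)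
    (hd : ∃ x x', g x d ≠ g x' d) : M = Set.univ := by
  have hslice : ∀ {P : A → A → A}, Mem₂ M P → ∀ v, Mem₁ M fun x => P x v := fun hP v =>
    Mem₂.comp hM hP (Mem₁.id hM) (hb.const hM v)
  have hslice' : ∀ {P : A → A → A}, Mem₂ M P → ∀ v, Mem₁ M (P v) := fun hP v =>
    Mem₂.comp hM hP (hb.const hM v) (Mem₁.id hM)
  obtain ⟨k, hk⟩ : ∃ k, ∀ x, g x c = k := ⟨g c c, fun x => hc x c⟩
  have hkN : e k = k := by rw [← hk c, heg]
  obtain ⟨l, hlN, hkl⟩ : ∃ l, e l = l ∧ k ≠ l := by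
    obtain ⟨x, y, hxy⟩ := he.nonconst
    by_cases h : k = e x
    · exact ⟨e y, he.idem y, h ▸ hxy⟩
    · exact ⟨e x, he.idem x, h⟩
  obtain ⟨x₁, hx₁⟩ := he.surjective (hslice hg d) (fun x => heg x d) hd hkN
  obtain ⟨x₂, hx₂⟩ := he.surjective (hslice hg d) (fun x => heg x d) hd hlN
  obtain ⟨f₁, hf₁, hf₁k, hf₁l⟩ := hb.exists_unary hM hkl x₁ x₂
  obtain ⟨f₂, hf₂, hf₂k, hf₂l⟩ := hb.exists_unary hM hkl d c
  let P : A → A → A := fun x v => g (f₁ x) (f₂ v)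
  have hP : Mem₂ M P := Mem₂.comp hM hg (Mem₁.comp hM hf₁ (Mem.proj hM 0))
    (Mem₁.comp hM hf₂ (Mem.proj hM 1))
  have heP : ∀ x y, e (P x y) = P x y := fun x y => heg _ _
  have hPl : ∀ x, P x l = k := fun x => by simp [P, hf₂l, hk]
  have hPkk : P k k = k := by simp [P, hf₁k, hf₂k, hx₁]
  have hPlk : P l k = l := by simp [P, hf₁l, hf₂k, hx₂]
  let m := Nat.card (Equiv.Perm {x // e x = x})
  have hm : 0 < m := Nat.card_pos
  let H : A → A → A := fun x v => (fun z => P z v)^[m] x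
  have hH : Mem₂ M H := Mem₂.iterate hM hP m
  have heH : ∀ x y, e (H x y) = H x y := by
    intro x y
    obtain ⟨n, hn⟩ : ∃ n, m = n + 1 := ⟨m - 1, by omega⟩
    simp only [H, hn, iterate_succ_apply']
    exact heP _ _
  have hHid : ∀ v, (∃ x y, P (e x) v ≠ P (e y) v) → ∀ x, e x = x → H x v = x := by
    intro v hv x hx
    obtain ⟨π, hπ⟩ := he.exists_perm hM (hslice hP v) (fun x => heP x v) hv
    have : ∀ n, ∀ x : {x // e x = x}, (fun z => P z v)^[n] x.1 = ((π ^ n) x).1 := by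
      intro n
      induction n with
      | zero => intro x; rfl
      | succ n ih =>
        intro x
        rw [iterate_succ_apply, hπ, ih, pow_succ]
        rfl
    have := this m ⟨x, hx⟩
    simpa [H, m, pow_card_eq_one'] using this
  have hHc : ∀ v, (∀ x y, P (e x) v = P (e y) v) → ∀ x y, e x = x → e y = y → H x v = H y v := by
    intro v hv x y hx hy
    obtain ⟨n, hn⟩ : ∃ n, m = n + 1 := ⟨m - 1, by omega⟩
    simp only [H, hn, iterate_succ_apply]
    rw [← hx, hv x y, hy]
  have hHk : ∀ x, e x = x → H x k = x :=
    hHid k ⟨k, l, by rwa [hkN, hlN, hPkk, hPlk]⟩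
  have hHl : ∀ x, H x l = k := by
    intro x
    obtain ⟨n, hn⟩ : ∃ n, m = n + 1 := ⟨m - 1, by omega⟩
    simp only [H, hn, iterate_succ_apply', hPl]
  have hrow : ∀ u, e u = u → u ≠ k → ∀ v w, e v = v → e w = w → H u v = H u w → v = w := by
    intro u hu huk v w hv hw hvw
    obtain ⟨π, hπ⟩ := he.exists_perm hM (hslice' hH u) (heH u)
      ⟨k, l, by rwa [hkN, hlN, hHk u hu, hHl]⟩
    have := hπ ⟨v, hv⟩
    have h' := hπ ⟨w, hw⟩
    simp only at this h'
    rw [this, h'] at hvw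
    exact congrArg Subtype.val (π.injective (Subtype.ext hvw))
  have hN : ∀ u, e u = u → u = k ∨ u = l := by
    intro u hu
    by_contra! h
    obtain ⟨v, hvN, hv⟩ : ∃ v, e v = v ∧ H l v = u := by
      obtain ⟨v, hv⟩ := he.surjective ((hslice' hH l).comp₁ hM he.mem) (fun x => heH l _)
        ⟨k, l, by simpa [hkN, hlN, hHk l hlN, hHl] using hkl.symm⟩ hu
      exact ⟨e v, he.idem v, hv⟩
    have hvk : v ≠ k := by
      rintro rfl
      exact h.2 (by rw [← hv, hHk l hlN])
    refine hvk (hrow u hu h.1 v k hvN hkN ?_)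
    rw [hHk u hu]
    by_cases hcol : ∃ x y, P (e x) v ≠ P (e y) v
    · exact hHid v hcol u hu
    · push Not at hcol
      rw [hHc v hcol u l hu hlN, hv]
  exact eq_univ_of_boolean hM hb hT hP hkl hPkk hPlk hPl he.mem hkN hlN
    fun x => hN _ (he.idem x)

end SliceProperty

section Affine

variable {A : Type u} {M : Set (Ops A)} {e : A → A}

/-- For binary members of `M` with values in the range of `e`, being constant in the first
argument does not depend on the choice of the second one. -/
def SliceProperty (M : Set (Ops A)) (e : A → A) : Prop :=
  ∀ g : A → A → A, Mem₂ M g → (∀ x y, e (g x y) = g x y) →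
    ∀ c, (∀ x x', g x c = g x' c) → ∀ d x x', g x d = g x' d

theorem SliceProperty.inessential [Finite A] [Nontrivial A] (hS : SliceProperty M e)
    (hM : IsClone M) (hb : BinaryTrivial M) {ι : Type*} [Finite ι] [DecidableEq ι]
    {G : (ι → A) → A} (hG : Mem M G) (heG : ∀ x, e (G x) = G x) {i : ι} {c : ι → A}
    (hc : ∀ x x', G (update c i x) = G (update c i x')) (c' : ι → A) (x x' : A) :
    G (update c' i x) = G (update c' i x') := by
  have := Fintype.ofFinite ι
  have : Nonempty ι := ⟨i⟩
  have key : ∀ T : Finset ι, ∀ x x', G (update (T.piecewise c' c) i x) =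
      G (update (T.piecewise c' c) i x') := by
    intro T
    induction T using Finset.induction_on with
    | empty => simpa using hc
    | insert j T _ ih =>
      rw [Finset.piecewise_insert]
      set d := T.piecewise c' c
      by_cases hji : j = i
      · subst hji
        simpa using ih
      · refine hS (fun x y => G (update (update d j y) i x)) ?_ (fun x y => heG _) (d j)
          (by simpa using ih) (c' j)
        refine Mem.comp hM hG (g := fun i' (x : Fin 2 → A) => update (update d j (x 1)) i (x 0) i')
          fun i' => ?_
        by_cases h₁ : i' = i
        · subst h₁
          simpa using Mem.proj hM (0 : Fin 2)
        by_cases h₂ : i' = j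
        · subst h₂
          simpa [h₁] using Mem.proj hM (1 : Fin 2)
        · simpa [h₁, h₂] using hb.const hM (d i')
  simpa using key Finset.univ x x'

theorem SliceProperty.apply_eq [Finite A] [Nontrivial A] (hS : SliceProperty M e)
    (hM : IsClone M) (hb : BinaryTrivial M) {ι : Type*} [Finite ι] [DecidableEq ι]
    {G : (ι → A) → A} (hG : Mem M G) (heG : ∀ x, e (G x) = G x) {v v' : ι → A}
    (h : ∀ i, v i ≠ v' i → ∃ c, ∀ x x', G (update c i x) = G (update c i x')) : G v = G v' := by
  have := Fintype.ofFinite ι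
  have key : ∀ T : Finset ι, G (T.piecewise v' v) = G v := by
    intro T
    induction T using Finset.induction_on with
    | empty => simp
    | insert i T hi ih =>
      rw [Finset.piecewise_insert, ← ih]
      have hd : T.piecewise v' v i = v i := by simp [hi]
      conv_rhs => rw [← update_eq_self i (T.piecewise v' v), hd]
      by_cases hv : v i = v' i
      · rw [hv]
      · obtain ⟨c, hc⟩ := h i hv
        exact hS.inessential hM hb hG heG hc _ _ _
  simpa using (key Finset.univ).symm

/-- The operation `p` is a medial Maltsev operation on the range of `e` that commutes with all
members of `M` with values in this range. -/
structure IsAffineOn (M : Set (Ops A)) (e : A → A) (p : A → A → A → A) : Prop where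
  range : ∀ x y z, e (p x y z) = p x y z
  right : ∀ x y, e x = x → e y = y → p x y y = x
  left : ∀ x y, e x = x → e y = y → p x x y = y
  medial : ∀ x y z : Fin 3 → A, (∀ i, e (x i) = x i) → (∀ i, e (y i) = y i) →
    (∀ i, e (z i) = z i) → p (p (x 0) (y 0) (z 0)) (p (x 1) (y 1) (z 1)) (p (x 2) (y 2) (z 2)) =
      p (p (x 0) (x 1) (x 2)) (p (y 0) (y 1) (y 2)) (p (z 0) (z 1) (z 2))
  comm : ∀ (n : ℕ) (G : (Fin (n + 1) → A) → A), Mem M G → (∀ x, e (G x) = G x) →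
    ∀ x y z : Fin (n + 1) → A, (∀ i, e (x i) = x i) → (∀ i, e (y i) = y i) →
      (∀ i, e (z i) = z i) → G (fun i => p (x i) (y i) (z i)) = p (G x) (G y) (G z)

/-- Every member of `M` with values in the range of `e` depends on at most one variable. -/
def EssentiallyUnaryInto (M : Set (Ops A)) (e : A → A) : Prop :=
  ∀ (n : ℕ) (G : (Fin (n + 1) → A) → A), Mem M G → (∀ x, e (G x) = G x) →
    ∃ i, ∀ x y, x i = y i → G x = G y

theorem EssentiallyUnaryInto.ncard_le [Finite A] (h : EssentiallyUnaryInto M e) (hM : IsClone M)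
    (hT : ReflexiveFull M 2) (he : Mem₁ M e) (hid : ∀ x, e (e x) = e x) :
    Nat.card {x // e x = x} ≤ 2 := by
  by_contra! hk
  have eq := Finite.equivFin {x // e x = x}
  generalize Nat.card {x // e x = x} = k at eq hk
  have := hT.eq_univ (σ := {x : Fin k → A | ∀ f, Mem₁ M f → ¬ Injective fun i => e (f (x i))}) hk
    ?_ ?_
  · have hmem : (fun i => (eq.symm i).1) ∈
      {x : Fin k → A | ∀ f, Mem₁ M f → ¬ Injective fun i => e (f (x i))} := this ▸ Set.mem_univ _
    refine hmem id (Mem₁.id hM) fun i j hij => ?_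
    simp only [id, (eq.symm _).2] at hij
    exact eq.symm.injective (Subtype.ext hij)
  · intro g hg t ht f hf hinj
    have hgM := (mem_iff hM).2 hg
    obtain ⟨i, hi⟩ := h g.1 (fun x => e (f (g.2 x))) (Mem₁.comp hM he (Mem₁.comp hM hf hgM))
      fun x => hid _
    refine ht i (fun a => f (g.2 fun _ => a))
      (Mem₁.comp hM hf (Mem.comp hM hgM fun _ => Mem₁.id hM)) fun j j' hjj => hinj ?_
    simp only at hjj ⊢
    rw [hi (fun i => t i j) (fun _ => t i j) rfl, hjj]
    exact hi _ _ rfl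
  · rintro x ⟨i, j, hij, hx⟩ f hf hinj
    exact hij (hinj (by simp [hx]))

theorem EssentiallyUnaryInto.exists_isAffineOn [Finite A] (h : EssentiallyUnaryInto M e)
    (hM : IsClone M) (hT : ReflexiveFull M 2) (he : IsMinimalIdempotent M e) :
    ∃ p, IsAffineOn M e p := by
  classical
  have hcard := h.ncard_le hM hT he.mem he.idem
  obtain ⟨a₀, b₀, hab⟩ := he.nonconst
  obtain ⟨a, b, ha, hb, hab⟩ : ∃ a b, e a = a ∧ e b = b ∧ a ≠ b :=
    ⟨e a₀, e b₀, he.idem _, he.idem _, hab⟩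
  have hN : ∀ x, e x = x → x = a ∨ x = b := by
    intro x hx
    by_contra! hne
    have : Injective ![(⟨a, ha⟩ : {x // e x = x}), ⟨b, hb⟩, ⟨x, hx⟩] := by
      intro i j
      fin_cases i <;> fin_cases j <;> simp [hab, hab.symm, hne.1, hne.2, hne.1.symm, hne.2.symm]
    have := Nat.card_le_card_of_injective _ this
    simp at this
    omega
  let φ : A → ZMod 2 := fun x => if x = a then 0 else 1
  let ψ : ZMod 2 → A := fun s => if s = 0 then a else b
  have hφψ : ∀ s, φ (ψ s) = s := by
    intro s
    have h01 : ∀ s : ZMod 2, s ≠ 0 → s = 1 := by decide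
    by_cases hs : s = 0
    · simp [φ, ψ, hs]
    · simp [φ, ψ, h01 s hs, hab.symm]
  have hψφ : ∀ x, e x = x → ψ (φ x) = x := by
    intro x hx
    rcases hN x hx with rfl | rfl <;> simp [φ, ψ, hab.symm]
  have heψ : ∀ s, e (ψ s) = ψ s := by
    intro s
    simp only [ψ]
    split_ifs <;> assumption
  have hxx : ∀ s : ZMod 2, s + s = 0 := by decide
  refine ⟨fun x y z => ψ (φ x + φ y + φ z), fun x y z => heψ _, fun x y hx hy => ?_,
    fun x y hx hy => ?_, fun x y z _ _ _ => ?_, fun n G hG heG x y z hx hy hz => ?_⟩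
  · rw [add_assoc, hxx, add_zero, hψφ x hx]
  · rw [hxx, zero_add, hψφ y hy]
  · simp only [hφψ]
    congr 1
    ring
  · obtain ⟨i, hi⟩ := h n G hG heG
    have hu : ∀ v : Fin (n + 1) → A, G v = G fun _ => v i := fun v => hi _ _ rfl
    have hlin : ∀ (u : ZMod 2 → ZMod 2) (r s t : ZMod 2),
      u (r + s + t) = u r + u s + u t := by decide
    have key := hlin (fun s => φ (G fun _ => ψ s)) (φ (x i)) (φ (y i)) (φ (z i))
    simp only [hψφ _ (hx i), hψφ _ (hy i), hψφ _ (hz i), ← hu] at key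
    rw [← key, hψφ _ (heG _), hu]

end Affine

section Quasigroup

variable {A : Type u} {M : Set (Ops A)} {e : A → A}

theorem exists_binary_of_not_essentiallyUnaryInto [Finite A] [Nontrivial A]
    (hM : IsClone M) (hb : BinaryTrivial M) (hS : SliceProperty M e)
    (h : ¬ EssentiallyUnaryInto M e) : ∃ g, Mem₂ M g ∧ (∀ x y, e (g x y) = g x y) ∧
      (∀ y, ∃ x x', g x y ≠ g x' y) ∧ ∀ x, ∃ y y', g x y ≠ g x y' := by
  classical
  simp only [EssentiallyUnaryInto, not_forall, not_exists] at h
  obtain ⟨n, G, hG, heG, h⟩ := h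
  obtain ⟨x₀, y₀, _, hne⟩ := h 0
  have hess : ∀ x y, G x ≠ G y → ∃ i, x i ≠ y i ∧
      ∀ c, ∃ a a', G (update c i a) ≠ G (update c i a') := by
    intro x y hxy
    by_contra! hcon
    exact hxy (hS.apply_eq hM hb hG heG hcon)
  obtain ⟨i, -, hi⟩ := hess x₀ y₀ hne
  obtain ⟨x₁, y₁, hxy, hne₁⟩ := h i
  obtain ⟨j, hj, hj'⟩ := hess x₁ y₁ hne₁
  have hij : j ≠ i := by
    rintro rfl
    exact hj hxy
  refine ⟨fun x y => G (update (update x₀ j y) i x), ?_, fun x y => heG _, fun y => hi _,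
    fun x => ?_⟩
  · refine Mem.comp hM hG (g := fun i' (x : Fin 2 → A) => update (update x₀ j (x 1)) i (x 0) i')
      fun i' => ?_
    by_cases h₁ : i' = i
    · subst h₁
      simpa using Mem.proj hM (0 : Fin 2)
    by_cases h₂ : i' = j
    · subst h₂
      simpa [h₁] using Mem.proj hM (1 : Fin 2)
    · simpa [h₁, h₂] using hb.const hM (x₀ i')
  · simpa only [update_comm hij] using hj' (update x₀ i x)

theorem SliceProperty.nonconst (hS : SliceProperty M e) {g : A → A → A} (hg : Mem₂ M g)
    (heg : ∀ x y, e (g x y) = g x y) {y : A} (h : ∃ x x', g x y ≠ g x' y) (y' : A) :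
    ∃ x x', g x y' ≠ g x' y' := by
  by_contra! hcon
  obtain ⟨x, x', hx⟩ := h
  exact hx (hS g hg heg y' hcon y x x')

theorem Mem₂.flip (hM : IsClone M) {g : A → A → A} (hg : Mem₂ M g) : Mem₂ M fun x y => g y x :=
  Mem₂.comp hM hg (Mem.proj hM 1) (Mem.proj hM 0)

theorem exists_binary_on_range [Finite A] [Nontrivial A]
    (hM : IsClone M) (hb : BinaryTrivial M) (hS : SliceProperty M e)
    (he : IsMinimalIdempotent M e) (h : ¬ EssentiallyUnaryInto M e) :
    ∃ g, Mem₂ M g ∧ (∀ x y, e (g x y) = g x y) ∧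
      (∀ y, ∃ x x', g (e x) y ≠ g (e x') y) ∧ ∀ x, ∃ y y', g x (e y) ≠ g x (e y') := by
  obtain ⟨g, hg, heg, hgl, hgr⟩ := exists_binary_of_not_essentiallyUnaryInto hM hb hS h
  obtain ⟨a, b, hab⟩ := he.nonconst
  obtain ⟨x, x', hx⟩ := hgl a
  obtain ⟨f₁, hf₁, hf₁a, hf₁b⟩ := hb.exists_unary hM hab x x'
  obtain ⟨y, y', hy⟩ := hgr (f₁ a)
  obtain ⟨f₂, hf₂, hf₂a, hf₂b⟩ := hb.exists_unary hM hab y y'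
  have hg₁ : Mem₂ M fun x y => g (f₁ (e x)) y := Mem₂.comp hM hg
    (Mem₁.comp hM hf₁ (Mem₁.comp hM he.mem (Mem.proj hM 0))) (Mem.proj hM 1)
  have hg₂ : Mem₂ M fun y x => g (f₁ x) (f₂ (e y)) := Mem₂.comp hM hg
    (Mem₁.comp hM hf₁ (Mem.proj hM 1)) (Mem₁.comp hM hf₂ (Mem₁.comp hM he.mem (Mem.proj hM 0)))
  refine ⟨fun x y => g (f₁ x) (f₂ y), Mem₂.comp hM hg
    (Mem₁.comp hM hf₁ (Mem.proj hM 0)) (Mem₁.comp hM hf₂ (Mem.proj hM 1)), fun x y => heg _ _,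
    fun y => ?_, fun x => ?_⟩
  · refine hS.nonconst hg₁ (fun x y => heg _ _) (y := a) ⟨e a, e b, ?_⟩ (f₂ y)
    simpa [he.idem, hf₁a, hf₁b] using hx
  · refine hS.nonconst hg₂ (fun x y => heg _ _) (y := a) ⟨e a, e b, ?_⟩ x
    simpa [he.idem, hf₂a, hf₂b] using hy

theorem IsMinimalIdempotent.iterate_inverse [Finite A] (he : IsMinimalIdempotent M e)
    (hM : IsClone M) {h : A → A} (hh : Mem₁ M h) (heh : ∀ x, e (h x) = h x)
    (hne : ∃ x y, h (e x) ≠ h (e y)) {x : A} (hx : e x = x) :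
    e (h^[Nat.card (Equiv.Perm {x // e x = x}) - 1] x) =
      h^[Nat.card (Equiv.Perm {x // e x = x}) - 1] x ∧
    h (h^[Nat.card (Equiv.Perm {x // e x = x}) - 1] x) = x ∧
    h^[Nat.card (Equiv.Perm {x // e x = x}) - 1] (h x) = x := by
  obtain ⟨π, hπ⟩ := he.exists_perm hM hh heh hne
  have hit : ∀ n, ∀ x : {x // e x = x}, h^[n] x.1 = ((π ^ n) x).1 := by
    intro n
    induction n with
    | zero => intro x; rfl
    | succ n ih =>
      intro x
      rw [iterate_succ_apply, hπ, ih, pow_succ]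
      rfl
  obtain ⟨m, hm⟩ : ∃ m, Nat.card (Equiv.Perm {x // e x = x}) = m + 1 :=
    ⟨_, (Nat.succ_pred_eq_of_pos Nat.card_pos).symm⟩
  have hcyc : h^[m + 1] x = x := by
    rw [← hm, hit _ ⟨x, hx⟩, pow_card_eq_one']
    rfl
  rw [hm, Nat.add_sub_cancel]
  refine ⟨?_, ?_, ?_⟩
  · rw [hit _ ⟨x, hx⟩]
    exact ((π ^ m) _).2
  · rwa [← iterate_succ_apply' h]
  · rwa [← iterate_succ_apply h]

/-- A Maltsev operation of `M` on the range of `e`, in which moreover `p a b c = c` only for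
`a = b`. -/
theorem exists_maltsev [Finite A] [Nontrivial A]
    (hM : IsClone M) (hb : BinaryTrivial M) (hS : SliceProperty M e)
    (he : IsMinimalIdempotent M e) (h : ¬ EssentiallyUnaryInto M e) :
    ∃ p, Mem₃ M p ∧ (∀ x y z, e (p x y z) = p x y z) ∧
      (∀ x y, p x y y = e x) ∧ (∀ x y, p x x y = e y) ∧
      ∀ x y z, p x y z = e z → e x = e y := by
  obtain ⟨g, hg, heg, hgl, hgr⟩ := exists_binary_on_range hM hb hS he h
  set m := Nat.card (Equiv.Perm {x // e x = x}) - 1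
  let D : A → A → A := fun x y => (fun z => g z y)^[m] x
  let L : A → A → A := fun y z => (g y)^[m] z
  have hD : Mem₂ M D := Mem₂.iterate hM hg m
  have hL : Mem₂ M L := (Mem₂.iterate hM (hg.flip hM) m).flip hM
  have hDp : ∀ x y, e x = x → e (D x y) = D x y ∧ g (D x y) y = x ∧ D (g x y) y = x :=
    fun x y hx => he.iterate_inverse hM (h := fun z => g z y)
      (Mem₂.comp hM hg (Mem₁.id hM) (hb.const hM y)) (fun x => heg x y) (hgl y) hx
  have hLp : ∀ y z, e z = z → e (L y z) = L y z ∧ g y (L y z) = z ∧ L y (g y z) = z :=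
    fun y z hz => he.iterate_inverse hM (h := g y)
      (Mem₂.comp hM hg (hb.const hM y) (Mem₁.id hM)) (fun x => heg y x) (hgr y) hz
  have hem : ∀ i : Fin 3, Mem M fun x : Fin 3 → A => e (x i) := fun i =>
    Mem₁.comp hM he.mem (Mem.proj hM i)
  have hDL : ∀ x, e x = x → D x (L x x) = x := by
    intro x hx
    have h₁ := (hDp x (L x x) hx).2.2
    rwa [(hLp x x hx).2.1] at h₁
  refine ⟨fun x y z => g (D (e x) (L (e y) (e y))) (L (e y) (e z)),
    Mem₂.comp hM hg (Mem₂.comp hM hD (hem 0) (Mem₂.comp hM hL (hem 1) (hem 1)))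
      (Mem₂.comp hM hL (hem 1) (hem 2)), fun x y z => heg _ _, fun x y => ?_, fun x y => ?_,
      fun x y z hxyz => ?_⟩
  · exact (hDp _ _ (he.idem x)).2.1
  · simp only [hDL _ (he.idem x)]
    exact (hLp _ _ (he.idem y)).2.1
  · beta_reduce at hxyz
    have h₁ : g (D (e x) (L (e y) (e y))) (L (e y) (e z)) = g (e y) (L (e y) (e z)) := by
      rw [hxyz, (hLp _ _ (he.idem z)).2.1]
    have h₂ : D (e x) (L (e y) (e y)) = e y := by
      have h₃ := congrArg (fun w => D w (L (e y) (e z))) h₁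
      simpa only [(hDp _ _ (hDp _ _ (he.idem x)).1).2.2, (hDp _ _ (he.idem y)).2.2] using h₃
    have h₄ := (hDp (e x) (L (e y) (e y)) (he.idem x)).2.1
    rw [h₂, (hLp _ _ (he.idem y)).2.1] at h₄
    exact h₄.symm

theorem exists_isAffineOn_of_not_essentiallyUnaryInto [Finite A] [Nontrivial A]
    (hM : IsClone M) (hb : BinaryTrivial M) (hS : SliceProperty M e)
    (he : IsMinimalIdempotent M e) (h : ¬ EssentiallyUnaryInto M e) :
    ∃ p, IsAffineOn M e p := by
  classical
  obtain ⟨p, hp, hep, hpr, hpl, hpe⟩ := exists_maltsev hM hb hS he h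
  have comm : ∀ (n : ℕ) (G : (Fin (n + 1) → A) → A), Mem M G → (∀ x, e (G x) = G x) →
    ∀ x y z : Fin (n + 1) → A, (∀ i, e (x i) = x i) → (∀ i, e (y i) = y i) →
      (∀ i, e (z i) = z i) → G (fun i => p (x i) (y i) (z i)) = p (G x) (G y) (G z) := by
    intro n G hG heG x y z hx hy hz
    let n₀ := x 0
    let F : (Fin 3 × Fin (n + 1) → A) → A := fun w =>
      p (p (G fun i => e (w (0, i))) (G fun i => e (w (1, i))) (G fun i => e (w (2, i))))
        (G fun i => p (w (0, i)) (w (1, i)) (w (2, i))) n₀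
    have hGe : ∀ j : Fin 3, Mem M fun w : Fin 3 × Fin (n + 1) → A => G fun i => e (w (j, i)) :=
      fun j => Mem.comp hM hG fun i => Mem₁.comp hM he.mem (Mem.proj hM _)
    have hF : Mem M F := Mem₃.comp hM hp (Mem₃.comp hM hp (hGe 0) (hGe 1) (hGe 2))
      (Mem.comp hM hG fun i => Mem₃.comp hM hp (Mem.proj hM _) (Mem.proj hM _) (Mem.proj hM _))
      (hb.const hM _)
    let join : (Fin (n + 1) → A) → (Fin (n + 1) → A) → (Fin (n + 1) → A) →
      Fin 3 × Fin (n + 1) → A := fun x y z w => ![x, y, z] w.1 w.2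
    have hFr : ∀ x y, F (join x y y) = e n₀ := by
      intro x y
      simp [F, join, hpr, hpl, heG]
    have hFl : ∀ x y, F (join x x y) = e n₀ := by
      intro x y
      simp [F, join, hpl, heG]
    have hFxy : F (join x y z) = F (join y y z) := by
      refine hS.apply_eq hM hb hF (fun x => hep _ _ _) ?_
      rintro ⟨j, i⟩ hne
      obtain rfl : j = 0 := by
        by_contra hj
        apply hne
        fin_cases j
        · exact absurd rfl hj
        · rfl
        · rfl
      refine ⟨join x y y, fun a a' => ?_⟩
      have hup : ∀ a, update (join x y y) (0, i) a = join (update x i a) y y := by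
        intro a
        funext ⟨j, i'⟩
        by_cases hj : j = 0
        · subst hj
          by_cases hi : i' = i
          · subst hi
            simp [join]
          · simp [join, hi]
        · rw [update_of_ne (by simp [hj])]
          fin_cases j
          · exact absurd rfl hj
          · rfl
          · rfl
      rw [hup, hup, hFr, hFr]
    rw [hFl] at hFxy
    have := hpe _ _ _ hFxy
    simpa [join, hep, heG, hx, hy, hz] using this.symm
  refine ⟨p, hep, fun x y hx _ => by rw [hpr, hx], fun x y _ hy => by rw [hpl, hy], ?_, comm⟩
  intro x y z hx hy hz
  exact comm 2 (fun x => p (x 0) (x 1) (x 2)) hp (fun x => hep _ _ _) x y z hx hy hz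

theorem IsMinimalIdempotent.eq_univ_or_exists_isAffineOn [Finite A] [Nontrivial A]
    (he : IsMinimalIdempotent M e) (hM : IsClone M) (hb : BinaryTrivial M)
    (hT : ReflexiveFull M 2) : M = Set.univ ∨ ∃ p, IsAffineOn M e p := by
  by_cases hS : SliceProperty M e
  · by_cases hu : EssentiallyUnaryInto M e
    · exact Or.inr (hu.exists_isAffineOn hM hT he)
    · exact Or.inr (exists_isAffineOn_of_not_essentiallyUnaryInto hM hb hS he hu)
  · left
    simp only [SliceProperty, not_forall] at hS
    obtain ⟨g, hg, heg, c, hc, d, x, x', hne⟩ := hS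
    exact he.eq_univ_of_slice hM hb hT hg heg hc ⟨x, x', hne⟩

end Quasigroup

section Group

variable {A : Type u} {M : Set (Ops A)} {e : A → A}

/-- A medial Maltsev operation is `x - y + z` for some abelian group. -/
theorem exists_addCommGroup_of_medial [Nonempty A] {m : A → A → A → A}
    (hr : ∀ x y, m x y y = x) (hl : ∀ x y, m x x y = y)
    (hm : ∀ a b c d e f g h i, m (m a b c) (m d e f) (m g h i) = m (m a d g) (m b e h) (m c f i)) :
    ∃ _ : AddCommGroup A, ∀ x y z : A, x - y + z = m x y z := by
  obtain ⟨o⟩ := ‹Nonempty A›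
  have hcomm : ∀ x y, m x o y = m y o x := by
    intro x y
    simpa only [hr, hl] using hm o o x o o o y o o
  have hassoc : ∀ x y z, m (m x o y) o z = m x o (m y o z) := by
    intro x y z
    simpa only [hr, hl] using hm x o y o o o o o z
  have hneg : ∀ x, m (m o x o) o x = o := by
    intro x
    simpa only [hr, hl] using hm o x o o o o x o o
  let _ : Add A := ⟨fun x y => m x o y⟩
  let _ : Neg A := ⟨fun x => m o x o⟩
  let _ : Zero A := ⟨o⟩
  let _ : AddCommGroup A :=
    { AddGroup.ofLeftAxioms hassoc (fun x : A => hl o x) hneg with add_comm := hcomm }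
  refine ⟨inferInstance, fun x y z => ?_⟩
  rw [sub_eq_add_neg]
  change m (m x o (m o y o)) o z = m x y z
  have h₁ : m x o (m o y o) = m x y o := by simpa only [hr, hl] using hm x o o o o o o y o
  have h₂ : m (m x y o) o z = m x y z := by simpa only [hr, hl] using hm x y o o o o o o z
  rw [h₁, h₂]

theorem IsAffineOn.comm_of_mem {p : A → A → A → A} (hp : IsAffineOn M e p) {ι : Type*} [Finite ι]
    [Nonempty ι] {G : (ι → A) → A} (hG : Mem M G) (heG : ∀ x, e (G x) = G x)
    {x y z : ι → A} (hM : IsClone M) (hx : ∀ i, e (x i) = x i) (hy : ∀ i, e (y i) = y i)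
    (hz : ∀ i, e (z i) = z i) : G (fun i => p (x i) (y i) (z i)) = p (G x) (G y) (G z) := by
  obtain ⟨n, ⟨eq⟩⟩ := Finite.exists_equiv_fin ι
  obtain _ | n := n
  · exact (eq (Classical.arbitrary ι)).elim0
  simpa using hp.comm n (fun v => G fun i => v (eq i)) ((mem_iff hM).2 (hG n eq)) (fun x => heG _)
    (fun j => x (eq.symm j)) (fun j => y (eq.symm j)) (fun j => z (eq.symm j))
    (fun i => hx _) (fun i => hy _) fun i => hz _

/-- The operation on the range of a minimal idempotent extends to all of `A`. -/
theorem IsAffineOn.exists_extension [Finite A] [Nontrivial A] {p : A → A → A → A}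
    (hp : IsAffineOn M e p) (hM : IsClone M) (hb : BinaryTrivial M) (hT : ReflexiveFull M 2)
    (he : IsMinimalIdempotent M e) :
    ∃ m : A → A → A → A, (∀ x y, m x y y = x) ∧ (∀ x y, m x x y = y) ∧
      (∀ a b c d e f g h i,
        m (m a b c) (m d e f) (m g h i) = m (m a d g) (m b e h) (m c f i)) ∧
      ∀ f ∈ M, ∀ x y z : Fin (f.1 + 1) → A,
        f.2 (fun i => m (x i) (y i) (z i)) = m (f.2 x) (f.2 y) (f.2 z) := by
  let N := {x // e x = x}
  obtain ⟨a, b, hab⟩ : ∃ a b : N, a.1 ≠ b.1 := by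
    obtain ⟨a, b, hab⟩ := he.nonconst
    exact ⟨⟨e a, he.idem a⟩, ⟨e b, he.idem b⟩, hab⟩
  have : Nonempty (N × N × N) := ⟨a, a, a⟩
  let t : N × N × N → Fin 4 → A := fun w => ![w.1, w.2.1, w.2.2, p w.1 w.2.1 w.2.2]
  let W : Set (Fin 4 → A) :=
    {y | ∃ f : (N × N × N → A) → A, Mem M f ∧ y = fun j => f fun i => t i j}
  have hW : Inv M W := inv_generated hM t
  have ht : ∀ a b c : N, ![a.1, b.1, c.1, p a b c] ∈ W := by
    intro a b c
    refine ⟨fun x => x (a, b, c), Mem.proj hM _, ?_⟩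
    funext j
    fin_cases j <;> rfl
  have heh : ∀ y ∈ W, ∀ h, Mem₁ M h →
      e (h (y 3)) = p (e (h (y 0))) (e (h (y 1))) (e (h (y 2))) := by
    rintro y ⟨f, hf, rfl⟩ h hh
    exact hp.comm_of_mem (G := fun v => e (h (f v))) (Mem₁.comp hM he.mem (Mem₁.comp hM hh hf))
      (fun x => he.idem _) hM (x := fun i => i.1.1) (y := fun i => i.2.1.1)
      (z := fun i => i.2.2.1) (fun i => i.1.2) (fun i => i.2.1.2) fun i => i.2.2.2
  have huniq : ∀ y ∈ W, ∀ y' ∈ W, y 0 = y' 0 → y 1 = y' 1 → y 2 = y' 2 → y 3 = y' 3 := by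
    intro y hy y' hy' h0 h1 h2
    refine he.separates hb hM fun f hf => ?_
    rw [heh y hy f hf, heh y' hy' f hf, h0, h1, h2]
  have hWr : ∀ x y, ![x, y, y, x] ∈ W := by
    refine hb (fun x y => ![x, y, y, x] ∈ W) ?_ a b hab ?_
    · intro f hf x y hxy
      convert hW f hf _ hxy using 1
      funext j
      fin_cases j <;> rfl
    · simpa [hp.right _ _ a.2 b.2] using ht a b b
  have hWl : ∀ x y, ![x, x, y, y] ∈ W := by
    refine hb (fun x y => ![x, x, y, y] ∈ W) ?_ a b hab ?_
    · intro f hf x y hxy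
      convert hW f hf _ hxy using 1
      funext j
      fin_cases j <;> rfl
    · simpa [hp.left _ _ a.2 b.2] using ht a a b
  have hWm : ∀ x y, ∃ w, ![x, y, x, w] ∈ W := by
    refine hb (fun x y => ∃ w, ![x, y, x, w] ∈ W) ?_ a b hab ⟨_, ht a b a⟩
    intro f hf x y hxy
    choose w hw using hxy
    refine ⟨f.2 w, ?_⟩
    convert hW f hf _ hw using 1
    funext j
    fin_cases j <;> rfl
  have hex : ∀ x y z, ∃ w, ![x, y, z, w] ∈ W := by
    have := hT.eq_univ (σ := {x : Fin 3 → A | ∃ w, ![x 0, x 1, x 2, w] ∈ W}) (by norm_num) ?_ ?_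
    · intro x y z
      exact (this ▸ Set.mem_univ ![x, y, z] :
        ![x, y, z] ∈ {x : Fin 3 → A | ∃ w, ![x 0, x 1, x 2, w] ∈ W})
    · intro f hf x hxy
      choose w hw using hxy
      refine ⟨f.2 w, ?_⟩
      convert hW f hf _ hw using 1
      funext j
      fin_cases j <;> rfl
    · rintro x ⟨i, j, hij, hx⟩
      have : x 0 = x 1 ∨ x 1 = x 2 ∨ x 0 = x 2 := by
        fin_cases i <;> fin_cases j <;> simp_all
      rcases this with h | h | h
      · exact ⟨x 2, by rw [h]; exact hWl _ _⟩
      · exact ⟨x 0, by rw [h]; exact hWr _ _⟩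
      · obtain ⟨w, hw⟩ := hWm (x 0) (x 1)
        exact ⟨w, by rwa [← h]⟩
  choose m hm using hex
  have hmh : ∀ h, Mem₁ M h → ∀ x y z, e (h (m x y z)) = p (e (h x)) (e (h y)) (e (h z)) :=
    fun h hh x y z => heh _ (hm x y z) h hh
  refine ⟨m, fun x y => huniq _ (hm x y y) _ (hWr x y) rfl rfl rfl,
    fun x y => huniq _ (hm x x y) _ (hWl x y) rfl rfl rfl, ?_, ?_⟩
  · intro a b c d e' f g h i
    refine he.separates hb hM fun k hk => ?_
    simp only [hmh k hk]
    exact hp.medial ![e (k a), e (k d), e (k g)] ![e (k b), e (k e'), e (k h)]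
      ![e (k c), e (k f), e (k i)] (by intro i; fin_cases i <;> exact he.idem _)
      (by intro i; fin_cases i <;> exact he.idem _) (by intro i; fin_cases i <;> exact he.idem _)
  · intro f hf x y z
    exact huniq _ (hW f hf _ fun i => hm (x i) (y i) (z i)) _ (hm _ _ _) rfl rfl rfl

/-- If all members of `M` are affine, the underlying group is elementary abelian. -/
theorem BinaryTrivial.exists_prime [Finite A] [Nontrivial A] [AddCommGroup A]
    (hb : BinaryTrivial M) (hM : M ⊆ Pol {x : Fin 4 → A | x 0 - x 1 + x 2 = x 3}) :
    ∃ p : ℕ, p.Prime ∧ ∀ a : A, p • a = 0 := by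
  have := Fintype.ofFinite A
  obtain ⟨p, hp, hpd⟩ := Nat.exists_prime_and_dvd (n := Fintype.card A)
    Fintype.one_lt_card.ne'
  have := Fact.mk hp
  obtain ⟨a, ha⟩ := exists_prime_addOrderOf_dvd_card p hpd
  have hpa : p • a = 0 := by rw [← ha, addOrderOf_nsmul_eq_zero]
  have ha0 : a ≠ 0 := by
    rintro rfl
    rw [addOrderOf_zero] at ha
    exact hp.one_lt.ne ha
  have haff : ∀ f ∈ M, ∀ x y z : Fin (f.1 + 1) → A,
      f.2 (fun i => x i - y i + z i) = f.2 x - f.2 y + f.2 z := fun f hf x y z =>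
    (hM hf (fun i => ![x i, y i, z i, x i - y i + z i]) fun i => rfl).symm
  refine ⟨p, hp, fun c => ?_⟩
  have := hb (fun x y => p • x = p • y) ?_ a 0 ha0 (by simp [hpa]) c 0
  · simpa using this
  intro f hf x y hxy
  have hlin : ∀ n : ℕ, f.2 (fun i => n • (x i - y i) + y i) = n • (f.2 x - f.2 y) + f.2 y := by
    intro n
    induction n with
    | zero => simp
    | succ n ih =>
      have := haff f hf (fun i => n • (x i - y i) + y i) y x
      rw [ih] at this
      convert this using 1
      · refine congrArg f.2 (funext fun i => ?_)
        rw [succ_nsmul]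
        abel
      · rw [succ_nsmul]
        abel
  have hp' : ∀ i, p • (x i - y i) = 0 := fun i => by rw [nsmul_sub, hxy i, sub_self]
  have := hlin p
  simp only [hp', zero_add] at this
  rwa [right_eq_add, nsmul_sub, sub_eq_zero] at this

/-- A clone without nontrivial invariant binary relations and without nontrivial reflexive
relations of higher arity either is full or consists of affine operations. -/
theorem eq_univ_or_affine [Finite A] [Nontrivial A] (hM : IsClone M) (hb : BinaryTrivial M)
    (hT : ReflexiveFull M 2) : M = Set.univ ∨ ∃ p : ℕ, p.Prime ∧ ∃ _ : AddCommGroup A,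
      (∀ a : A, p • a = 0) ∧ M ⊆ Pol {x : Fin 4 → A | x 0 - x 1 + x 2 = x 3} := by
  obtain ⟨e, he⟩ := hb.exists_isMinimalIdempotent hM
  rcases he.eq_univ_or_exists_isAffineOn hM hb hT with h | ⟨p, hp⟩
  · exact Or.inl h
  right
  obtain ⟨m, hr, hl, hmed, hcomm⟩ := hp.exists_extension hM hb hT he
  obtain ⟨inst, hsub⟩ := exists_addCommGroup_of_medial hr hl hmed
  have hpol : M ⊆ Pol {x : Fin 4 → A | x 0 - x 1 + x 2 = x 3} := by
    intro f hf t ht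
    have h3 : ∀ i, t i 3 = m (t i 0) (t i 1) (t i 2) := fun i => by rw [← hsub]; exact (ht i).symm
    rw [Set.mem_ofPred_eq, hsub, ← hcomm f hf]
    simp only [← h3]
  obtain ⟨p, hp, hpt⟩ := hb.exists_prime hpol
  exact ⟨p, hp, inst, hpt, hpol⟩

end Group

section Maximal

variable {A : Type u} {M D : Set (Ops A)} {ι κ : Type*}

/-- Every proper clone is contained in the clone of a Rosenberg relation. -/
theorem exists_isRosenbergRel [Fintype A] (hA : 3 ≤ Fintype.card A) (hM : IsClone M)
    (hne : M ≠ Set.univ) :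
    ∃ ρ : Σ k : ℕ, Set (Fin (k + 1) → A), IsRosenbergRel ρ ∧ M ⊆ Pol ρ.2 := by
  by_contra! h
  have : Nontrivial A := Fintype.one_lt_card_iff_nontrivial.1 (by omega)
  have hT := AvoidsRosenberg.reflexiveFull h
  rcases eq_univ_or_affine hM (fun r hr a b hab hr' x y =>
    AvoidsRosenberg.binary h hA hT hr hab hr' x y) hT with hu | ⟨p, hp, inst, hpt, hpol⟩
  · exact hne hu
  · exact h ⟨3, _⟩ (Or.inr <| Or.inr <| Or.inl ⟨p, hp, inst, hpt, rfl⟩) hpol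

theorem Mem.mono {f : (ι → A) → A} (hf : Mem M f) (h : M ⊆ D) : Mem D f :=
  fun m e => h (hf m e)

theorem pol_ne_univ [Nonempty A] [Finite ι] [Nonempty ι] {k : ℕ} {ρ : Set (Fin k → A)}
    (t : ι → Fin k → A) (ht : ∀ i, t i ∈ ρ) (b : Fin k → A) (hb : b ∉ ρ)
    (h : ∀ j j', (∀ i, t i j = t i j') → b j = b j') : Pol ρ ≠ Set.univ := by
  classical
  intro hu
  let g : (ι → A) → A := fun x =>
    if h : ∃ j, (fun i => t i j) = x then b h.choose else Classical.arbitrary A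
  have hg : ∀ j, g (fun i => t i j) = b j := by
    intro j
    have hex : ∃ j', (fun i => t i j') = fun i => t i j := ⟨j, rfl⟩
    simp only [g, dif_pos hex]
    exact h _ _ (congrFun hex.choose_spec)
  have := pres_of_mem_pol (ρ := ρ) (f := g) (fun m e => hu ▸ Set.mem_univ _) t ht
  simp only [hg] at this
  exact hb this

theorem isMaximalClone_pol {k : ℕ} {ρ : Set (Fin k → A)} (hne : Pol ρ ≠ Set.univ)
    (h : ∀ D, IsClone D → Pol ρ ⊆ D → ∀ f ∈ D, ∀ t : Fin (f.1 + 1) → Fin k → A,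
      (∀ i, t i ∈ ρ) → (fun j => f.2 fun i => t i j) ∉ ρ →
      ∀ n (F : (Fin (n + 1) → A) → A), Mem D F) : IsMaximalClone (Pol ρ) := by
  refine ⟨isClone_pol ρ, hne, fun D hD hsub => ?_⟩
  by_cases hle : D ⊆ Pol ρ
  · exact Or.inl (Set.Subset.antisymm hle hsub)
  right
  obtain ⟨f, hf, hf'⟩ := Set.not_subset.1 hle
  have : ∃ t : Fin (f.1 + 1) → Fin k → A, (∀ i, t i ∈ ρ) ∧
      (fun j => f.2 fun i => t i j) ∉ ρ := by
    by_contra! hcon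
    exact hf' hcon
  obtain ⟨t, ht, hb⟩ := this
  rw [Set.eq_univ_iff_forall]
  rintro ⟨n, F⟩
  exact (mem_iff hD).1 (h D hD hsub f hf t ht hb n F)

theorem isMaximalClone_order [Finite A] [Nontrivial A] {le : A → A → Prop}
    (hle : IsPartialOrder A le)
    (hbot : ∃ b, ∀ a, le b a) (htop : ∃ t, ∀ a, le a t) :
    IsMaximalClone (Pol {x : Fin 2 → A | le (x 0) (x 1)}) := by
  classical
  obtain ⟨bot, hbot⟩ := hbot
  obtain ⟨top, htop⟩ := htop
  have hrefl : ∀ a, le a a := hle.toIsPreorder.refl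
  have htrans : ∀ a b c, le a b → le b c → le a c := hle.toIsPreorder.trans
  have hanti : ∀ a b, le a b → le b a → a = b := hle.toAntisymm.antisymm
  refine isMaximalClone_pol ?_ ?_
  · refine pol_ne_univ (fun _ : Unit => ![bot, top]) (fun _ => hbot _) ![top, bot] ?_ ?_
    · intro h
      obtain ⟨x, y, hxy⟩ := exists_pair_ne A
      have htb : top = bot := hanti _ _ h (hbot _)
      have : ∀ x, x = bot := fun x => hanti _ _ (htb ▸ htop x) (hbot x)
      exact hxy ((this x).trans (this y).symm)
    · intro j j' h
      have := h ()
      fin_cases j <;> fin_cases j' <;> simp_all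
  · intro D hD hsub f hf t ht hb n F
    let q : (Fin (n + 1) → A) → (Fin (n + 1) → A) → A := fun y x =>
      f.2 fun i => if ∀ l, le (y l) (x l) then t i 1 else t i 0
    have hq : ∀ y, Mem D (q y) := by
      intro y
      refine Mem.comp hD ((mem_iff hD).2 hf)
        (g := fun i x => if ∀ l, le (y l) (x l) then t i 1 else t i 0)
        fun i => Mem.mono (mem_pol_of_pres ?_) hsub
      intro s hs
      change le (ite _ _ _) (ite _ _ _)
      split_ifs with h₁ h₂ h₂
      · exact hrefl _
      · exact absurd (fun l => htrans _ _ _ (h₁ l) (hs l)) h₂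
      · exact ht i
      · exact hrefl _
    let pt : (Fin (n + 1) → A) → Fin (n + 1) ⊕ (Fin (n + 1) → A) → A := fun x =>
      Sum.elim x fun y => q y x
    have hpt : ∀ x x', (∀ l, le (pt x l) (pt x' l)) → x = x' := by
      intro x x' h
      have h₁ : ∀ l, le (x l) (x' l) := fun l => h (Sum.inl l)
      have h₂ : ∀ l, le (x' l) (x l) := by
        by_contra hcon
        have := h (Sum.inr x')
        simp only [pt, Sum.elim_inr, q, if_neg hcon, hrefl, implies_true, if_true] at this
        exact hb this
      exact funext fun l => hanti _ _ (h₁ l) (h₂ l)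
    let G : (Fin (n + 1) ⊕ (Fin (n + 1) → A) → A) → A := fun w =>
      if h : ∃ x, pt x = w then F h.choose else if ∃ x, ∀ l, le (pt x l) (w l) then top else bot
    have hGpt : ∀ x, G (pt x) = F x := by
      intro x
      have hex : ∃ x', pt x' = pt x := ⟨x, rfl⟩
      simp only [G, dif_pos hex]
      rw [hpt hex.choose x fun l => by rw [hex.choose_spec]; exact hrefl _]
    have hG : Pres {x : Fin 2 → A | le (x 0) (x 1)} G := by
      suffices hmono : ∀ w w', (∀ l, le (w l) (w' l)) → le (G w) (G w') from
        fun s hs => hmono _ _ hs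
      intro w w' hw
      by_cases h₁ : ∃ x, pt x = w
      · obtain ⟨x, rfl⟩ := h₁
        by_cases h₂ : ∃ x, pt x = w'
        · obtain ⟨x', rfl⟩ := h₂
          rw [hpt x x' hw]
          exact hrefl _
        · have : G w' = top := by
            simp only [G, dif_neg h₂]
            exact if_pos ⟨x, hw⟩
          rw [this]
          exact htop _
      by_cases h₃ : ∃ x, ∀ l, le (pt x l) (w l)
      · obtain ⟨x, hx⟩ := h₃
        have h₂ : ¬ ∃ x, pt x = w' := by
          rintro ⟨x', rfl⟩
          obtain rfl := hpt x x' fun l => htrans _ _ _ (hx l) (hw l)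
          exact h₁ ⟨x, funext fun l => hanti _ _ (hx l) (hw l)⟩
        have : G w' = top := by
          simp only [G, dif_neg h₂]
          exact if_pos ⟨x, fun l => htrans _ _ _ (hx l) (hw l)⟩
        rw [this]
        exact htop _
      · have : G w = bot := by
          simp only [G, dif_neg h₁, if_neg h₃]
        rw [this]
        exact hbot _
    have := Mem.comp hD ((mem_pol_of_pres hG).mono hsub)
      (g := fun l x => pt x l) (by
        rintro (l | y)
        · exact Mem.proj hD l
        · exact hq y)
    simpa only [hGpt] using this

theorem isMaximalClone_equivalence [Finite A] [Nonempty A] {r : A → A → Prop} (hr : Equivalence r)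
    (hne : r ≠ Eq) (hnu : ∃ a b, ¬ r a b) :
    IsMaximalClone (Pol {x : Fin 2 → A | r (x 0) (x 1)}) := by
  classical
  refine isMaximalClone_pol ?_ ?_
  · obtain ⟨c, d, hcd⟩ := hnu
    obtain ⟨a, b, hab, hne⟩ : ∃ a b, r a b ∧ a ≠ b := by
      by_contra! hcon
      refine hne (funext fun a => funext fun b => propext ⟨hcon a b, ?_⟩)
      rintro rfl
      exact hr.refl _
    refine pol_ne_univ (fun _ : Unit => ![a, b]) (fun _ => hab) ![c, d] hcd ?_
    intro j j' h
    have := h ()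
    fin_cases j <;> fin_cases j' <;> simp_all
  · intro D hD hsub f hf t ht hb n F
    let pt : (Fin (n + 1) → A) → (Fin (n + 1) → A) → A := fun x y =>
      f.2 fun i => if x = y then t i 1 else t i 0
    have hpt : ∀ x x', (∀ y, r (pt x y) (pt x' y)) → x' = x := by
      intro x x' h
      by_contra hcon
      have := h x
      simp only [pt, if_true, if_neg hcon] at this
      exact hb (hr.symm this)
    have hq : ∀ y, Mem D fun x => pt x y := by
      intro y
      refine Mem.comp hD ((mem_iff hD).2 hf) (g := fun i x => if x = y then t i 1 else t i 0)
        fun i => Mem.mono (mem_pol_of_pres ?_) hsub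
      intro s hs
      change r (ite _ _ _) (ite _ _ _)
      split_ifs
      · exact hr.refl _
      · exact hr.symm (ht i)
      · exact ht i
      · exact hr.refl _
    let G : ((Fin (n + 1) → A) → A) → A := fun w =>
      if h : ∃ x, ∀ y, r (pt x y) (w y) then F h.choose else Classical.arbitrary A
    have hGw : ∀ x w, (∀ y, r (pt x y) (w y)) → G w = F x := by
      intro x w hxw
      have hex : ∃ x, ∀ y, r (pt x y) (w y) := ⟨x, hxw⟩
      simp only [G, dif_pos hex]
      rw [hpt x _ fun y => hr.trans (hxw y) (hr.symm (hex.choose_spec y))]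
    have hG : Pres {x : Fin 2 → A | r (x 0) (x 1)} G := by
      intro s hs
      change r (G fun l => s l 0) (G fun l => s l 1)
      have hs' : ∀ l, r (s l 0) (s l 1) := hs
      by_cases h₁ : ∃ x, ∀ y, r (pt x y) (s y 0)
      · obtain ⟨x, hx⟩ := h₁
        rw [hGw x (fun l => s l 0) hx, hGw x (fun l => s l 1) fun y => hr.trans (hx y) (hs' y)]
        exact hr.refl _
      · have h₂ : ¬ ∃ x, ∀ y, r (pt x y) (s y 1) := fun ⟨x, hx⟩ =>
          h₁ ⟨x, fun y => hr.trans (hx y) (hr.symm (hs' y))⟩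
        simp only [G, dif_neg h₁, dif_neg h₂]
        exact hr.refl _
    have := Mem.comp hD ((mem_pol_of_pres hG).mono hsub) (g := fun y x => pt x y) hq
    simpa only [hGw _ _ fun y => hr.refl _] using this

end Maximal

section MaximalPerm

variable {A : Type u}

/-- The exponents `j` for which `g` commutes with `π ^ j` on the orbit of `s`. -/
def commutingExponents {ι : Type*} (π : Equiv.Perm A) (g : (ι → A) → A) (s : ι → A) :
    AddSubgroup ℤ where
  carrier := {j | ∀ i : ℤ, g (fun l => (π ^ (i + j)) (s l)) = (π ^ j) (g fun l => (π ^ i) (s l))}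
  zero_mem' := by simp
  add_mem' := by
    intro j k hj hk i
    rw [← add_assoc, hk, hj, add_comm j k, zpow_add]
    rfl
  neg_mem' := by
    intro j hj i
    have := hj (i + -j)
    rw [neg_add_cancel_right] at this
    rw [this, zpow_neg]
    simp

theorem zpow_eq_one_or_gcd {π : Equiv.Perm A} {p : ℕ} (hp : p.Prime) (hπp : ∀ a, (π ^ p) a = a)
    (j : ℤ) : π ^ j = 1 ∨ ∃ u v : ℤ, u * j + v * p = 1 := by
  have hπ : π ^ p = 1 := Equiv.ext hπp
  by_cases h : (p : ℤ) ∣ j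
  · left
    obtain ⟨k, rfl⟩ := h
    rw [zpow_mul, zpow_natCast, hπ, one_zpow]
  · right
    have hc : IsCoprime (p : ℤ) j := (Nat.prime_iff_prime_int.1 hp).coprime_iff_not_dvd.2 h
    obtain ⟨u, v, huv⟩ := hc
    exact ⟨v, u, by rw [add_comm]; exact huv⟩

theorem zpow_eq_one_of_fixed {π : Equiv.Perm A} (hfix : ∀ a, π a ≠ a) {p : ℕ} (hp : p.Prime)
    (hπp : ∀ a, (π ^ p) a = a) {j : ℤ} {a : A} (h : (π ^ j) a = a) : π ^ j = 1 := by
  rcases zpow_eq_one_or_gcd hp hπp j with h' | ⟨u, v, huv⟩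
  · exact h'
  exfalso
  refine hfix a ?_
  have hπ : π ^ p = 1 := Equiv.ext hπp
  have : π = (π ^ j) ^ u := by
    rw [← zpow_mul, mul_comm, eq_sub_of_add_eq huv, zpow_sub, mul_comm v, zpow_mul, zpow_natCast,
      hπ]
    simp
  rw [this]
  exact Equiv.Perm.zpow_apply_eq_self_of_apply_eq_self h u

/-- Equivariant functions can be prescribed on points with distinct free orbits. -/
theorem exists_equivariant (π : Equiv.Perm A) {κ X : Type*} [Nonempty κ] (pt : X → κ → A)
    (hpt : ∀ (j : ℤ) x x', (∀ l, (π ^ j) (pt x l) = pt x' l) → π ^ j = 1 ∧ x = x') (F : X → A) :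
    ∃ G : (κ → A) → A, Pres {x : Fin 2 → A | x 1 = π (x 0)} G ∧ ∀ x, G (pt x) = F x := by
  classical
  let R : (κ → A) → ℤ × X → Prop := fun w y => ∀ l, (π ^ y.1) (pt y.2 l) = w l
  have hR : ∀ w y y', R w y → R w y' → (π ^ y.1) (F y.2) = (π ^ y'.1) (F y'.2) := by
    rintro w ⟨j, x⟩ ⟨j', x'⟩ h h'
    obtain ⟨h₁, rfl⟩ := hpt (-j' + j) x x' fun l => by
      rw [zpow_add, Equiv.Perm.mul_apply, h l, ← h' l, zpow_neg]
      simp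
    rw [zpow_add, zpow_neg, inv_mul_eq_one] at h₁
    simp only [h₁]
  let G : (κ → A) → A := fun w =>
    if h : ∃ y, R w y then (π ^ h.choose.1) (F h.choose.2) else w (Classical.arbitrary κ)
  have hG : ∀ w y, R w y → G w = (π ^ y.1) (F y.2) := by
    intro w y hy
    have hex : ∃ y, R w y := ⟨y, hy⟩
    simp only [G, dif_pos hex]
    exact hR w _ _ hex.choose_spec hy
  refine ⟨G, ?_, fun x => by simpa using hG (pt x) (0, x) fun l => by simp⟩
  suffices key : ∀ w, G (fun l => π (w l)) = π (G w) by
    intro s hs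
    have : (fun l => s l 1) = fun l => π (s l 0) := funext hs
    change G (fun l => s l 1) = π (G fun l => s l 0)
    rw [this, key]
  intro w
  by_cases h : ∃ y, R w y
  · obtain ⟨y, hy⟩ := h
    rw [hG w y hy, hG (fun l => π (w l)) (1 + y.1, y.2) fun l => by
      rw [zpow_add, Equiv.Perm.mul_apply, hy l, zpow_one]]
    rw [zpow_add, zpow_one]
    rfl
  · have h' : ¬ ∃ y, R (fun l => π (w l)) y := by
      rintro ⟨⟨j, x⟩, hy⟩
      refine h ⟨(-1 + j, x), fun l => ?_⟩
      rw [zpow_add, Equiv.Perm.mul_apply, hy l]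
      simp
    simp only [G, dif_neg h, dif_neg h']

theorem isMaximalClone_perm [Finite A] [Nonempty A] {π : Equiv.Perm A} (hfix : ∀ a, π a ≠ a) {p : ℕ}
    (hp : p.Prime) (hπp : ∀ a, (π ^ p) a = a) :
    IsMaximalClone (Pol {x : Fin 2 → A | x 1 = π (x 0)}) := by
  refine isMaximalClone_pol ?_ ?_
  · let a := Classical.arbitrary A
    exact pol_ne_univ (fun _ : Unit => ![a, π a]) (fun _ => rfl) (fun _ => a)
      (fun h => hfix a (Eq.symm h)) fun _ _ _ => rfl
  intro D hD hsub f hf t ht hb n F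
  have hq : ∀ y : Fin (n + 1) → A, ∃ q, Mem D q ∧
      ∀ j : ℤ, q (fun l => (π ^ j) (y l)) = f.2 fun i => (π ^ j) (t i 0) := by
    intro y
    have : ∀ i, ∃ h : (Fin (n + 1) → A) → A, Pres {x : Fin 2 → A | x 1 = π (x 0)} h ∧
        h y = t i 0 := by
      intro i
      obtain ⟨h, hh, hhy⟩ := exists_equivariant π (fun _ : Unit => y)
        (fun j x x' hj => ⟨zpow_eq_one_of_fixed hfix hp hπp (hj 0), rfl⟩) fun _ => t i 0
      exact ⟨h, hh, hhy ()⟩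
    choose h hh hhy using this
    have heq : ∀ i (j : ℤ), h i (fun l => (π ^ j) (y l)) = (π ^ j) (h i y) := by
      intro i j
      have hpos : ∀ w : Fin (n + 1) → A, h i (fun l => π (w l)) = π (h i w) := fun w =>
        hh i (fun l => ![w l, π (w l)]) fun l => rfl
      induction j with
      | zero => simp
      | succ j ih =>
        have := hpos fun l => (π ^ (j : ℤ)) (y l)
        simp only [add_comm (j : ℤ) 1, zpow_add, zpow_one, Equiv.Perm.mul_apply]
        rw [this, ih]
      | pred j ih =>
        have := hpos fun l => (π ^ (-(j : ℤ) - 1)) (y l)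
        simp only [← Equiv.Perm.mul_apply, ← zpow_one_add, add_sub_cancel] at this
        rw [ih] at this
        apply π.injective
        rw [← this, ← Equiv.Perm.mul_apply, ← zpow_one_add, add_sub_cancel]
    refine ⟨fun x => f.2 fun i => h i x, Mem.comp hD ((mem_iff hD).2 hf) fun i =>
      (mem_pol_of_pres (hh i)).mono hsub, fun j => ?_⟩
    simp only [heq, hhy]
  choose q hqD hqv using hq
  let pt : (Fin (n + 1) → A) → Fin (n + 1) ⊕ (Fin (n + 1) → A) → A := fun x =>
    Sum.elim x fun y => q y x
  obtain ⟨G, hG, hGF⟩ := exists_equivariant π pt (fun j x x' hj => by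
    have hx' : ∀ l, (π ^ j) (x l) = x' l := fun l => hj (Sum.inl l)
    suffices h : π ^ j = 1 from ⟨h, funext fun l => by simpa [h] using hx' l⟩
    rcases zpow_eq_one_or_gcd hp hπp j with h' | ⟨u, v, huv⟩
    · exact h'
    exfalso
    have hj' : j ∈ commutingExponents π f.2 fun i => t i 0 := by
      intro i
      have h₁ := hj (Sum.inr fun l => (π ^ (-i)) (x l))
      simp only [pt, Sum.elim_inr] at h₁
      have h₂ := hqv (fun l => (π ^ (-i)) (x l)) i
      have h₃ := hqv (fun l => (π ^ (-i)) (x l)) (i + j)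
      simp only [← Equiv.Perm.mul_apply, ← zpow_add, add_neg_cancel, zpow_zero,
        Equiv.Perm.one_apply, add_neg_cancel_comm, hx'] at h₂ h₃
      rw [← h₃, ← h₁, ← h₂]
    have hp' : (p : ℤ) ∈ commutingExponents π f.2 fun i => t i 0 := by
      intro i
      have hπ : π ^ p = 1 := Equiv.ext hπp
      simp [zpow_add, hπ]
    have h1 := add_mem (zsmul_mem hj' u) (zsmul_mem hp' v)
    rw [smul_eq_mul, smul_eq_mul, huv] at h1
    have h1' := h1 0
    simp only [zero_add, zpow_one, zpow_zero, Equiv.Perm.one_apply] at h1'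
    refine hb ?_
    rw [Set.mem_ofPred_eq, ← h1']
    exact congrArg f.2 (funext fun i => ht i)) F
  have := Mem.comp hD ((mem_pol_of_pres hG).mono hsub)
    (g := fun l x => pt x l) (by
      rintro (l | y)
      · exact Mem.proj hD l
      · exact hqD y)
  simpa only [hGF] using this

end MaximalPerm

section MaximalCentral

variable {A : Type u}

theorem comp_mem_of_totallyReflexive {k : ℕ} {ρ : Set (Fin k → A)} (hr : TotallyReflexiveRel ρ)
    (hs : TotallySymmetricRel ρ) {t : Fin k → A} (ht : t ∈ ρ) (σ : Fin k → Fin k) :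
    t ∘ σ ∈ ρ := by
  by_cases hσ : Injective σ
  · exact hs (Equiv.ofBijective σ (Finite.injective_iff_bijective.1 hσ)) t ht
  · exact mem_of_not_injective hr fun h => hσ (Injective.of_comp h)

theorem mem_of_exists_eq_central {k : ℕ} {ρ : Set (Fin (k + 1) → A)} (hs : TotallySymmetricRel ρ)
    {c : A} (hc : ∀ x : Fin (k + 1) → A, x 0 = c → x ∈ ρ) {x : Fin (k + 1) → A} {j : Fin (k + 1)}
    (hj : x j = c) : x ∈ ρ := by
  have := hs (Equiv.swap 0 j) _ (hc (x ∘ Equiv.swap 0 j) (by simpa using hj))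
  simpa [comp_assoc, ← Equiv.coe_trans] using this

theorem isMaximalClone_central [Fintype A] {k : ℕ} {ρ : Set (Fin (k + 1) → A)}
    (hk : k + 1 < Fintype.card A) (hr : TotallyReflexiveRel ρ) (hs : TotallySymmetricRel ρ)
    (hρ : ρ ≠ Set.univ) {c : A} (hc : ∀ x : Fin (k + 1) → A, x 0 = c → x ∈ ρ) :
    IsMaximalClone (Pol ρ) := by
  classical
  have : Nonempty A := ⟨c⟩
  refine isMaximalClone_pol ?_ ?_
  · obtain ⟨b, hb⟩ := (Set.ne_univ_iff_exists_notMem ρ).1 hρ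
    obtain ⟨e⟩ : Nonempty (Fin (k + 1) ↪ A) :=
      Function.Embedding.nonempty_of_card_le (by simpa using hk.le)
    refine pol_ne_univ (fun _ : Unit => Equiv.swap c (e 0) ∘ e) (fun _ => hc _ (by simp)) b hb
      fun j j' h => ?_
    have := h ()
    simp only [comp_apply, EmbeddingLike.apply_eq_iff_eq] at this
    rw [this]
  intro D hD hsub f hf t ht hb n F
  have hq : ∀ x : Fin (k + 1) → Fin (n + 1) → A, Injective x → ∃ q, Mem D q ∧
      ∀ j, q (x j) = f.2 fun i => t i j := by
    intro x hx
    let h : Fin (f.1 + 1) → (Fin (n + 1) → A) → A := fun i => extend x (t i) fun _ => c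
    refine ⟨fun z => f.2 fun i => h i z, Mem.comp hD ((mem_iff hD).2 hf) fun i =>
      (mem_pol_of_pres fun s _ => ?_).mono hsub, fun j => by simp only [h, hx.extend_apply]⟩
    by_cases hex : ∀ j, ∃ l, x l = fun m => s m j
    · choose σ hσ using hex
      convert comp_mem_of_totallyReflexive hr hs (ht i) σ using 1
      funext j
      rw [← hσ j]
      exact hx.extend_apply _ _ _
    · push Not at hex
      obtain ⟨j, hj⟩ := hex
      refine mem_of_exists_eq_central hs hc (j := j) ?_
      exact extend_apply' _ _ _ fun ⟨l, hl⟩ => hj l hl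
  choose q hqD hqv using hq
  let pt : (Fin (n + 1) → A) →
      Fin (n + 1) ⊕ {x : Fin (k + 1) → Fin (n + 1) → A // Injective x} → A := fun z =>
    Sum.elim z fun x => q x.1 x.2 z
  have hpt : Injective pt := fun z z' h => funext fun l => congrFun h (Sum.inl l)
  have hG : Pres ρ (extend pt F fun _ => c) := by
    intro s hs'
    by_cases hex : ∀ j, ∃ z, pt z = fun l => s l j
    · choose z hz using hex
      by_cases hzi : Injective z
      · refine absurd (hs' (Sum.inr ⟨z, hzi⟩)) ?_
        convert hb using 2
        funext j
        rw [← hqv z hzi j]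
        exact (congrFun (hz j) (Sum.inr ⟨z, hzi⟩)).symm
      · refine mem_of_not_injective hr fun hinj => hzi fun j j' h => hinj ?_
        change extend pt F _ (fun l => s l j) = extend pt F _ fun l => s l j'
        rw [← hz j, ← hz j', h]
    · push Not at hex
      obtain ⟨j, hj⟩ := hex
      refine mem_of_exists_eq_central hs hc (j := j) ?_
      exact extend_apply' _ _ _ fun ⟨l, hl⟩ => hj l hl
  have := Mem.comp hD ((mem_pol_of_pres hG).mono hsub) (g := fun l z => pt z l) (by
    rintro (l | x)
    · exact Mem.proj hD l
    · exact hqD x.1 x.2)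
  have hF : ∀ z, extend pt F (fun _ => c) (fun l => pt z l) = F z := hpt.extend_apply _ _
  simpa only [hF] using this

end MaximalCentral

section MaximalRegular

variable {A : Type u}

/-- A regular relation, with the equivalence relations given as kernels of maps `φ i`. -/
theorem isMaximalClone_ker [Finite A] {k r : ℕ} (hk : 2 ≤ k)
    {φ : Fin (r + 1) → A → Fin (k + 1)}
    (hφ : ∀ c : Fin (r + 1) → Fin (k + 1), ∃ a, ∀ i, φ i a = c i) :
    IsMaximalClone (Pol {x : Fin (k + 1) → A | ∀ i, ¬ Injective fun j => φ i (x j)}) := by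
  classical
  obtain ⟨k, rfl⟩ := Nat.exists_eq_add_of_le' hk
  have : Nonempty A := ⟨(hφ fun _ => 0).choose⟩
  refine isMaximalClone_pol ?_ ?_
  · choose a ha using fun j => hφ fun _ => j
    have hainj : Injective a := fun j j' h => by rw [← ha j 0, ← ha j' 0, h]
    have h₀₁ : (0 : Fin (k + 2 + 1)) ≠ 1 := by simp
    have hval : ((2 : Fin (k + 2 + 1)) : ℕ) = 2 := Fin.val_two
    have h₁₂ : (1 : Fin (k + 2 + 1)) ≠ 2 := fun h => by
      have := congrArg Fin.val h
      rw [hval] at this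
      simp at this
    have h₀₂ : (0 : Fin (k + 2 + 1)) ≠ 2 := fun h => by
      have := congrArg Fin.val h
      rw [hval] at this
      simp at this
    refine pol_ne_univ (fun l : Bool => a ∘ fun j =>
      if l then (if j = 1 then 0 else j) else if j = 2 then 1 else j) ?_ a ?_ ?_
    · rintro (l | l) i h
      · exact h₁₂ (@h 1 2 (by simp [h₁₂]))
      · exact h₀₁ (@h 0 1 (by simp))
    · intro h
      exact h 0 fun j j' hj => by simpa [ha] using hj
    · intro j j' h
      have h₁ := h true
      have h₂ := h false
      simp only [comp_apply, hainj.eq_iff, if_true, Bool.false_eq_true, if_false] at h₁ h₂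
      grind
  intro D hD hsub f hf t ht hb n F
  have hr : TotallyReflexiveRel {x : Fin (k + 2 + 1) → A | ∀ i, ¬ Injective fun j => φ i (x j)} :=
    fun x ⟨j, j', hne, hj⟩ i h => hne (h (congrArg (φ i) hj))
  have hs : TotallySymmetricRel {x : Fin (k + 2 + 1) → A | ∀ i, ¬ Injective fun j => φ i (x j)} :=
    fun σ x hx i h => hx i (by simpa [comp_def] using h.comp σ.symm.injective)
  let b : Fin (k + 2 + 1) → A := fun j => f.2 fun i => t i j
  have hbinj : Injective b := injective_of_notMem hr hb
  obtain ⟨i₀, hi₀⟩ : ∃ i, Injective fun j => φ i (b j) := by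
    by_contra! hcon
    exact hb hcon
  let τ := Equiv.ofBijective _ (Finite.injective_iff_bijective.1 hi₀)
  have hτ : ∀ j, τ.symm (φ i₀ (b j)) = j := fun j => τ.symm_apply_apply j
  have hψ : ∀ ψ : (Fin (n + 1) → A) → Fin (k + 2 + 1), Mem D fun x => b (ψ x) := fun ψ =>
    Mem.comp hD ((mem_iff hD).2 hf) (g := fun i x => t i (ψ x)) fun i =>
      (mem_pol_of_pres fun s _ =>
        comp_mem_of_totallyReflexive hr hs (ht i) fun j => ψ fun l => s l j).mono hsub
  let pt : (Fin (n + 1) → A) → Fin (r + 1) ⊕ (Fin (n + 1) → A) → A := fun x =>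
    Sum.elim (fun i => b (φ i (F x))) fun y => b (if x = y then 1 else 0)
  have hpt : Injective pt := by
    intro x x' h
    by_contra hne
    have := hbinj (congrFun h (Sum.inr x))
    simp [Ne.symm hne] at this
  have : ∀ w : Fin (r + 1) ⊕ (Fin (n + 1) → A) → A, ∃ a,
      (∀ i, φ i a = τ.symm (φ i₀ (w (Sum.inl i)))) ∧ ∀ x, pt x = w → a = F x := by
    intro w
    by_cases hw : ∃ x, pt x = w
    · obtain ⟨x, rfl⟩ := hw
      exact ⟨F x, fun i => (hτ _).symm, fun x' hx' => by rw [hpt hx']⟩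
    · obtain ⟨a, ha⟩ := hφ fun i => τ.symm (φ i₀ (w (Sum.inl i)))
      exact ⟨a, ha, fun x hx => absurd ⟨x, hx⟩ hw⟩
  choose G hGφ hGpt using this
  have hG : Pres {x : Fin (k + 2 + 1) → A | ∀ i, ¬ Injective fun j => φ i (x j)} G := by
    intro s hs' i h
    simp only [hGφ] at h
    exact hs' (Sum.inl i) i₀ (Injective.of_comp h)
  have := Mem.comp hD ((mem_pol_of_pres hG).mono hsub) (g := fun l x => pt x l) (by
    rintro (i | y)
    · exact hψ _
    · exact hψ _)
  have hF : ∀ x, G (fun l => pt x l) = F x := fun x => hGpt _ x rfl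
  simpa only [hF] using this

theorem exists_ker_map [Finite A] {k : ℕ} {θ : A → A → Prop} (hθ : Equivalence θ)
    (hcard : Set.ncard {B : Set A | ∃ a, B = {b | θ a b}} = k + 1) :
    ∃ φ : A → Fin (k + 1), Surjective φ ∧ ∀ a b, φ a = φ b ↔ θ a b := by
  obtain ⟨e⟩ : Nonempty ({B : Set A | ∃ a, B = {b | θ a b}} ≃ Fin (k + 1)) :=
    Finite.card_eq.1 (by rw [Nat.card_coe_set_eq, hcard, Nat.card_fin])
  refine ⟨fun a => e ⟨{b | θ a b}, a, rfl⟩, fun j => ?_, fun a b => ?_⟩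
  · obtain ⟨a, ha⟩ := (e.symm j).2
    exact ⟨a, by simp only [← ha]; simp⟩
  · rw [e.apply_eq_iff_eq, Subtype.mk.injEq]
    constructor
    · intro h
      have : b ∈ {c | θ b c} := hθ.refl b
      rwa [← h] at this
    · exact fun h => Set.ext fun c => ⟨hθ.trans (hθ.symm h), hθ.trans h⟩

theorem isMaximalClone_regular [Finite A] {k r : ℕ} {θ : Fin (r + 1) → A → A → Prop}
    (hk : 3 ≤ k + 1) (hθ : ∀ i, Equivalence (θ i))
    (hcard : ∀ i, Set.ncard {B : Set A | ∃ a, B = {b | θ i a b}} = k + 1)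
    (hne : ∀ a : Fin (r + 1) → A, (⋂ i, {b | θ i (a i) b}).Nonempty) :
    IsMaximalClone (Pol {x : Fin (k + 1) → A |
      ∀ i, ∃ j l : Fin (k + 1), j ≠ l ∧ θ i (x j) (x l)}) := by
  choose φ hφs hφ using fun i => exists_ker_map (hθ i) (hcard i)
  convert isMaximalClone_ker (φ := φ) (by omega : 2 ≤ k) fun c => ?_ using 4 with x
  · simp only [Injective, not_forall, hφ, exists_prop, and_comm, ne_eq]
  · choose a ha using fun i => hφs i (c i)
    obtain ⟨b, hb⟩ := hne a
    refine ⟨b, fun i => ?_⟩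
    rw [← ha i, eq_comm, hφ]
    exact Set.mem_iInter.1 hb i

end MaximalRegular

section MaximalAffine

variable {A : Type u}

theorem mem_pol_affine [AddCommGroup A] {ι : Type*} {f : (ι → A) → A}
    (hf : ∀ x y z, f (x - y + z) = f x - f y + f z) :
    Mem (Pol {x : Fin 4 → A | x 0 - x 1 + x 2 = x 3}) f := by
  refine mem_pol_of_pres fun t ht => ?_
  change f (fun i => t i 0) - f (fun i => t i 1) + f (fun i => t i 2) = f fun i => t i 3
  rw [← hf]
  exact congrArg f (funext ht)

theorem exists_affine_map [AddCommGroup A] {p : ℕ} [Fact p.Prime] [Module (ZMod p) A] {a b : A}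
    (hab : a ≠ b) (x y : A) :
    ∃ h : A → A, (∀ u v w, h (u - v + w) = h u - h v + h w) ∧ h a = x ∧ h b = y := by
  obtain ⟨g, hg⟩ : ∃ g : Module.Dual (ZMod p) A, g (b - a) ≠ 0 := by
    by_contra! hcon
    exact hab (sub_eq_zero.1 ((Module.forall_dual_apply_eq_zero_iff (ZMod p) _).1 hcon)).symm
  refine ⟨fun z => x + ((g (b - a))⁻¹ * g (z - a)) • (y - x), fun u v w => ?_, by simp,
    by simp only [inv_mul_cancel₀ hg, one_smul, add_sub_cancel]⟩
  simp only [map_add, map_sub, mul_add, mul_sub, add_smul, sub_smul]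
  abel

theorem binaryTrivial_of_affine [AddCommGroup A] {p : ℕ} (hp : p.Prime) (hA : ∀ a : A, p • a = 0)
    {D : Set (Ops A)} (hD : IsClone D)
    (hsub : Pol {x : Fin 4 → A | x 0 - x 1 + x 2 = x 3} ⊆ D) : BinaryTrivial D := by
  intro r hr a b hab hrab x y
  have := Fact.mk hp
  let _ : Module (ZMod p) A := AddCommGroup.zmodModule hA
  obtain ⟨h, hh, rfl, rfl⟩ := exists_affine_map (p := p) hab x y
  have hmem : Mem (Pol {x : Fin 4 → A | x 0 - x 1 + x 2 = x 3}) fun z : Fin 1 → A => h (z 0) :=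
    mem_pol_affine fun u v w => hh _ _ _
  exact hr _ ((mem_iff hD).1 (hmem.mono hsub)) (fun _ => a) (fun _ => b) fun _ => hrab

theorem reflexiveFull_of_affine [AddCommGroup A] {D : Set (Ops A)}
    (hsub : Pol {x : Fin 4 → A | x 0 - x 1 + x 2 = x 3} ⊆ D) : ReflexiveFull D 2 := by
  intro k hk σ hσ hr _
  rw [Set.eq_univ_iff_forall]
  intro c
  have : Nonempty (Fin k) := ⟨⟨0, by omega⟩⟩
  have hsum : Mem D fun x : Fin k → A => ∑ i, x i := by
    refine Mem.mono (mem_pol_affine fun x y z => ?_) hsub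
    simp [Finset.sum_add_distrib]
  have := hσ.apply hsum (t := fun i => Pi.single i (c i)) fun i => by
    obtain ⟨j, l, hj, hl, hjl⟩ : ∃ j l : Fin k, j ≠ i ∧ l ≠ i ∧ j ≠ l := by
      have h : 1 < (Finset.univ.erase i).card := by
        rw [Finset.card_erase_of_mem (Finset.mem_univ i), Finset.card_fin]
        omega
      obtain ⟨j, hj, l, hl, hjl⟩ := Finset.one_lt_card.1 h
      exact ⟨j, l, (Finset.mem_erase.1 hj).1, (Finset.mem_erase.1 hl).1, hjl⟩
    exact hr _ ⟨j, l, hjl, by simp [hj, hl]⟩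
  simpa [Finset.sum_pi_single] using this

theorem subset_pol_affine [AddCommGroup A] {D : Set (Ops A)}
    (hadd : Mem D fun x : Fin 2 → A => x 0 + x 1) {m : A → A → A → A} (hxx : ∀ x y, m x x y = y)
    (hyy : ∀ x y, m x y y = x) (h : D ⊆ Pol {x : Fin 4 → A | m (x 0) (x 1) (x 2) = x 3}) :
    D ⊆ Pol {x : Fin 4 → A | x 0 - x 1 + x 2 = x 3} := by
  have key : ∀ x y z, m x y z = x - y + z := by
    intro x y z
    have := pres_of_mem_pol (hadd.mono h) ![![x, y, y, m x y y], ![0, 0, z - y, m 0 0 (z - y)]]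
      (by intro i; fin_cases i <;> rfl)
    change m (x + 0) (y + 0) (y + (z - y)) = m x y y + m 0 0 (z - y) at this
    rw [hyy, hxx, add_zero, add_zero, add_sub_cancel] at this
    rw [this, sub_add_eq_add_sub, add_sub_assoc]
  simpa only [key] using h

theorem isMaximalClone_affine [Finite A] [Nontrivial A] [AddCommGroup A] {p : ℕ} (hp : p.Prime)
    (hA : ∀ a : A, p • a = 0) :
    IsMaximalClone (Pol {x : Fin 4 → A | x 0 - x 1 + x 2 = x 3}) := by
  refine ⟨isClone_pol _, ?_, fun D hD hsub => ?_⟩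
  · obtain ⟨a, ha⟩ := exists_ne (0 : A)
    refine pol_ne_univ ![![0, 0, a, a], ![a, 0, 0, a]] ?_ ![0, 0, 0, a] ?_ ?_
    · intro i
      fin_cases i <;> simp
    · simpa using ha.symm
    · intro j j' h
      have h₀ := h 0
      have h₁ := h 1
      fin_cases j <;> fin_cases j' <;> simp_all
  have hadd : Mem D fun x : Fin 2 → A => x 0 + x 1 := by
    refine Mem.mono (mem_pol_affine fun x y z => ?_) hsub
    simp only [Pi.add_apply, Pi.sub_apply]
    abel
  rcases eq_univ_or_affine hD (binaryTrivial_of_affine hp hA hD hsub)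
    (reflexiveFull_of_affine hsub) with h | h
  · exact Or.inr h
  left
  obtain ⟨m, hxx, hyy, h⟩ : ∃ m : A → A → A → A, (∀ x y, m x x y = y) ∧ (∀ x y, m x y y = x) ∧
      D ⊆ Pol {x : Fin 4 → A | m (x 0) (x 1) (x 2) = x 3} := by
    obtain ⟨_, _, _, _, h⟩ := h
    exact ⟨fun x y z => x - y + z, fun x y => by simp, fun x y => by simp, h⟩
  exact Set.Subset.antisymm (subset_pol_affine hadd hxx hyy h) hsub

end MaximalAffine

theorem isMaximalClone_of_isRosenbergRel {A : Type u} [Fintype A] [Nontrivial A]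
    {ρ : Σ k : ℕ, Set (Fin (k + 1) → A)} (h : IsRosenbergRel ρ) : IsMaximalClone (Pol ρ.2) := by
  rcases h with ⟨_, hle, hbot, htop, rfl⟩ | ⟨_, hfix, ⟨p, hp, hπp⟩, rfl⟩ | ⟨p, hp, _, hA, rfl⟩ |
    ⟨_, hr, hne, hnu, rfl⟩ | ⟨hk, hr, hs, hρ, c, hc⟩ | ⟨r, θ, hk, -, hθ, hcard, hne, hρ⟩
  · exact isMaximalClone_order hle hbot htop
  · exact isMaximalClone_perm hfix hp hπp
  · exact isMaximalClone_affine hp hA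
  · exact isMaximalClone_equivalence hr hne hnu
  · exact isMaximalClone_central hk hr hs hρ hc
  · rw [hρ]
    exact isMaximalClone_regular hk hθ hcard hne

end Rosenberg

/-- **Rosenberg's Completeness Theorem.**  Let `A` be a finite set with `|A| ≥ 3`.
The maximal clones on `A` are exactly the clones `Pol ρ` where `ρ` is a Rosenberg
relation on `A`.  Consequently, a set `F` of operations on `A` is complete if and only
if `F` is not contained in `Pol ρ` for any Rosenberg relation `ρ`. -/
theorem rosenberg_completeness {A : Type u} [Fintype A] (h3 : 3 ≤ Fintype.card A) :
    (∀ M : Set (Ops A), IsMaximalClone M ↔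
        ∃ ρ : Σ k : ℕ, Set (Fin (k + 1) → A), IsRosenbergRel ρ ∧ M = Pol ρ.2) ∧
    (∀ F : Set (Ops A), cloneGen F = Set.univ ↔
        ∀ ρ : Σ k : ℕ, Set (Fin (k + 1) → A), IsRosenbergRel ρ → ¬ F ⊆ Pol ρ.2) := by
  have : Nontrivial A := Fintype.one_lt_card_iff_nontrivial.1 (by omega)
  refine ⟨fun M => ⟨fun hM => ?_, ?_⟩, fun F => ⟨fun hF ρ hρ hsub => ?_, fun h => ?_⟩⟩
  · obtain ⟨ρ, hρ, hsub⟩ := Rosenberg.exists_isRosenbergRel h3 hM.1 hM.2.1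
    refine ⟨ρ, hρ, ?_⟩
    rcases hM.2.2 _ (Rosenberg.isClone_pol ρ.2) hsub with h | h
    · exact h.symm
    · exact absurd h (Rosenberg.isMaximalClone_of_isRosenbergRel hρ).2.1
  · rintro ⟨ρ, hρ, rfl⟩
    exact Rosenberg.isMaximalClone_of_isRosenbergRel hρ
  · refine (Rosenberg.isMaximalClone_of_isRosenbergRel hρ).2.1 (Set.univ_subset_iff.1 ?_)
    rw [← hF]
    exact Rosenberg.cloneGen_subset (Rosenberg.isClone_pol _) hsub
  · by_contra hne
    obtain ⟨ρ, hρ, hsub⟩ :=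
      Rosenberg.exists_isRosenbergRel h3 (Rosenberg.isClone_cloneGen F) hne
    exact h ρ hρ ((Rosenberg.subset_cloneGen F).trans hsub)
end

section
/- Five-type classification of minimal clones. Let A be a set with |A| ≥ 2. Every minimal clone on A is generated by an operation f of one of the following types: (✓I) a unary operation f such that either f = f∘f and f(A) ≠ A, or f is a permutation of prime order; (II) a binary idempotent operation that is not a projection; (III) a semiprojection onto its first variable, i.e. an n-ary operation (n ≥ 3) that is not a projection but satisfies f(y₁,…,yₙ) = y₁ whenever two of the arguments y₁,…,yₙ are equal; (IV) a majority operation; (✓V) the operation x₁ + x₂ + x₃ of some elementary abelian 2-group (A;+). Moreover, every operation of type (✓I) and every operation of type (✓V) generates a minimal clone. -/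
universe u

/-- A majority operation: a ternary operation satisfying
`m(x,x,y) = m(x,y,x) = m(y,x,x) = x`. -/
def IsMajority {A : Type u} (f : (Fin 3 → A) → A) : Prop :=
  ∀ x y : A, f ![x, x, y] = x ∧ f ![x, y, x] = x ∧ f ![y, x, x] = x

/-- Type (✓I) of unary operations: `f = f ∘ f` with non-full range, or
a permutation of prime order. -/
def IsTypeCheckedI {A : Type u} (f : A → A) : Prop :=
  (f ∘ f = f ∧ Set.range f ≠ Set.univ) ∨ ∃ π : Equiv.Perm A, f = ⇑π ∧ (orderOf π).Prime

section Clones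

variable {A : Type u}

theorem isClone_cloneGen (F : Set (Ops A)) : IsClone (cloneGen F) := by
  refine ⟨fun n i C hC => hC.1.1 n i, fun n m f g hf hg C hC => ?_⟩
  exact hC.1.2 n m f g (hf C hC) fun i => hg i C hC

theorem mem_cloneGen_self (f : Ops A) : f ∈ cloneGen {f} :=
  fun _ hC => hC.2 rfl

theorem cloneGen_singleton_subset {C : Set (Ops A)} (hC : IsClone C) {f : Ops A} (hf : f ∈ C) :
    cloneGen {f} ⊆ C :=
  fun _ hg => hg C ⟨hC, by simpa using hf⟩

theorem projClone_subset {C : Set (Ops A)} (hC : IsClone C) : projClone A ⊆ C := by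
  rintro ⟨n, f⟩ ⟨i, hi⟩
  change Fin (n + 1) at i
  change f = fun x : Fin (n + 1) → A => x i at hi
  subst hi
  exact hC.1 n i

theorem IsMinimalClone.eq_cloneGen {C : Set (Ops A)} (hC : IsMinimalClone C) {f : Ops A}
    (hf : f ∈ C) (hf' : f ∉ projClone A) : C = cloneGen {f} := by
  rcases hC.2.2 _ (isClone_cloneGen {f}) (cloneGen_singleton_subset hC.1 hf) with h | h
  · exact absurd (h ▸ mem_cloneGen_self f) hf'
  · exact h.symm

/-- A criterion for minimality, using an upper bound `E` for the generated clone. -/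
theorem isMinimalClone_cloneGen_of_forall_mem {f : Ops A} {E : Set (Ops A)} (hE : IsClone E)
    (hfE : f ∈ E) (hf : f ∉ projClone A)
    (h : ∀ D, IsClone D → ∀ g ∈ D, g ∈ E → g ∉ projClone A → f ∈ D) :
    IsMinimalClone (cloneGen {f}) := by
  refine ⟨isClone_cloneGen _, fun he => hf (he ▸ mem_cloneGen_self f), fun D hD hDf => ?_⟩
  by_cases hp : D ⊆ projClone A
  · exact Or.inl (hp.antisymm (projClone_subset hD))
  · obtain ⟨g, hg, hgp⟩ := Set.not_subset.1 hp
    exact Or.inr (hDf.antisymm (cloneGen_singleton_subset hD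
      (h D hD g hg (cloneGen_singleton_subset hE hfE (hDf hg)) hgp)))

/-! ### Unary operations -/

/-- A unary function regarded as an operation. -/
def unaryOp (u : A → A) : Ops A := ⟨0, fun x => u (x 0)⟩

theorem unaryOp_mem_projClone {u : A → A} : unaryOp u ∈ projClone A ↔ u = id := by
  constructor
  · rintro ⟨i, hi⟩
    funext a
    exact congrFun hi fun _ => a
  · rintro rfl
    exact ⟨0, rfl⟩

theorem unaryOp_iterate_mem {C : Set (Ops A)} (hC : IsClone C) {u : A → A} (hu : unaryOp u ∈ C)
    (k : ℕ) : unaryOp u^[k] ∈ C := by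
  induction k with
  | zero => exact hC.1 0 0
  | succ k ih =>
    rw [Function.iterate_succ']
    exact hC.2 0 0 _ (fun _ => (unaryOp u^[k]).2) hu fun _ => ih

/-- The operations that depend on one variable through an iterate of `u`. -/
def iterateClone (u : A → A) : Set (Ops A) :=
  {f | ∃ (k : ℕ) (i : Fin (f.1 + 1)), f.2 = fun x => u^[k] (x i)}

theorem isClone_iterateClone (u : A → A) : IsClone (iterateClone u) := by
  refine ⟨fun n i => ⟨0, i, rfl⟩, ?_⟩
  rintro n m f g ⟨k, i, hf⟩ hg
  obtain ⟨l, j, hj⟩ := hg i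
  simp only at hf hj
  refine ⟨k + l, j, ?_⟩
  funext x
  simp [hf, hj, Function.iterate_add_apply]

theorem unaryOp_mem_iterateClone (u : A → A) : unaryOp u ∈ iterateClone u :=
  ⟨1, 0, rfl⟩

theorem isMinimalClone_unary {u : A → A} (hu : u ≠ id)
    (h : ∀ k, u^[k] ≠ id → ∃ m, (u^[k])^[m] = u) : IsMinimalClone (cloneGen {unaryOp u}) := by
  refine isMinimalClone_cloneGen_of_forall_mem (isClone_iterateClone u)
    (unaryOp_mem_iterateClone u) (fun hp => hu (unaryOp_mem_projClone.1 hp)) ?_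
  rintro D hD ⟨n, g⟩ hg ⟨k, i, hk⟩ hgp
  change Fin (n + 1) at i
  change g = fun x : Fin (n + 1) → A => u^[k] (x i) at hk
  subst hk
  have hk : u^[k] ≠ id := fun hk => hgp ⟨i, by simp [hk]⟩
  obtain ⟨m, hm⟩ := h k hk
  have : unaryOp u^[k] ∈ D := hD.2 n 0 _ (fun _ x => x 0) hg fun _ => hD.1 0 0
  exact hm ▸ unaryOp_iterate_mem hD this m

theorem IsTypeCheckedI.isMinimalClone [Nontrivial A] {u : A → A} (hu : IsTypeCheckedI u) :
    IsMinimalClone (cloneGen {unaryOp u}) := by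
  rcases hu with ⟨hidem, hrange⟩ | ⟨π, rfl, hp⟩
  · refine isMinimalClone_unary (fun h => hrange (by simp [h])) fun k hk => ⟨1, ?_⟩
    have hpow : ∀ k, u^[k + 1] = u := by
      intro k
      induction k with
      | zero => rfl
      | succ k ih => rw [Function.iterate_succ', ih, hidem]
    cases k with
    | zero => exact absurd rfl hk
    | succ k => exact hpow k
  · refine isMinimalClone_unary (fun h => hp.one_lt.ne' ?_) fun k hk => ?_
    · rw [orderOf_eq_one_iff]
      exact Equiv.coe_fn_injective h
    · have hk' : π ^ k ≠ 1 := fun h => hk (by rw [← Equiv.Perm.coe_pow, h]; rfl)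
      have hcop : (orderOf π).Coprime k :=
        (Nat.Prime.coprime_iff_not_dvd hp).2 fun h => hk' (orderOf_dvd_iff_pow_eq_one.1 h)
      obtain ⟨m, hm⟩ := exists_pow_eq_self_of_coprime hcop.symm
      exact ⟨m, by rw [← Equiv.Perm.coe_pow, ← Equiv.Perm.coe_pow, hm]⟩

theorem IsMinimalClone.exists_isTypeCheckedI {C : Set (Ops A)} (hC : IsMinimalClone C)
    {u : A → A} (hu : unaryOp u ∈ C) (hu' : u ≠ id) :
    ∃ v : A → A, IsTypeCheckedI v ∧ C = cloneGen {unaryOp v} := by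
  have hgen : ∀ k, u^[k] ≠ id → C = cloneGen {unaryOp u^[k]} := fun k hk =>
    hC.eq_cloneGen (unaryOp_iterate_mem hC.1 hu k) fun hp => hk (unaryOp_mem_projClone.1 hp)
  by_cases hfin : ∃ m, 0 < m ∧ u^[m] = id
  · obtain ⟨m, hm, hum⟩ := hfin
    obtain ⟨l, rfl⟩ := Nat.exists_eq_succ_of_ne_zero hm.ne'
    have h1 : u ∘ u^[l] = id := by rw [← Function.iterate_succ', hum]
    have h2 : u^[l] ∘ u = id := by rw [← Function.iterate_succ, hum]
    let π : Equiv.Perm A := ⟨u, u^[l], congrFun h2, congrFun h1⟩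
    have hπ : ∀ k, ⇑(π ^ k) = u^[k] := fun k => Equiv.Perm.coe_pow π k
    have hpow : π ^ (l + 1) = 1 := Equiv.coe_fn_injective ((hπ _).trans hum)
    have h0 : 0 < orderOf π := orderOf_pos_iff.2 (isOfFinOrder_iff_pow_eq_one.2 ⟨_, hm, hpow⟩)
    have hne : orderOf π ≠ 1 := fun h => hu' (congrArg DFunLike.coe (orderOf_eq_one_iff.1 h))
    obtain ⟨p, hp, q, hq⟩ := Nat.exists_prime_and_dvd hne
    have hq0 : q ≠ 0 := by rintro rfl; simp [hq] at h0
    have hord : orderOf (π ^ q) = p := by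
      rw [orderOf_pow_of_dvd hq0 (hq ▸ dvd_mul_left q p), hq,
        Nat.mul_div_cancel _ (Nat.pos_of_ne_zero hq0)]
    refine ⟨u^[q], Or.inr ⟨π ^ q, (hπ q).symm, hord ▸ hp⟩, hgen q fun h => hp.one_lt.ne' ?_⟩
    rw [← hord, orderOf_eq_one_iff]
    exact Equiv.coe_fn_injective ((hπ q).trans h)
  · push Not at hfin
    have hmem : unaryOp u ∈ iterateClone u^[2] := by
      refine cloneGen_singleton_subset (isClone_iterateClone _) (unaryOp_mem_iterateClone _) ?_
      rw [← hgen 2 (hfin 2 two_pos)]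
      exact hu
    obtain ⟨k, i, hk⟩ := hmem
    have hk : u = u^[2 * k] := by
      rw [Function.iterate_mul]
      funext a
      exact congrFun hk fun _ => a
    have hk0 : k ≠ 0 := by rintro rfl; exact hu' hk
    obtain ⟨l, rfl⟩ := Nat.exists_eq_succ_of_ne_zero hk0
    have hne := hfin (2 * l + 1) (Nat.succ_pos _)
    have hidem : u^[2 * l + 1] ∘ u^[2 * l + 1] = u^[2 * l + 1] := by
      rw [← Function.iterate_add, show 2 * l + 1 + (2 * l + 1) = 2 * l + 2 * (l + 1) by ring,
        Function.iterate_add, ← hk, ← Function.iterate_succ]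
    refine ⟨_, Or.inl ⟨hidem, fun hr => hne ?_⟩, hgen _ hne⟩
    funext a
    obtain ⟨b, rfl⟩ := Set.range_eq_univ.1 hr a
    exact congrFun hidem b

/-! ### Sums of three elements -/

section Sum

variable [AddCommGroup A]

/-- The operation `x₁ + x₂ + x₃`. -/
def tripleSum (A : Type u) [AddCommGroup A] : Ops A := ⟨2, fun x => x 0 + x 1 + x 2⟩

/-- Linear combinations with natural coefficients of odd sum. -/
def oddSumClone (A : Type u) [AddCommGroup A] : Set (Ops A) :=
  {f | ∃ c : Fin (f.1 + 1) → ℕ, Odd (∑ i, c i) ∧ f.2 = fun x => ∑ i, c i • x i}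

theorem isClone_oddSumClone : IsClone (oddSumClone A) := by
  refine ⟨fun n i => ⟨Pi.single i 1, ?_, ?_⟩, ?_⟩
  · simp
  · funext x
    simp [Pi.single_apply, ite_smul]
  · rintro n m f g ⟨c, hc, hf⟩ hg
    choose d hd hg using hg
    simp only at hf hg hc hd
    refine ⟨fun j => ∑ i, c i * d i j, ?_, ?_⟩
    · dsimp only
      rw [Finset.sum_comm]
      simp only [← Finset.mul_sum]
      rw [← ZMod.natCast_eq_one_iff_odd] at hc ⊢
      have hd' : ∀ i, ((∑ j, d i j : ℕ) : ZMod 2) = 1 := fun i =>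
        ZMod.natCast_eq_one_iff_odd.2 (hd i)
      rw [← hc]
      rw [Nat.cast_sum, Nat.cast_sum]
      exact Finset.sum_congr rfl fun i _ => by rw [Nat.cast_mul, hd' i, mul_one]
    · funext x
      simp only [hf, hg, Finset.smul_sum, Finset.sum_smul, mul_smul]
      rw [Finset.sum_comm]

theorem even_nsmul (h2 : ∀ a : A, a + a = 0) {n : ℕ} (hn : Even n) (a : A) : n • a = 0 := by
  obtain ⟨k, rfl⟩ := hn
  rw [add_nsmul, h2]

theorem odd_nsmul (h2 : ∀ a : A, a + a = 0) {n : ℕ} (hn : Odd n) (a : A) : n • a = a := by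
  obtain ⟨k, rfl⟩ := hn
  rw [add_nsmul, even_nsmul h2 (even_two_mul k), zero_add, one_nsmul]

theorem isMinimalClone_tripleSum [Nontrivial A] (h2 : ∀ a : A, a + a = 0) :
    IsMinimalClone (cloneGen {tripleSum A}) := by
  refine isMinimalClone_cloneGen_of_forall_mem isClone_oddSumClone ?_ ?_ ?_
  · refine ⟨fun _ => 1, ?_, ?_⟩
    · change Odd (∑ _ : Fin 3, 1)
      decide
    · funext x
      change _ = ∑ i : Fin 3, 1 • x i
      simp only [one_nsmul]
      exact (Fin.sum_univ_three x).symm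
  · rintro ⟨i, hi⟩
    obtain ⟨a, ha⟩ := exists_ne (0 : A)
    change (fun x : Fin 3 → A => x 0 + x 1 + x 2) = fun x => x (i : Fin 3) at hi
    have h1 := congrFun hi ![0, 0, a]
    have h2 := congrFun hi ![a, 0, 0]
    change Fin 3 at i
    fin_cases i <;> simp_all
  · rintro D hD ⟨n, g⟩ hg ⟨c, hc, hgc⟩ hgp
    change Fin (n + 1) → ℕ at c
    change g = fun x : Fin (n + 1) → A => ∑ i, c i • x i at hgc
    subst hgc
    obtain ⟨p, hp⟩ : ∃ p, Odd (c p) := by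
      by_contra! h
      simp only [Nat.not_odd_iff_even] at h
      exact (Nat.not_odd_iff_even.2 (Finset.even_sum _ fun i _ => h i)) hc
    obtain ⟨q, hqp, hq⟩ : ∃ q, q ≠ p ∧ Odd (c q) := by
      by_contra! h
      refine hgp ⟨p, ?_⟩
      funext x
      dsimp only
      rw [Finset.sum_eq_single p, odd_nsmul h2 hp]
      · exact fun q _ hqp => even_nsmul h2 (Nat.not_odd_iff_even.1 (h q hqp)) _
      · simp
    have hq' : q ∈ Finset.univ.erase p := by simp [hqp]
    have hrest : Odd (∑ i ∈ (Finset.univ.erase p).erase q, c i) := by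
      rw [← Finset.add_sum_erase _ _ (Finset.mem_univ p), ← Finset.add_sum_erase _ _ hq'] at hc
      rw [Nat.odd_iff] at *
      omega
    let σ : Fin (n + 1) → Fin 3 := fun i => if i = p then 0 else if i = q then 1 else 2
    have key := hD.2 n 2 _ (fun i x => x (σ i)) hg fun i => hD.1 2 (σ i)
    convert key using 1
    refine Sigma.ext rfl (heq_of_eq ?_)
    funext (x : Fin 3 → A)
    dsimp only [tripleSum]
    rw [← Finset.add_sum_erase _ _ (Finset.mem_univ p), ← Finset.add_sum_erase _ _ hq',
      odd_nsmul h2 hp, odd_nsmul h2 hq]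
    have hsum : ∑ i ∈ (Finset.univ.erase p).erase q, c i • x (σ i) = x 2 := by
      rw [← odd_nsmul h2 hrest (x 2), Finset.sum_smul]
      refine Finset.sum_congr rfl fun i hi => ?_
      simp only [Finset.mem_erase] at hi
      simp [σ, hi.1, hi.2.1]
    rw [hsum]
    simp [σ, hqp, add_assoc]

end Sum

/-! ### Identification of variables -/

theorem exists_pair_notMem {N : ℕ} (S : Finset (Fin N)) (h : S.card + 2 ≤ N) :
    ∃ p q, p ∉ S ∧ q ∉ S ∧ p ≠ q := by
  have : 1 < Sᶜ.card := by rw [Finset.card_compl, Fintype.card_fin]; omega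
  obtain ⟨p, hp, q, hq, hpq⟩ := Finset.one_lt_card.1 this
  exact ⟨p, q, Finset.mem_compl.1 hp, Finset.mem_compl.1 hq, hpq⟩

/-- If all operations of the preceding arity are projections, then identifying two variables
turns an operation into a projection. -/
theorem exists_eq_of_identify {C : Set (Ops A)} (hC : IsClone C) {n : ℕ}
    (hproj : ∀ g : (Fin (n + 1) → A) → A, (⟨n, g⟩ : Ops A) ∈ C → ∃ i, g = fun x => x i)
    {f : (Fin (n + 2) → A) → A} (hf : (⟨n + 1, f⟩ : Ops A) ∈ C) {i j : Fin (n + 2)} (hij : i ≠ j) :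
    ∃ k, ∀ x, x i = x j → f x = x k := by
  have hσ : ∀ t, ∃ s, j.succAbove s = if t = j then i else t := fun t =>
    Fin.exists_succAbove_eq (by split_ifs with h <;> assumption)
  choose σ hσ using hσ
  obtain ⟨k, hk⟩ := hproj _ (hC.2 (n + 1) n f (fun t x => x (σ t)) hf fun t => hC.1 n (σ t))
  refine ⟨j.succAbove k, fun x hx => ?_⟩
  refine Eq.trans ?_ (congrFun hk fun s => x (j.succAbove s))
  dsimp only
  congr 1
  funext t
  rw [hσ]
  split_ifs with h
  · rw [h, hx]
  · rfl

/-- Świerczkowski's lemma: an operation of arity at least four which becomes a projection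
whenever two variables are identified is a semiprojection. -/
theorem exists_semiprojection [Nontrivial A] {N : ℕ} (hN : 4 ≤ N) {f : (Fin N → A) → A}
    (h : ∀ i j, i ≠ j → ∃ k, ∀ x, x i = x j → f x = x k) :
    ∃ k, ∀ x, (∃ i j, i ≠ j ∧ x i = x j) → f x = x k := by
  classical
  obtain ⟨a, b, hab⟩ := exists_pair_ne A
  let χ : Finset (Fin N) → Fin N → A := fun S t => if t ∈ S then a else b
  have hχ : ∀ S t, χ S t = a ↔ t ∈ S := by
    intro S t
    by_cases ht : t ∈ S <;> simp [χ, ht, hab.symm]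
  have hχ' : ∀ S t, t ∉ S → χ S t = b := fun S t ht => by simp [χ, ht]
  by_cases hex : ∃ i j k, i ≠ j ∧ k ≠ i ∧ k ≠ j ∧ ∀ x, x i = x j → f x = x k
  · obtain ⟨i, j, k, -, hki, hkj, hk⟩ := hex
    have haway : ∀ p q, p ≠ q → k ≠ p → k ≠ q → ∀ x, x p = x q → f x = x k := by
      intro p q hpq hkp hkq
      obtain ⟨r, hr⟩ := h p q hpq
      have h1 := hk (χ {k}) (by simp [hχ', hki.symm, hkj.symm])
      have h2 := hr (χ {k}) (by simp [hχ', hkp.symm, hkq.symm])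
      rw [(hχ {k} k).2 (by simp)] at h1
      have h3 := (hχ {k} r).1 (h2.symm.trans h1)
      rw [Finset.mem_singleton] at h3
      exact h3 ▸ hr
    have hnear : ∀ l, k ≠ l → ∀ x, x k = x l → f x = x k := by
      intro l hkl x hx
      obtain ⟨r, hr⟩ := h k l hkl
      obtain ⟨p, q, hp, hq, hpq⟩ := exists_pair_notMem {k, l} (by rw [Finset.card_pair hkl]; omega)
      have hp' := hp
      have hq' := hq
      simp only [Finset.mem_insert, Finset.mem_singleton, not_or] at hp' hq'
      have h1 := haway p q hpq (Ne.symm hp'.1) (Ne.symm hq'.1) (χ {k, l})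
        (by rw [hχ' _ _ hp, hχ' _ _ hq])
      have h2 := hr (χ {k, l}) (by rw [(hχ _ k).2 (by simp), (hχ _ l).2 (by simp)])
      rw [(hχ {k, l} k).2 (by simp)] at h1
      have h3 := (hχ {k, l} r).1 (h2.symm.trans h1)
      rw [hr x hx]
      rcases Finset.mem_insert.1 h3 with rfl | h3
      · rfl
      · rw [Finset.mem_singleton.1 h3, hx]
    refine ⟨k, ?_⟩
    rintro x ⟨p, q, hpq, hx⟩
    by_cases hkp : k = p
    · subst hkp
      exact hnear q hpq x hx
    by_cases hkq : k = q
    · subst hkq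
      exact hnear p (Ne.symm hpq) x hx.symm
    exact haway p q hpq hkp hkq x hx
  · push Not at hex
    have hin : ∀ i j, i ≠ j → ∃ k, (k = i ∨ k = j) ∧ ∀ x, x i = x j → f x = x k := by
      intro i j hij
      obtain ⟨k, hk⟩ := h i j hij
      refine ⟨k, ?_, hk⟩
      by_contra! hc
      obtain ⟨x, hx, hx'⟩ := hex i j k hij hc.1 hc.2
      exact hx' (hk x hx)
    let e : Fin 4 → Fin N := Fin.castLE hN
    have he : Function.Injective e := Fin.castLE_injective hN
    have h01 : e 0 ≠ e 1 := he.ne (by decide)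
    have h23 : e 2 ≠ e 3 := he.ne (by decide)
    have h20 : e 2 ≠ e 0 := he.ne (by decide)
    have h21 : e 2 ≠ e 1 := he.ne (by decide)
    have h30 : e 3 ≠ e 0 := he.ne (by decide)
    have h31 : e 3 ≠ e 1 := he.ne (by decide)
    obtain ⟨k, hk, hk'⟩ := hin _ _ h01
    obtain ⟨l, hl, hl'⟩ := hin _ _ h23
    have hkm : k ∈ ({e 0, e 1} : Finset (Fin N)) := by simpa using hk
    have hlm : l ∉ ({e 0, e 1} : Finset (Fin N)) := by
      rcases hl with rfl | rfl <;> simp [h20, h21, h30, h31]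
    have h1 := hk' (χ {e 0, e 1}) (by rw [(hχ _ _).2 (by simp), (hχ _ _).2 (by simp)])
    have h2 := hl' (χ {e 0, e 1}) (by
      rw [hχ' _ _ (by simp [h20, h21]), hχ' _ _ (by simp [h30, h31])])
    rw [(hχ _ _).2 hkm] at h1
    rw [hχ' _ _ hlm] at h2
    exact absurd (h1.symm.trans h2) hab

/-! ### Semiprojections -/

/-- `C` is generated by a proper semiprojection onto the first variable. -/
def IsGenBySemiprojection (C : Set (Ops A)) : Prop :=
  ∃ (n : ℕ) (f : (Fin (n + 1) → A) → A), 3 ≤ n + 1 ∧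
    (¬ ∃ i : Fin (n + 1), f = fun x => x i) ∧
    (∀ x : Fin (n + 1) → A, (∃ i j, i ≠ j ∧ x i = x j) → f x = x 0) ∧
    C = cloneGen {(⟨n, f⟩ : Ops A)}

theorem IsMinimalClone.isGenBySemiprojection {C : Set (Ops A)} (hC : IsMinimalClone C) {n : ℕ}
    (hn : 2 ≤ n) {f : (Fin (n + 1) → A) → A} (hf : (⟨n, f⟩ : Ops A) ∈ C)
    (hfp : ¬ ∃ i, f = fun x => x i) {k : Fin (n + 1)}
    (hk : ∀ x, (∃ i j, i ≠ j ∧ x i = x j) → f x = x k) : IsGenBySemiprojection C := by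
  let τ := Equiv.swap 0 k
  let g : (Fin (n + 1) → A) → A := fun x => f fun t => x (τ t)
  have hg : (⟨n, g⟩ : Ops A) ∈ C := hC.1.2 n n f (fun t x => x (τ t)) hf fun t => hC.1.1 n (τ t)
  have hgp : ¬ ∃ i, g = fun x => x i := by
    rintro ⟨i, hi⟩
    refine hfp ⟨τ i, ?_⟩
    funext x
    refine Eq.trans ?_ (congrFun hi fun t => x (τ t))
    simp [g, τ]
  refine ⟨n, g, by omega, hgp, ?_, hC.eq_cloneGen hg hgp⟩
  rintro x ⟨i, j, hij, hx⟩
  dsimp only [g]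
  rw [hk _ ⟨τ i, τ j, τ.injective.ne hij, by simpa [τ] using hx⟩]
  simp [τ]

theorem IsMinimalClone.eq_of_semiprojection [Nontrivial A] {C : Set (Ops A)}
    (hC : IsMinimalClone C) (hS : ¬ IsGenBySemiprojection C) {n : ℕ} (hn : 2 ≤ n)
    {f : (Fin (n + 1) → A) → A} (hf : (⟨n, f⟩ : Ops A) ∈ C) {k : Fin (n + 1)}
    (hk : ∀ x, (∃ i j, i ≠ j ∧ x i = x j) → f x = x k) (x : Fin (n + 1) → A) : f x = x k := by
  by_cases hfp : ∃ i, f = fun x => x i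
  · obtain ⟨i, rfl⟩ := hfp
    obtain ⟨a, b, hab⟩ := exists_pair_ne A
    obtain ⟨p, q, hp, hq, hpq⟩ := exists_pair_notMem {i} (by rw [Finset.card_singleton]; omega)
    rw [Finset.mem_singleton] at hp hq
    have h := hk (fun t => if t = i then a else b) ⟨p, q, hpq, by simp [hp, hq]⟩
    by_cases hki : k = i
    · rw [hki]
    · simp [hki, hab] at h
  · exact absurd (hC.isGenBySemiprojection hn hf hfp hk) hS

theorem IsMinimalClone.eq_of_semiprojection_three [Nontrivial A] {C : Set (Ops A)}
    (hC : IsMinimalClone C) (hS : ¬ IsGenBySemiprojection C) {G : A → A → A → A}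
    (hG : (⟨2, fun x => G (x 0) (x 1) (x 2)⟩ : Ops A) ∈ C) (h01 : ∀ x y, G x x y = y)
    (h02 : ∀ x y, G x y x = x) (h12 : ∀ x y, G y x x = x) (x y z : A) : G x y z = z := by
  refine hC.eq_of_semiprojection hS le_rfl hG (k := 2) ?_ ![x, y, z]
  rintro x ⟨i, j, hij, hx⟩
  change Fin 3 at i j
  fin_cases i <;> fin_cases j <;> simp_all

theorem IsMinimalClone.eq_of_semiprojection_four [Nontrivial A] {C : Set (Ops A)}
    (hC : IsMinimalClone C) (hS : ¬ IsGenBySemiprojection C) {G : A → A → A → A → A}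
    (hG : (⟨3, fun x => G (x 0) (x 1) (x 2) (x 3)⟩ : Ops A) ∈ C)
    (h01 : ∀ x y z, G x x y z = z) (h02 : ∀ x y z, G x y x z = z) (h03 : ∀ x y z, G x y z x = x)
    (h12 : ∀ x y z, G x y y z = z) (h13 : ∀ x y z, G x y z y = y) (h23 : ∀ x y z, G x y z z = z)
    (x y z w : A) : G x y z w = w := by
  refine hC.eq_of_semiprojection hS (by norm_num) hG (k := 3) ?_ ![x, y, z, w]
  rintro x ⟨i, j, hij, hx⟩
  change Fin 4 at i j
  fin_cases i <;> fin_cases j <;> simp_all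

/-! ### Ternary operations -/

/-- A ternary function regarded as an operation. -/
def ternaryOp (F : A → A → A → A) : Ops A := ⟨2, fun x => F (x 0) (x 1) (x 2)⟩

theorem ternaryOp_comp_mem {C : Set (Ops A)} (hC : IsClone C) {F : A → A → A → A}
    (hF : ternaryOp F ∈ C) {m : ℕ} {g₀ g₁ g₂ : (Fin (m + 1) → A) → A} (h₀ : (⟨m, g₀⟩ : Ops A) ∈ C)
    (h₁ : (⟨m, g₁⟩ : Ops A) ∈ C) (h₂ : (⟨m, g₂⟩ : Ops A) ∈ C) :
    (⟨m, fun x => F (g₀ x) (g₁ x) (g₂ x)⟩ : Ops A) ∈ C := by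
  refine hC.2 2 m _ ![g₀, g₁, g₂] hF fun i => ?_
  change Fin 3 at i
  fin_cases i <;> assumption

/-- A minority operation. -/
def IsMinority (F : A → A → A → A) : Prop :=
  ∀ x y, F x x y = y ∧ F x y x = y ∧ F y x x = y

section Minority

variable [Nontrivial A] {C : Set (Ops A)} {F : A → A → A → A}

theorem IsMinority.apply_apply (hC : IsMinimalClone C) (hS : ¬ IsGenBySemiprojection C)
    (hF : ternaryOp F ∈ C) (hm : IsMinority F) (x y z : A) : F x y (F x y z) = z := by
  refine hC.eq_of_semiprojection_three hS (G := fun x y z => F x y (F x y z)) ?_ ?_ ?_ ?_ x y z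
  · have P := hC.1.1 2
    exact ternaryOp_comp_mem hC.1 hF (P 0) (P 1) (ternaryOp_comp_mem hC.1 hF (P 0) (P 1) (P 2))
  · intro x y; simp only [(hm _ _).1]
  · intro x y; simp only [(hm _ _).2.1, (hm _ _).2.2]
  · intro x y; simp only [(hm _ _).2.1, (hm _ _).2.2]

theorem IsMinority.swap_left (hC : IsMinimalClone C) (hS : ¬ IsGenBySemiprojection C)
    (hF : ternaryOp F ∈ C) (hm : IsMinority F) (x y z : A) : F y x z = F x y z := by
  have h : F x y (F y x z) = z := by
    refine hC.eq_of_semiprojection_three hS (G := fun x y z => F x y (F y x z)) ?_ ?_ ?_ ?_ x y z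
    · have P := hC.1.1 2
      exact ternaryOp_comp_mem hC.1 hF (P 0) (P 1) (ternaryOp_comp_mem hC.1 hF (P 1) (P 0) (P 2))
    · intro x y; simp only [(hm _ _).1]
    · intro x y; simp only [(hm _ _).2.2]
    · intro x y; simp only [(hm _ _).2.1]
  rw [← hm.apply_apply hC hS hF x y (F y x z), h]

theorem IsMinority.swap_right (hC : IsMinimalClone C) (hS : ¬ IsGenBySemiprojection C)
    (hF : ternaryOp F ∈ C) (hm : IsMinority F) (x y z : A) : F x z y = F x y z := by
  have P := hC.1.1 2
  exact IsMinority.swap_left (F := fun x y z => F z x y) hC hS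
    (ternaryOp_comp_mem hC.1 hF (P 2) (P 0) (P 1))
    (fun x y => ⟨(hm x y).2.2, (hm x y).1, (hm x y).2.1⟩) y z x

theorem IsMinority.cancel_middle (hC : IsMinimalClone C) (hS : ¬ IsGenBySemiprojection C)
    (hF : ternaryOp F ∈ C) (hm : IsMinority F) (x y z w : A) : F x y (F y z w) = F x z w := by
  have happ := hm.apply_apply hC hS hF
  have hsl := hm.swap_left hC hS hF
  have hsr := hm.swap_right hC hS hF
  have h3 : ∀ y z x, F x z (F x y (F y z x)) = x := by
    refine hC.eq_of_semiprojection_three hS (G := fun y z x => F x z (F x y (F y z x))) ?_ ?_ ?_ ?_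
    · have P := hC.1.1 2
      exact ternaryOp_comp_mem hC.1 hF (P 2) (P 1) (ternaryOp_comp_mem hC.1 hF (P 2) (P 0)
        (ternaryOp_comp_mem hC.1 hF (P 0) (P 1) (P 2)))
    · intro x y; simp only [(hm _ _).1, (hm _ _).2.1, (hm _ _).2.2]
    · intro x y; simp only [(hm _ _).1, (hm _ _).2.1, (hm _ _).2.2]
    · intro x y; simp only [(hm _ _).1, (hm _ _).2.2]
  have h : F x z (F x y (F y z w)) = w := by
    refine hC.eq_of_semiprojection_four hS (G := fun x y z w => F x z (F x y (F y z w)))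
      ?_ ?_ ?_ ?_ ?_ ?_ ?_ x y z w
    · have P := hC.1.1 3
      exact ternaryOp_comp_mem hC.1 hF (P 0) (P 2) (ternaryOp_comp_mem hC.1 hF (P 0) (P 1)
        (ternaryOp_comp_mem hC.1 hF (P 1) (P 2) (P 3)))
    · intro x y z; simp only [(hm _ _).1, happ]
    · intro x y z; simp only [(hm _ _).1, hsl x y, happ]
    · intro x y z; exact h3 y z x
    · intro x y z; simp only [(hm _ _).1, happ]
    · intro x y z; simp only [(hm _ _).2.1, hsr x z y, happ]
    · intro x y z; simp only [(hm _ _).2.1, (hm _ _).2.2]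
  rw [← happ x z (F x y (F y z w)), h]

theorem IsMinority.exists_addCommGroup (hC : IsMinimalClone C) (hS : ¬ IsGenBySemiprojection C)
    (hF : ternaryOp F ∈ C) (hm : IsMinority F) :
    ∃ _ : AddCommGroup A, (∀ a : A, a + a = 0) ∧ ∀ x y z : A, F x y z = x + y + z := by
  have hsl := hm.swap_left hC hS hF
  have hsr := hm.swap_right hC hS hF
  have hcm := hm.cancel_middle hC hS hF
  obtain ⟨o⟩ : Nonempty A := inferInstance
  have hcomm : ∀ x y, F x o y = F y o x := fun x y => by rw [hsl, hsr, hsl]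
  have hadd : ∀ x y z, F (F x o y) o z = F x y z := fun x y z => by
    rw [hcomm, ← hsl x o y, hcm, hsl, hsr]
  let _ : Zero A := ⟨o⟩
  let _ : Add A := ⟨fun x y => F x o y⟩
  let _ : Neg A := ⟨id⟩
  let G : AddCommGroup A :=
    { nsmul := nsmulRec
      zsmul := zsmulRec
      add_assoc := fun x y z => by
        change F (F x o y) o z = F x o (F y o z)
        rw [hadd, hcomm x, hadd, hsl, hsr y, hsl]
      zero_add := fun x => (hm o x).1
      add_zero := fun x => (hm o x).2.2
      add_comm := hcomm
      neg_add_cancel := fun x => (hm x o).2.1 }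
  exact ⟨G, fun a => (hm a o).2.1, fun x y z => (hadd x y z).symm⟩

end Minority

theorem ternaryOp_curry (f : (Fin 3 → A) → A) :
    ternaryOp (fun x y z => f ![x, y, z]) = ⟨2, f⟩ := by
  refine Sigma.ext rfl (heq_of_eq ?_)
  funext x
  change f ![x 0, x 1, x 2] = f x
  congr 1
  funext i
  fin_cases i <;> rfl

theorem exists_generator_of_majority [Nontrivial A] {C : Set (Ops A)} (hC : IsMinimalClone C)
    {F : A → A → A → A} (hF : ternaryOp F ∈ C) (h01 : ∀ x y, F x x y = x)
    (h02 : ∀ x y, F x y x = x) (h12 : ∀ x y, F y x x = x) :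
    ∃ f : (Fin 3 → A) → A, IsMajority f ∧ C = cloneGen {(⟨2, f⟩ : Ops A)} := by
  refine ⟨fun x => F (x 0) (x 1) (x 2), fun x y => ⟨h01 x y, h02 x y, h12 x y⟩,
    hC.eq_cloneGen hF ?_⟩
  rintro ⟨i, hi⟩
  obtain ⟨a, b, hab⟩ := exists_pair_ne A
  change (fun x : Fin 3 → A => F (x 0) (x 1) (x 2)) = fun x => x (i : Fin 3) at hi
  have h1 := congrFun hi ![a, a, b]
  have h2 := congrFun hi ![a, b, a]
  have h3 := congrFun hi ![b, a, a]
  change Fin 3 at i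
  fin_cases i <;> simp_all

theorem exists_generator_of_pixley [Nontrivial A] {C : Set (Ops A)} (hC : IsMinimalClone C)
    {F : A → A → A → A} (hF : ternaryOp F ∈ C) (h01 : ∀ x y, F x x y = y)
    (h02 : ∀ x y, F x y x = x) (h12 : ∀ x y, F y x x = y) :
    ∃ f : (Fin 3 → A) → A, IsMajority f ∧ C = cloneGen {(⟨2, f⟩ : Ops A)} := by
  have P := hC.1.1 2
  refine exists_generator_of_majority hC (F := fun x y z => F x (F x y z) z)
    (ternaryOp_comp_mem hC.1 hF (P 0) (ternaryOp_comp_mem hC.1 hF (P 0) (P 1) (P 2)) (P 2)) ?_ ?_ ?_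
    <;> intro x y <;> simp only [h01, h02, h12]

theorem IsMinimalClone.ternary_cases [Nontrivial A] {C : Set (Ops A)} (hC : IsMinimalClone C)
    (hS : ¬ IsGenBySemiprojection C) {f : (Fin 3 → A) → A} (hf : (⟨2, f⟩ : Ops A) ∈ C)
    (hfp : ¬ ∃ i, f = fun x => x i)
    (hid : ∀ i j, i ≠ j → ∃ k, ∀ x, x i = x j → f x = x k) :
    (∃ f : (Fin 3 → A) → A, IsMajority f ∧ C = cloneGen {(⟨2, f⟩ : Ops A)}) ∨
      ∃ _ : AddCommGroup A, (∀ a : A, a + a = 0) ∧ C = cloneGen {tripleSum A} := by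
  let F : A → A → A → A := fun x y z => f ![x, y, z]
  have hFf : ternaryOp F = ⟨2, f⟩ := ternaryOp_curry f
  have hF : ternaryOp F ∈ C := hFf ▸ hf
  have hFp : ternaryOp F ∉ projClone A := hFf ▸ hfp
  have P := hC.1.1 2
  have h01 : (∀ x y, F x x y = x) ∨ ∀ x y, F x x y = y := by
    obtain ⟨k, hk⟩ := hid 0 1 (by decide)
    have hk' : ∀ x y, F x x y = ![x, x, y] k := fun x y => hk _ rfl
    fin_cases k
    exacts [Or.inl hk', Or.inl hk', Or.inr hk']
  have h02 : (∀ x y, F x y x = x) ∨ ∀ x y, F x y x = y := by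
    obtain ⟨k, hk⟩ := hid 0 2 (by decide)
    have hk' : ∀ x y, F x y x = ![x, y, x] k := fun x y => hk _ rfl
    fin_cases k
    exacts [Or.inl hk', Or.inr hk', Or.inl hk']
  have h12 : (∀ x y, F y x x = x) ∨ ∀ x y, F y x x = y := by
    obtain ⟨k, hk⟩ := hid 1 2 (by decide)
    have hk' : ∀ x y, F y x x = ![y, x, x] k := fun x y => hk _ rfl
    fin_cases k
    exacts [Or.inr hk', Or.inl hk', Or.inl hk']
  have rot : ternaryOp (fun x y z => F z x y) ∈ C := ternaryOp_comp_mem hC.1 hF (P 2) (P 0) (P 1)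
  have rot' : ternaryOp (fun x y z => F y z x) ∈ C := ternaryOp_comp_mem hC.1 hF (P 1) (P 2) (P 0)
  rcases h01 with h01 | h01 <;> rcases h02 with h02 | h02 <;> rcases h12 with h12 | h12
  · exact Or.inl (exists_generator_of_majority hC hF h01 h02 h12)
  · have h := hC.eq_of_semiprojection_three hS (G := fun x y z => F z x y) rot
      (fun x y => h12 x y) (fun x y => h01 x y) (fun x y => h02 x y)
    exact absurd ⟨0, funext fun x => h (x 1) (x 2) (x 0)⟩ hFp
  · have h := hC.eq_of_semiprojection_three hS (G := fun x y z => F y z x) rot'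
      (fun x y => h02 x y) (fun x y => h12 x y) (fun x y => h01 x y)
    exact absurd ⟨1, funext fun x => h (x 2) (x 0) (x 1)⟩ hFp
  · exact Or.inl (exists_generator_of_pixley hC (F := fun x y z => F z x y) rot
      (fun x y => h12 x y) (fun x y => h01 x y) (fun x y => h02 x y))
  · have h := hC.eq_of_semiprojection_three hS (G := F) hF h01 h02 h12
    exact absurd ⟨2, funext fun x => h (x 0) (x 1) (x 2)⟩ hFp
  · exact Or.inl (exists_generator_of_pixley hC hF h01 h02 h12)
  · exact Or.inl (exists_generator_of_pixley hC (F := fun x y z => F y z x) rot'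
      (fun x y => h02 x y) (fun x y => h12 x y) (fun x y => h01 x y))
  · have hm : IsMinority F := fun x y => ⟨h01 x y, h02 x y, h12 x y⟩
    obtain ⟨G, h2, hG⟩ := hm.exists_addCommGroup hC hS hF
    have hsum : ternaryOp F = tripleSum A :=
      Sigma.ext rfl (heq_of_eq (funext fun x => hG (x 0) (x 1) (x 2)))
    exact Or.inr ⟨G, h2, hsum ▸ hC.eq_cloneGen hF hFp⟩

end Clones

/-- **Five-type classification of minimal clones.**  Let `A` be a set with `|A| ≥ 2`.
Every minimal clone on `A` is generated by an operation of one of the five types: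
(✓I) a unary operation `f` with `f = f ∘ f` and `f(A) ≠ A`, or a permutation of prime
order; (II) a binary idempotent operation that is not a projection; (III) a
semiprojection onto its first variable; (IV) a majority operation; (✓V) the operation
`x₁ + x₂ + x₃` of an elementary abelian 2-group structure on `A`.  Moreover, every
operation of type (✓I) and every operation of type (✓V) generates a minimal clone. -/
theorem minimal_clone_five_types {A : Type u} [Nontrivial A] :
    (∀ C : Set (Ops A), IsMinimalClone C →
      -- (✓I) unary
      ((∃ u : A → A, IsTypeCheckedI u ∧
          C = cloneGen {(⟨0, fun x : Fin 1 → A => u (x 0)⟩ : Ops A)}) ∨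
      -- (II) binary idempotent non-projection
      (∃ f : (Fin 2 → A) → A, (∀ a : A, f (fun _ => a) = a) ∧
          (¬ ∃ i : Fin 2, f = fun x => x i) ∧
          C = cloneGen {(⟨1, f⟩ : Ops A)}) ∨
      -- (III) semiprojection onto the first variable
      (∃ (n : ℕ) (f : (Fin (n + 1) → A) → A), 3 ≤ n + 1 ∧
          (¬ ∃ i : Fin (n + 1), f = fun x => x i) ∧
          (∀ x : Fin (n + 1) → A, (∃ i j, i ≠ j ∧ x i = x j) → f x = x 0) ∧
          C = cloneGen {(⟨n, f⟩ : Ops A)}) ∨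
      -- (IV) majority operation
      (∃ f : (Fin 3 → A) → A, IsMajority f ∧ C = cloneGen {(⟨2, f⟩ : Ops A)}) ∨
      -- (✓V) x₁ + x₂ + x₃ of an elementary abelian 2-group
      (∃ _ : AddCommGroup A, (∀ a : A, a + a = 0) ∧
          C = cloneGen {(⟨2, fun x : Fin 3 → A => x 0 + x 1 + x 2⟩ : Ops A)}))) ∧
    (∀ u : A → A, IsTypeCheckedI u →
        IsMinimalClone (cloneGen {(⟨0, fun x : Fin 1 → A => u (x 0)⟩ : Ops A)})) ∧
    (∀ _ : AddCommGroup A, (∀ a : A, a + a = 0) →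
        IsMinimalClone (cloneGen {(⟨2, fun x : Fin 3 → A => x 0 + x 1 + x 2⟩ : Ops A)})) := by
  classical
  refine ⟨fun C hC => ?_, fun u hu => hu.isMinimalClone, fun _ h2 => isMinimalClone_tripleSum h2⟩
  have hex : ∃ n, ∃ f : (Fin (n + 1) → A) → A,
      (⟨n, f⟩ : Ops A) ∈ C ∧ ¬ ∃ i, f = fun x => x i := by
    by_contra! h
    refine hC.2.1 (Set.Subset.antisymm ?_ (projClone_subset hC.1))
    rintro ⟨n, f⟩ hf
    exact h n f hf
  obtain ⟨f, hf, hfp⟩ := Nat.find_spec hex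
  have hmin : ∀ m < Nat.find hex, ∀ g : (Fin (m + 1) → A) → A, (⟨m, g⟩ : Ops A) ∈ C →
      ∃ i, g = fun x => x i := by
    intro m hm g hg
    by_contra hgp
    exact Nat.find_min hex hm ⟨g, hg, hgp⟩
  generalize Nat.find hex = n at f hf hfp hmin
  by_cases hS : IsGenBySemiprojection C
  · exact Or.inr (Or.inr (Or.inl hS))
  match n, f, hf, hfp, hmin with
  | 0, f, hf, hfp, _ =>
    refine Or.inl (hC.exists_isTypeCheckedI (u := fun a => f fun _ => a) ?_ fun h => hfp ⟨0, ?_⟩)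
    · exact hC.1.2 0 0 f (fun _ x => x 0) hf fun _ => hC.1.1 0 0
    · funext x
      rw [show x = fun _ => x 0 from funext fun i => congrArg x (Fin.fin_one_eq_zero i)]
      exact congrFun h (x 0)
  | 1, f, hf, hfp, hmin =>
    refine Or.inr (Or.inl ⟨f, fun a => ?_, hfp, hC.eq_cloneGen hf hfp⟩)
    obtain ⟨i, hi⟩ := hmin 0 one_pos _
      (hC.1.2 1 0 f (fun _ x => x 0) hf fun _ => hC.1.1 0 0)
    exact congrFun hi fun _ => a
  | 2, f, hf, hfp, hmin =>
    exact Or.inr (Or.inr (Or.inr (hC.ternary_cases hS hf hfp fun i j hij =>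
      exists_eq_of_identify hC.1 (hmin 1 one_lt_two) hf hij)))
  | n + 3, f, hf, hfp, hmin =>
    obtain ⟨k, hk⟩ := exists_semiprojection (by omega) fun i j hij =>
      exists_eq_of_identify hC.1 (hmin (n + 2) (by omega)) hf hij
    exact absurd (hC.isGenBySemiprojection (by omega) hf hfp hk) hS
end
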